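/- arXiv:2605.28449 — 5 statements merged into one kernel-verified Lean document; each statement's English description precedes it below -/
import Mathlib

section
/- Let u, v ≥ 0 and h ≥ 1 be real numbers. Then every real solution x of the equation x = u + v·(log x)^h satisfies x < max{ 2^h·(u^{1/h} + v^{1/h}·log(h^h·v))^h , 2^h·(u^{1/h} + 2e^2)^h }. -/
open Real

/-- The inequality `t ≤ 2 log t` has no positive solution. -/
theorem two_mul_log_lt_self {t : ℝ} (ht : 0 < t) : 2 * Real.log t < t := by
  have h1 := Real.log_le_sub_one_of_pos (x := t / 2) (by positivity)
  rw [Real.log_div ht.ne' two_ne_zero] at h1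
  linarith [Real.log_two_lt_d9]

/-- A solution of `z ≤ U + c log z` is less than `2 (U + c log c)`. -/
theorem lt_two_mul_of_le_add_mul_log {z U c : ℝ} (hz : 0 < z) (hc : 0 < c)
    (h : z ≤ U + c * Real.log z) : z < 2 * (U + c * Real.log c) := by
  have key := two_mul_log_lt_self (div_pos hz hc)
  rw [lt_div_iff₀ hc, Real.log_div hz.ne' hc.ne'] at key
  linarith

/-- Pethő's lemma: if `u, v ≥ 0`, `h ≥ 1` and `x` is a real solution of
`x = u + v (log x)^h`, then
`x < max { 2^h (u^{1/h} + v^{1/h} log(h^h v))^h , 2^h (u^{1/h} + 2 e²)^h }`. -/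
theorem petho_bound (u v h x : ℝ) (hu : 0 ≤ u) (hv : 0 ≤ v) (hh : 1 ≤ h)
    (hx : x = u + v * (Real.log x) ^ h) :
    x < max ((2 : ℝ) ^ h * (u ^ (1 / h) + v ^ (1 / h) * Real.log (h ^ h * v)) ^ h)
            ((2 : ℝ) ^ h * (u ^ (1 / h) + 2 * Real.exp 1 ^ 2) ^ h) := by
  have h0 : 0 < h := by linarith
  have hU : 0 ≤ u ^ (1 / h) := by positivity
  have he : 1 < Real.exp 1 ^ 2 := one_lt_pow₀ (Real.one_lt_exp_iff.2 one_pos) two_ne_zero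
  rcases le_or_gt x 1 with hx1 | hx1
  · refine lt_max_of_lt_right ?_
    rw [← Real.mul_rpow zero_le_two (by positivity)]
    exact hx1.trans_lt (Real.one_lt_rpow (by linarith) h0)
  have hx0 : 0 < x := by linarith
  have hroot {y : ℝ} (hy : x ^ (1 / h) < 2 * y) : x < 2 ^ h * y ^ h := by
    have hz : 0 < x ^ (1 / h) := by positivity
    rw [← Real.mul_rpow zero_le_two (by linarith)]
    calc x = (x ^ (1 / h)) ^ h := by
          rw [← Real.rpow_mul hx0.le, one_div_mul_cancel h0.ne', Real.rpow_one]
      _ < (2 * y) ^ h := Real.rpow_lt_rpow hz.le hy h0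
  rcases hv.eq_or_lt with rfl | hv0
  · refine lt_max_of_lt_right (hroot ?_)
    rw [zero_mul, add_zero] at hx
    rw [hx]
    linarith
  refine lt_max_of_lt_left (hroot ?_)
  have hL : 0 < Real.log x := Real.log_pos hx1
  have hlogc : h * Real.log (h * v ^ (1 / h)) = Real.log (h ^ h * v) := by
    rw [Real.log_mul h0.ne' (by positivity), Real.log_mul (by positivity) hv0.ne',
      Real.log_rpow hv0, Real.log_rpow h0]
    field_simp
  have hle : x ^ (1 / h) ≤ u ^ (1 / h) + h * v ^ (1 / h) * Real.log (x ^ (1 / h)) := by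
    calc x ^ (1 / h) = (u + v * Real.log x ^ h) ^ (1 / h) := by rw [← hx]
      _ ≤ u ^ (1 / h) + (v * Real.log x ^ h) ^ (1 / h) :=
          Real.rpow_add_le_add_rpow hu (by positivity) (by positivity)
            ((div_le_one h0).2 hh)
      _ = u ^ (1 / h) + h * v ^ (1 / h) * Real.log (x ^ (1 / h)) := by
          rw [Real.mul_rpow hv (by positivity), ← Real.rpow_mul hL.le,
            mul_one_div_cancel h0.ne', Real.rpow_one, Real.log_rpow hx0]
          field_simp
  have key := lt_two_mul_of_le_add_mul_log (by positivity) (by positivity) hle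
  rw [← hlogc]
  linarith
end

section
/- Let k be a positive integer, t an integer, and p an odd prime. Then there are exactly p − 1 integers n in {0, 1, …, p^k(p−1) − 1} such that p^k divides n·2^n − t. -/
/-- Powers of a unit modulo `N` depend only on the exponent modulo `φ N`. -/
theorem Nat.Coprime.pow_modEq_pow_of_modEq_totient {a N m n : ℕ} (ha : a.Coprime N)
    (h : m ≡ n [MOD N.totient]) : a ^ m ≡ a ^ n [MOD N] := by
  rw [← ZMod.natCast_eq_natCast_iff]
  push_cast
  refine pow_eq_pow_of_modEq h ?_
  have := (ZMod.natCast_eq_natCast_iff _ _ _).2 (Nat.ModEq.pow_totient ha)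
  simpa using this

/-- On a fixed residue class modulo `p - 1`, the residue of `n * a ^ n` modulo `p ^ k`
determines that of `n`. -/
theorem Nat.Prime.modEq_of_mul_pow_modEq {p a k m n : ℕ} (hp : p.Prime) (ha : a.Coprime p)
    (hmn : m ≡ n [MOD p - 1]) (h : m * a ^ m ≡ n * a ^ n [MOD p ^ k]) :
    m ≡ n [MOD p ^ k] := by
  induction k with
  | zero => simpa using Nat.modEq_one
  | succ j ih =>
    have hj : m ≡ n [MOD p ^ j] := ih (h.of_dvd (pow_dvd_pow p j.le_succ))
    have hcop : (p ^ j).Coprime (p - 1) :=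
      ((Nat.coprime_self_sub_right hp.one_le).2 (Nat.coprime_one_right p)).pow_left j
    have hmn' : m ≡ n [MOD (p ^ (j + 1)).totient] := by
      rw [Nat.totient_prime_pow_succ hp]
      exact (Nat.modEq_and_modEq_iff_modEq_mul hcop).1 ⟨hj, hmn⟩
    have ha' : a.Coprime (p ^ (j + 1)) := ha.pow_right _
    have hpow := ha'.pow_modEq_pow_of_modEq_totient hmn'
    exact Nat.ModEq.cancel_right_of_coprime (ha'.symm.pow_right n)
      ((hpow.mul_left m).symm.trans h)

/-- For a fixed integer `t`, a positive integer `k` and an odd prime `p`, there are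
exactly `p - 1` integers `n` in `{0, 1, …, p^k (p-1) - 1}` such that `p^k ∣ n·2^n - t`. -/
theorem count_n_two_pow_cong (k : ℕ) (hk : 0 < k) (t : ℤ) (p : ℕ)
    (hp : p.Prime) (hodd : p ≠ 2) :
    ((Finset.range (p ^ k * (p - 1))).filter
      (fun n : ℕ => (p : ℤ) ^ k ∣ (n : ℤ) * (2 : ℤ) ^ n - t)).card = p - 1 := by
  have : NeZero (p ^ k) := ⟨pow_ne_zero k hp.ne_zero⟩
  have hp1 : 0 < p - 1 := Nat.sub_pos_of_lt hp.one_lt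
  have h2 : Nat.Coprime 2 p := (Nat.coprime_primes Nat.prime_two hp).2 hodd.symm
  have hcop : (p ^ k).Coprime (p - 1) :=
    ((Nat.coprime_self_sub_right hp.one_le).2 (Nat.coprime_one_right p)).pow_left k
  have hdvd (n : ℕ) : (p : ℤ) ^ k ∣ (n : ℤ) * (2 : ℤ) ^ n - t ↔
      ((n * 2 ^ n : ℕ) : ZMod (p ^ k)) = t := by
    rw [← Int.cast_natCast (R := ZMod (p ^ k)), eq_comm, ZMod.intCast_eq_intCast_iff_dvd_sub]
    push_cast
    rfl
  let f : ℕ → ℕ × ZMod (p ^ k) := fun n => (n % (p - 1), ((n * 2 ^ n : ℕ) : ZMod (p ^ k)))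
  have hinj : Set.InjOn f (Finset.range (p ^ k * (p - 1))) := by
    intro m hm n hn hmn
    obtain ⟨h₁, h₂⟩ := Prod.mk.inj hmn
    have h₃ := hp.modEq_of_mul_pow_modEq h2 h₁ ((ZMod.natCast_eq_natCast_iff _ _ _).1 h₂)
    exact ((Nat.modEq_and_modEq_iff_modEq_mul hcop).1 ⟨h₃, h₁⟩).eq_of_lt_of_lt
      (Finset.mem_range.1 hm) (Finset.mem_range.1 hn)
  have himage : (Finset.range (p ^ k * (p - 1))).image f =
      Finset.range (p - 1) ×ˢ Finset.univ := by
    refine Finset.eq_of_subset_of_card_le ?_ ?_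
    · intro x hx
      obtain ⟨n, -, rfl⟩ := Finset.mem_image.1 hx
      simpa [f] using Nat.mod_lt n hp1
    · rw [Finset.card_image_of_injOn hinj]
      simp [ZMod.card, mul_comm]
  conv_rhs => rw [← Finset.card_range (p - 1)]
  refine Finset.card_bij (fun n _ => n % (p - 1)) ?_ ?_ ?_
  · intro n _
    exact Finset.mem_range.2 (Nat.mod_lt n hp1)
  · intro m hm n hn hmn
    rw [Finset.mem_filter, hdvd] at hm hn
    exact hinj hm.1 hn.1 (Prod.ext hmn (hm.2.trans hn.2.symm))
  · intro r hr
    have hmem : (r, (t : ZMod (p ^ k))) ∈ (Finset.range (p ^ k * (p - 1))).image f := by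
      rw [himage]
      exact Finset.mem_product.2 ⟨hr, Finset.mem_univ _⟩
    obtain ⟨n, hn, hf⟩ := Finset.mem_image.1 hmem
    obtain ⟨h₁, h₂⟩ := Prod.mk.inj hf
    exact ⟨n, Finset.mem_filter.2 ⟨hn, (hdvd n).2 h₂⟩, h₁⟩
end

section
/- With notation as in the context, the numerator of each of a, b, c has absolute value at most 4Y³ and the denominator of each of a, b, c is at most Y³. In particular, max{h(a), h(b), h(c)} ≤ log(4Y³), where for a rational number r = p/q in lowest terms with q > 0, h(r) = log max{|p|, q}. -/
/-- If `q = N / D` for integers `N` and `D ≠ 0`, then the reduced numerator and denominator of `q`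
are bounded by `|N|` and `|D|`. -/
theorem Rat.abs_num_le_and_den_le_of_mul_eq {q : ℚ} {N D : ℤ} (hD : D ≠ 0)
    (h : q * D = N) : |q.num| ≤ |N| ∧ (q.den : ℤ) ≤ |D| := by
  have hD' : (D : ℚ) ≠ 0 := by exact_mod_cast hD
  obtain rfl : q = (N : ℚ) / D := by rw [eq_div_iff hD', h]
  rw [← Rat.divInt_eq_div]
  refine ⟨?_, Int.le_of_dvd (abs_pos.mpr hD) ((dvd_abs _ _).mpr (Rat.den_dvd N D))⟩
  rcases eq_or_ne N 0 with rfl | hN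
  · simp
  · exact Int.le_of_dvd (abs_pos.mpr hN) ((abs_dvd_abs _ _).mpr (Rat.num_dvd N hD))

/-- The logarithmic height of a rational is bounded by the logarithm of a common bound for its
numerator and denominator. -/
theorem Rat.log_max_abs_num_den_le {q : ℚ} {M : ℤ} (hnum : |q.num| ≤ M) (hden : (q.den : ℤ) ≤ M) :
    Real.log (max |(q.num : ℝ)| (q.den : ℝ)) ≤ Real.log (M : ℝ) := by
  refine Real.log_le_log (lt_max_of_lt_right (by exact_mod_cast q.den_pos)) (max_le ?_ ?_)
  · exact_mod_cast hnum
  · exact_mod_cast hden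

/-- Lemma 3.1 of Luca–Noubissie: with `u_n = (a n + c) α^n + b β^n` a ternary recurrence
whose characteristic polynomial is `(X-α)²(X-β)` with `1 ∈ {α, β}` and `α/β ∉ {1, -1}`,
and `Y = max{|r₁|, |r₂|, |r₃|, |u₀|, |u₁|, |u₂|, 11}`, the numerators of `a, b, c` are at
most `4Y³` in absolute value, their denominators are at most `Y³`, and in particular
`max{h(a), h(b), h(c)} ≤ log (4Y³)`, where `h(p/q) = log max{|p|, q}`. -/
theorem numerator_denominator_height_bound
    (r₁ r₂ r₃ : ℤ) (hr₁ : r₁ ≠ 0) (hr₂ : r₂ ≠ 0) (hr₃ : r₃ ≠ 0)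
    (α β : ℤ)
    (hpoly : ∀ X : ℤ, X ^ 3 - r₁ * X ^ 2 - r₂ * X - r₃ = (X - α) ^ 2 * (X - β))
    (hone : α = 1 ∨ β = 1) (hαβ : α ≠ β) (hαβ' : α ≠ -β)
    (u : ℕ → ℤ)
    (hrec : ∀ n, 3 ≤ n → u n = r₁ * u (n - 1) + r₂ * u (n - 2) + r₃ * u (n - 3))
    (a b c : ℚ) (ha : a ≠ 0)
    (hu : ∀ n : ℕ, (u n : ℚ) = (a * n + c) * (α : ℚ) ^ n + b * (β : ℚ) ^ n)
    (Y : ℤ)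
    (hY : Y = max (max (max |r₁| |r₂|) (max |r₃| |u 0|)) (max (max |u 1| |u 2|) 11)) :
    (|a.num| ≤ 4 * Y ^ 3 ∧ |b.num| ≤ 4 * Y ^ 3 ∧ |c.num| ≤ 4 * Y ^ 3) ∧
    ((a.den : ℤ) ≤ Y ^ 3 ∧ (b.den : ℤ) ≤ Y ^ 3 ∧ (c.den : ℤ) ≤ Y ^ 3) ∧
    max (max (Real.log (max |(a.num : ℝ)| (a.den : ℝ)))
             (Real.log (max |(b.num : ℝ)| (b.den : ℝ))))
        (Real.log (max |(c.num : ℝ)| (c.den : ℝ)))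
      ≤ Real.log (4 * (Y : ℝ) ^ 3) := by
  have hY11 : 11 ≤ Y := by omega
  have hr₃Y : |r₃| ≤ Y := by omega
  have hu0 : |u 0| ≤ Y := by omega
  have hu1 : |u 1| ≤ Y := by omega
  have hu2 : |u 2| ≤ Y := by omega
  clear hY
  have hr₃_eq : r₃ = α ^ 2 * β := by linarith [hpoly 0]
  have hα0 : α ≠ 0 := by rintro rfl; simp [hr₃_eq] at hr₃
  have hsub : β - α ≠ 0 := sub_ne_zero.mpr hαβ.symm
  obtain ⟨hα, hβ, hmul, hadd⟩ : |α| ≤ Y ∧ |β| ≤ Y ∧ |α| * |β| ≤ Y ∧ |α| + |β| ≤ 1 + Y := by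
    rw [hr₃_eq, abs_mul, abs_pow] at hr₃Y
    have hα1 : 1 ≤ |α| := Int.one_le_abs hα0
    rcases hone with rfl | rfl
    · simp only [abs_one, one_pow, one_mul] at hr₃Y ⊢
      omega
    · simp only [abs_one, mul_one] at hr₃Y ⊢
      have : |α| ≤ Y := by nlinarith
      omega
  have e0 : (u 0 : ℚ) = c + b := by simpa using hu 0
  have e1 : (u 1 : ℚ) = (a + c) * α + b * β := by simpa using hu 1
  have e2 : (u 2 : ℚ) = (a * 2 + c) * α ^ 2 + b * β ^ 2 := by simpa using hu 2
  have key_a := Rat.abs_num_le_and_den_le_of_mul_eq (q := a)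
    (N := (β + α) * u 1 - α * β * u 0 - u 2) (mul_ne_zero hα0 hsub)
    (by push_cast; rw [e0, e1, e2]; ring)
  have key_b := Rat.abs_num_le_and_den_le_of_mul_eq (q := b)
    (N := u 2 - 2 * α * u 1 + α ^ 2 * u 0) (pow_ne_zero 2 hsub)
    (by push_cast; rw [e0, e1, e2]; ring)
  have key_c := Rat.abs_num_le_and_den_le_of_mul_eq (q := c)
    (N := (β ^ 2 - 2 * (α * β)) * u 0 + 2 * α * u 1 - u 2) (pow_ne_zero 2 hsub)
    (by push_cast; rw [e0, e1, e2]; ring)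
  have hY0 : 0 ≤ Y := by omega
  have hYsq : 11 * Y ≤ Y ^ 2 := by nlinarith
  have hYcube : 11 * Y ^ 2 ≤ Y ^ 3 := by nlinarith
  have hdiff : |β - α| ≤ 1 + Y := (abs_sub β α).trans (by omega)
  have hsum : |β + α| ≤ 1 + Y := (abs_add_le β α).trans (by omega)
  have hdena : |α * (β - α)| ≤ Y ^ 3 := by
    rw [abs_mul]
    calc |α| * |β - α| ≤ Y * (1 + Y) := by gcongr
      _ ≤ Y ^ 3 := by linarith
  have hdenbc : |(β - α) ^ 2| ≤ Y ^ 3 := by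
    rw [abs_pow]
    calc |β - α| ^ 2 ≤ (1 + Y) ^ 2 := by gcongr
      _ ≤ Y ^ 3 := by linarith
  have hnuma : |(β + α) * u 1 - α * β * u 0 - u 2| ≤ 4 * Y ^ 3 :=
    calc |(β + α) * u 1 - α * β * u 0 - u 2|
        ≤ |(β + α) * u 1| + |α * β * u 0| + |u 2| :=
          (abs_sub _ _).trans (by gcongr; exact abs_sub _ _)
      _ = |β + α| * |u 1| + |α| * |β| * |u 0| + |u 2| := by simp only [abs_mul]
      _ ≤ (1 + Y) * Y + Y * Y + Y := by gcongr
      _ ≤ 4 * Y ^ 3 := by linarith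
  have hnumb : |u 2 - 2 * α * u 1 + α ^ 2 * u 0| ≤ 4 * Y ^ 3 :=
    calc |u 2 - 2 * α * u 1 + α ^ 2 * u 0|
        ≤ |u 2| + |2 * α * u 1| + |α ^ 2 * u 0| :=
          (abs_add_le _ _).trans (by gcongr; exact abs_sub _ _)
      _ = |u 2| + 2 * |α| * |u 1| + |α| ^ 2 * |u 0| := by simp only [abs_mul, abs_pow, abs_two]
      _ ≤ Y + 2 * Y * Y + Y ^ 2 * Y := by gcongr
      _ ≤ 4 * Y ^ 3 := by linarith
  have hnumc : |(β ^ 2 - 2 * (α * β)) * u 0 + 2 * α * u 1 - u 2| ≤ 4 * Y ^ 3 :=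
    calc |(β ^ 2 - 2 * (α * β)) * u 0 + 2 * α * u 1 - u 2|
        ≤ |(β ^ 2 - 2 * (α * β)) * u 0| + |2 * α * u 1| + |u 2| :=
          (abs_sub _ _).trans (by gcongr; exact abs_add_le _ _)
      _ = |β ^ 2 - 2 * (α * β)| * |u 0| + 2 * |α| * |u 1| + |u 2| := by
          simp only [abs_mul, abs_two]
      _ ≤ (|β ^ 2| + |2 * (α * β)|) * |u 0| + 2 * |α| * |u 1| + |u 2| := by
          gcongr; exact abs_sub _ _
      _ = (|β| ^ 2 + 2 * (|α| * |β|)) * |u 0| + 2 * |α| * |u 1| + |u 2| := by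
          simp only [abs_mul, abs_pow, abs_two]
      _ ≤ (Y ^ 2 + 2 * Y) * Y + 2 * Y * Y + Y := by gcongr
      _ ≤ 4 * Y ^ 3 := by linarith
  have hna := key_a.1.trans hnuma
  have hnb := key_b.1.trans hnumb
  have hnc := key_c.1.trans hnumc
  have hda := key_a.2.trans hdena
  have hdb := key_b.2.trans hdenbc
  have hdc := key_c.2.trans hdenbc
  refine ⟨⟨hna, hnb, hnc⟩, ⟨hda, hdb, hdc⟩, ?_⟩
  have hM : Y ^ 3 ≤ 4 * Y ^ 3 := by linarith
  have hcast : 4 * (Y : ℝ) ^ 3 = ((4 * Y ^ 3 : ℤ) : ℝ) := by push_cast; rfl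
  rw [hcast]
  exact max_le (max_le (Rat.log_max_abs_num_den_le hna (hda.trans hM))
    (Rat.log_max_abs_num_den_le hnb (hdb.trans hM)))
    (Rat.log_max_abs_num_den_le hnc (hdc.trans hM))
end

section
/- With notation as in the context, if u_n = 0 for some index n ≥ 0, then n < 39·Y·log Y. -/
theorem pow_five_lt_two_pow {n : ℕ} (hn : 23 ≤ n) : n ^ 5 < 2 ^ n := by
  induction n, hn using Nat.le_induction with
  | base => norm_num
  | succ k hk ih =>
    have h : (k + 1) ^ 5 ≤ 2 * k ^ 5 := by
      obtain ⟨m, rfl⟩ := Nat.exists_eq_add_of_le hk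
      ring_nf
      gcongr ?_ + m * ?_ + m ^ 2 * ?_ + m ^ 3 * ?_ + m ^ 4 * ?_ + ?_ <;> lia
    calc (k + 1) ^ 5 ≤ 2 * k ^ 5 := h
      _ < 2 * 2 ^ k := by lia
      _ = 2 ^ (k + 1) := by ring

theorem pow_five_lt_abs_pow {x : ℤ} (hx : 2 ≤ |x|) {n : ℕ} (hn : 23 ≤ n) :
    (n : ℤ) ^ 5 < |x ^ n| := by
  rw [abs_pow]
  calc (n : ℤ) ^ 5 < 2 ^ n := by exact_mod_cast pow_five_lt_two_pow hn
    _ ≤ |x| ^ n := by gcongr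

/-- If `d * m = -v` with `d ≠ 0`, then `m` is at most `|v|`. -/
theorem le_abs_of_mul_eq_neg {d m v : ℤ} (hd : d ≠ 0) (h : d * m = -v) : m ≤ |v| := by
  rw [← abs_neg, ← h, abs_mul]
  nlinarith [Int.one_le_abs hd, le_abs_self m, abs_nonneg m]

/-- Zeros of `u₀, u₁, u₂, …` with `u n = a n + c + b β ^ n`. -/
theorem zero_index_lt_of_double_root_one {β u₀ u₁ u₂ Y : ℤ} {a b c : ℚ} {n : ℕ} (ha : a ≠ 0)
    (hβ : 2 ≤ |β|) (hβY : |β| ≤ Y) (hY : 11 ≤ Y)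
    (hu₀Y : |u₀| ≤ Y) (hu₁Y : |u₁| ≤ Y) (hu₂Y : |u₂| ≤ Y)
    (h₀ : (u₀ : ℚ) = c + b) (h₁ : (u₁ : ℚ) = a + c + b * β)
    (h₂ : (u₂ : ℚ) = 2 * a + c + b * β ^ 2) (hn : a * n + c + b * (β : ℚ) ^ n = 0) :
    (n : ℤ) < 39 * Y := by
  have hβ1 : β - 1 ≠ 0 := by
    intro h
    rw [sub_eq_zero.mp h] at hβ
    norm_num at hβ
  obtain ⟨B, hB⟩ : ∃ B, B = u₂ - 2 * u₁ + u₀ := ⟨_, rfl⟩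
  have hBb : (B : ℚ) = b * (β - 1) ^ 2 := by
    rw [hB]; push_cast; rw [h₀, h₁, h₂]; ring
  have key : ((u₁ - u₀) * (β - 1) ^ 2 - B * (β - 1)) * n + (u₀ * (β - 1) ^ 2 - B)
      = -(B * β ^ n) := by
    have : (((u₁ - u₀) * (β - 1) ^ 2 - B * (β - 1)) * n + (u₀ * (β - 1) ^ 2 - B) : ℚ)
        = -(B * β ^ n) := by
      rw [hBb, h₀, h₁]
      linear_combination ((β : ℚ) - 1) ^ 2 * hn
    exact_mod_cast this
  by_cases hB0 : B = 0
  · have hβ1' : (β : ℚ) - 1 ≠ 0 := by exact_mod_cast hβ1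
    have hb : b = 0 := by
      rw [hB0] at hBb
      simpa [hβ1'] using hBb.symm
    have hd : u₁ - u₀ ≠ 0 := by
      intro h
      have h' : (u₁ : ℚ) - u₀ = 0 := by exact_mod_cast h
      rw [h₀, h₁, hb] at h'
      exact ha (by linarith)
    have hmul : (u₁ - u₀) * (n : ℤ) = -u₀ := by
      apply mul_left_cancel₀ (pow_ne_zero 2 hβ1)
      rw [hB0] at key
      linear_combination key
    have := le_abs_of_mul_eq_neg hd hmul
    linarith
  · by_contra! hlt
    have hn23 : 23 ≤ n := by lia
    have hpow := pow_five_lt_abs_pow hβ hn23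
    have hB4 : |B| ≤ 4 * Y := by
      rw [abs_le] at *; constructor <;> linarith
    have he : |β - 1| ≤ 2 * Y := by
      rw [abs_le] at *; constructor <;> linarith
    have hd : |u₁ - u₀| ≤ 2 * Y := by
      rw [abs_le] at *; constructor <;> linarith
    have hY0 : 0 ≤ Y := by linarith
    have hle : |β ^ n| ≤ |B * β ^ n| := by
      rw [abs_mul]
      nlinarith [Int.one_le_abs hB0, abs_nonneg (β ^ n)]
    rw [← abs_neg (B * β ^ n), ← key] at hle
    have hA : |(u₁ - u₀) * (β - 1) ^ 2 - B * (β - 1)| ≤ 2 * Y * (2 * Y) ^ 2 + 4 * Y * (2 * Y) := by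
      refine (abs_sub _ _).trans ?_
      rw [abs_mul, abs_mul, abs_pow]
      gcongr
    have hC : |u₀ * (β - 1) ^ 2 - B| ≤ Y * (2 * Y) ^ 2 + 4 * Y := by
      refine (abs_sub _ _).trans ?_
      rw [abs_mul, abs_pow]
      gcongr
    have hsum : |((u₁ - u₀) * (β - 1) ^ 2 - B * (β - 1)) * n + (u₀ * (β - 1) ^ 2 - B)|
        ≤ (2 * Y * (2 * Y) ^ 2 + 4 * Y * (2 * Y)) * n + (Y * (2 * Y) ^ 2 + 4 * Y) := by
      refine (abs_add_le _ _).trans ?_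
      rw [abs_mul, Nat.abs_cast]
      gcongr
    have hY2 : Y ≤ Y ^ 2 := by nlinarith
    have hY3 : Y ^ 2 ≤ Y ^ 3 := by nlinarith
    have hn1 : (1 : ℤ) ≤ n := by lia
    have hYn : (39 * Y) ^ 3 ≤ (n : ℤ) ^ 3 := by gcongr
    have hY3n : Y ^ 3 ≤ Y ^ 3 * n := le_mul_of_one_le_right (by positivity) hn1
    have hY2n : Y ^ 2 * n ≤ Y ^ 3 * n := by gcongr
    have hbound : 24 * (Y ^ 3 * n) ≤ (n : ℤ) ^ 3 * n := by
      rw [← mul_assoc]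
      gcongr
      nlinarith [pow_nonneg hY0 3]
    have hn4 : (n : ℤ) ^ 4 ≤ n ^ 5 := pow_le_pow_right₀ hn1 (by norm_num)
    linarith

/-- Zeros of `u₀, u₁, u₂, …` with `u n = (a n + c) α ^ n + b`. -/
theorem zero_index_lt_of_simple_root_one {α u₀ u₁ u₂ Y : ℤ} {a b c : ℚ} {n : ℕ} (ha : a ≠ 0)
    (hα : 2 ≤ |α|) (hαY : |α| ≤ Y) (hα2Y : |α ^ 2| ≤ Y) (hY : 11 ≤ Y)
    (hu₀Y : |u₀| ≤ Y) (hu₁Y : |u₁| ≤ Y) (hu₂Y : |u₂| ≤ Y)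
    (h₀ : (u₀ : ℚ) = c + b) (h₁ : (u₁ : ℚ) = (a + c) * α + b)
    (h₂ : (u₂ : ℚ) = (2 * a + c) * α ^ 2 + b) (hn : (a * n + c) * (α : ℚ) ^ n + b = 0) :
    (n : ℤ) < 39 * Y := by
  have hα1 : 1 - α ≠ 0 := by
    intro h
    rw [← sub_eq_zero.mp h] at hα
    norm_num at hα
  have hα0 : α ≠ 0 := by
    rintro rfl
    norm_num at hα
  obtain ⟨B, hB⟩ : ∃ B, B = u₂ - 2 * α * u₁ + α ^ 2 * u₀ := ⟨_, rfl⟩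
  have hBb : (B : ℚ) = b * (1 - α) ^ 2 := by
    rw [hB]; push_cast; rw [h₀, h₁, h₂]; ring
  have key : (((u₁ - u₀ * α) * (1 - α) ^ 2 - B * (1 - α)) * n + (u₀ * (1 - α) ^ 2 - B) * α) * α ^ n
      = -(B * α) := by
    have : ((((u₁ - u₀ * α) * (1 - α) ^ 2 - B * (1 - α)) * n
        + (u₀ * (1 - α) ^ 2 - B) * α) * α ^ n : ℚ) = -(B * α) := by
      rw [hBb, h₀, h₁]
      linear_combination (1 - (α : ℚ)) ^ 2 * α * hn
    exact_mod_cast this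
  by_cases hB0 : B = 0
  · have hα1' : 1 - (α : ℚ) ≠ 0 := by exact_mod_cast hα1
    have hα0' : (α : ℚ) ≠ 0 := by exact_mod_cast hα0
    have hb : b = 0 := by
      rw [hB0] at hBb
      simpa [hα1'] using hBb.symm
    have hd : u₁ - u₀ * α ≠ 0 := by
      intro h
      have h' : (u₁ : ℚ) - u₀ * α = 0 := by exact_mod_cast h
      rw [h₀, h₁, hb] at h'
      have : a * α = 0 := by linear_combination h'
      simp [ha, hα0'] at this
    have hmul : (u₁ - u₀ * α) * ((n : ℤ) - 1) = -u₁ := by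
      apply mul_left_cancel₀ (pow_ne_zero 2 hα1)
      apply mul_right_cancel₀ (pow_ne_zero n hα0)
      rw [hB0] at key
      linear_combination key
    have := le_abs_of_mul_eq_neg hd hmul
    linarith
  · by_contra! hlt
    have hn23 : 23 ≤ n := by lia
    have hpow := pow_five_lt_abs_pow hα hn23
    have hY0 : 0 ≤ Y := by linarith
    have hle : |α ^ n| ≤ |B * α| := by
      have hne : ((u₁ - u₀ * α) * (1 - α) ^ 2 - B * (1 - α)) * n + (u₀ * (1 - α) ^ 2 - B) * α ≠ 0 := by
        intro h
        rw [h, zero_mul, zero_eq_neg] at key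
        exact mul_ne_zero hB0 hα0 key
      rw [← abs_neg (B * α), ← key, abs_mul]
      exact le_mul_of_one_le_left (abs_nonneg _) (Int.one_le_abs hne)
    have hBY : |B| ≤ Y + 2 * Y * Y + Y * Y := by
      rw [hB]
      refine (abs_add_le _ _).trans (add_le_add ((abs_sub _ _).trans ?_) ?_)
      · rw [abs_mul, abs_mul, abs_two]
        gcongr
      · rw [abs_mul]
        gcongr
    have hBα : |B * α| ≤ (Y + 2 * Y * Y + Y * Y) * Y := by
      rw [abs_mul]
      gcongr
    have hn1 : (1 : ℤ) ≤ n := by lia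
    have hYn : (39 * Y) ^ 3 ≤ (n : ℤ) ^ 3 := by gcongr
    have hY3 : Y ^ 2 ≤ Y ^ 3 := by nlinarith [sq_nonneg Y]
    have hn5 : (n : ℤ) ^ 3 ≤ n ^ 5 := pow_le_pow_right₀ hn1 (by norm_num)
    nlinarith [pow_nonneg hY0 3]

/-- Lemma 3.2 of Luca–Noubissie: with `u_n = (a n + c) α^n + b β^n` a ternary recurrence
whose characteristic polynomial is `(X-α)²(X-β)` with `1 ∈ {α, β}` and `α/β ∉ {1, -1}`,
and `Y = max{|r₁|, |r₂|, |r₃|, |u₀|, |u₁|, |u₂|, 11}`: if `u_n = 0`, then `n < 39 Y log Y`. -/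
theorem zero_index_bound
    (r₁ r₂ r₃ : ℤ) (hr₁ : r₁ ≠ 0) (hr₂ : r₂ ≠ 0) (hr₃ : r₃ ≠ 0)
    (α β : ℤ)
    (hpoly : ∀ X : ℤ, X ^ 3 - r₁ * X ^ 2 - r₂ * X - r₃ = (X - α) ^ 2 * (X - β))
    (hone : α = 1 ∨ β = 1) (hαβ : α ≠ β) (hαβ' : α ≠ -β)
    (u : ℕ → ℤ)
    (hrec : ∀ n, 3 ≤ n → u n = r₁ * u (n - 1) + r₂ * u (n - 2) + r₃ * u (n - 3))
    (a b c : ℚ) (ha : a ≠ 0)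
    (hu : ∀ n : ℕ, (u n : ℚ) = (a * n + c) * (α : ℚ) ^ n + b * (β : ℚ) ^ n)
    (Y : ℤ)
    (hY : Y = max (max (max |r₁| |r₂|) (max |r₃| |u 0|)) (max (max |u 1| |u 2|) 11))
    (n : ℕ) (hn : u n = 0) :
    (n : ℝ) < 39 * (Y : ℝ) * Real.log (Y : ℝ) := by
  have hY11 : 11 ≤ Y := by rw [hY]; simp
  have hr₃Y : |r₃| ≤ Y := by rw [hY]; simp
  have hu₀Y : |u 0| ≤ Y := by rw [hY]; simp
  have hu₁Y : |u 1| ≤ Y := by rw [hY]; simp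
  have hu₂Y : |u 2| ≤ Y := by rw [hY]; simp
  have hr₃eq : r₃ = α ^ 2 * β := by linear_combination -hpoly 0
  have h₀ := hu 0
  have h₁ := hu 1
  have h₂ := hu 2
  have hun := hu n
  rw [hn] at hun
  have hlt : (n : ℤ) < 39 * Y := by
    rcases hone with rfl | rfl
    · rw [one_pow, one_mul] at hr₃eq
      subst hr₃eq
      refine zero_index_lt_of_double_root_one (β := r₃) (a := a) (b := b) (c := c) ha ?_ hr₃Y hY11
        hu₀Y hu₁Y hu₂Y ?_ ?_ ?_ ?_
      · rw [le_abs]; lia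
      · rw [h₀]; simp
      · rw [h₁]; simp
      · rw [h₂]; push_cast; ring
      · simpa using hun.symm
    · rw [mul_one] at hr₃eq
      subst hr₃eq
      have hα0 : α ≠ 0 := by
        rintro rfl
        simp at hr₃
      refine zero_index_lt_of_simple_root_one (α := α) (a := a) (b := b) (c := c) ha ?_ ?_ hr₃Y hY11
        hu₀Y hu₁Y hu₂Y ?_ ?_ ?_ ?_
      · rw [le_abs]; lia
      · refine le_trans ?_ hr₃Y
        rw [abs_pow]
        exact le_self_pow₀ (Int.one_le_abs hα0) two_ne_zero
      · rw [h₀]; simp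
      · rw [h₁]; simp
      · rw [h₂]; push_cast; ring
      · simpa using hun.symm
  have hltR : (n : ℝ) < 39 * Y := by exact_mod_cast hlt
  have hYR : (11 : ℝ) ≤ Y := by exact_mod_cast hY11
  have hlog : 1 ≤ Real.log Y := by
    rw [Real.le_log_iff_exp_le (by linarith)]
    linarith [Real.exp_one_lt_d9]
  exact hltR.trans_le (le_mul_of_one_le_right (by linarith) hlog)
end

section
/- With notation as in the context, let c₂ = 2.02·10¹²·(log Y)². Suppose n > Y⁸ and let t be an integer with t ≠ u_n; moreover assume t ≠ b if β = 1, and t ≠ a·n + c if α = 1. Then for every prime p: if t = 0 then ν_p(u_n − t) < c₂·p·(log n)², and if t ≠ 0 then ν_p(u_n − t) < c₂·p·(log n)²·log⁺ t, where log⁺ t = max{1, log |t|}. -/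
open Polynomial Finset

theorem coeff_prod_sum_natDegree_le {R ι : Type*} [CommRing R] (s : Finset ι) (f : ι → R[X])
    (d : ι → ℕ) (h : ∀ i ∈ s, (f i).natDegree ≤ d i) :
    (∏ i ∈ s, f i).coeff (∑ i ∈ s, d i) = ∏ i ∈ s, (f i).coeff (d i) := by
  classical
  induction s using Finset.induction_on with
  | empty => simp
  | insert a s ha ih =>
    rw [prod_insert ha, sum_insert ha, prod_insert ha, ← ih fun i hi => h i (mem_insert_of_mem hi)]
    refine coeff_mul_add_eq_of_natDegree_le (h a (mem_insert_self a s)) ?_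
    exact (natDegree_prod_le _ _).trans (sum_le_sum fun i hi => h i (mem_insert_of_mem hi))

theorem natDegree_det_le_sum {R ι : Type*} [CommRing R] [Fintype ι] [DecidableEq ι]
    (M : Matrix ι ι R[X]) (d : ι → ℕ) (h : ∀ i k, (M i k).natDegree ≤ d k) :
    M.det.natDegree ≤ ∑ k, d k := by
  rw [Matrix.det_apply]
  refine natDegree_sum_le_of_forall_le _ _ fun σ _ => ?_
  refine (natDegree_smul_le _ _).trans ((natDegree_prod_le _ _).trans ?_)
  exact sum_le_sum fun k _ => h _ _

theorem coeff_det_sum {R ι : Type*} [CommRing R] [Fintype ι] [DecidableEq ι]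
    (M : Matrix ι ι R[X]) (d : ι → ℕ) (h : ∀ i k, (M i k).natDegree ≤ d k) :
    M.det.coeff (∑ k, d k) = (Matrix.of fun i k => (M i k).coeff (d k)).det := by
  rw [Matrix.det_apply, Matrix.det_apply, finsetSum_coeff]
  refine sum_congr rfl fun σ _ => ?_
  rw [coeff_smul, coeff_prod_sum_natDegree_le _ _ _ fun k _ => h _ _]
  rfl

theorem pow_card_dvd_det {R ι : Type*} [CommRing R] [Fintype ι] [DecidableEq ι]
    (A : Matrix ι ι R) (S : Finset ι) (f : R) (h : ∀ i, ∀ k ∈ S, f ∣ A i k) :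
    f ^ #S ∣ A.det := by
  choose! g hg using h
  have : A = Matrix.of fun i k => (if k ∈ S then f else 1) *
      (Matrix.of fun i k => if k ∈ S then g i k else A i k) i k := by
    ext i k
    by_cases hk : k ∈ S
    · simp [hk, hg i k hk]
    · simp [hk]
  rw [this, Matrix.det_mul_row]
  refine Dvd.dvd.mul_right ?_ _
  simp

theorem X_sub_C_pow_dvd_of_hasseDeriv_eval {p : ℚ[X]} {t : ℚ} {m : ℕ}
    (h : ∀ i < m, (hasseDeriv i p).eval t = 0) : (X - C t) ^ m ∣ p := by
  rw [X_sub_C_pow_dvd_iff, X_pow_dvd_iff]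
  intro i hi
  have := h i hi
  rw [← taylor_coeff] at this
  simpa [taylor_apply] using this

theorem sum_natDegree_lt_of_prod_dvd {ι : Type*} (s : Finset ι) (t : ι → ℚ) (ht : Set.InjOn t s)
    (m : ℕ) (D : ℚ[X]) (hD : D ≠ 0) (h : ∀ i ∈ s, (X - C (t i)) ^ m ∣ D) :
    #s * m ≤ D.natDegree := by
  have h1 : ∏ i ∈ s, (X - C (t i)) ^ m ∣ D := by
    refine Finset.prod_dvd_of_coprime ?_ h
    intro i hi j hj hij
    refine IsCoprime.pow ?_
    exact isCoprime_X_sub_C_of_isUnit_sub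
      (sub_ne_zero.2 fun e => hij (ht hi hj e)).isUnit
  have := natDegree_le_of_dvd h1 hD
  rw [natDegree_prod_of_monic _ _ fun i _ => (monic_X_sub_C _).pow m] at this
  simpa [natDegree_pow] using this

theorem sum_mul_eval_eq_zero_of_moments {ι : Type*} [Fintype ι] (w v : ι → ℚ) (M : ℕ)
    (h : ∀ m < M, ∑ i, w i * v i ^ m = 0) (Q : ℚ[X]) (hQ : Q.natDegree < M) :
    ∑ i, w i * Q.eval (v i) = 0 := by
  simp_rw [eval_eq_sum_range, mul_sum]
  rw [sum_comm]
  refine sum_eq_zero fun m hm => ?_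
  have := h m (by have := mem_range.1 hm; omega)
  calc _ = Q.coeff m * ∑ i, w i * v i ^ m := by
        rw [mul_sum]; exact sum_congr rfl fun i _ => by ring
    _ = 0 := by rw [this, mul_zero]

/-- The binomial polynomial `X (X - 1) ⋯ (X - r + 1) / r!`. -/
noncomputable def binomPoly (r : ℕ) : ℚ[X] := C ((r.factorial : ℚ)⁻¹) * descPochhammer ℚ r

theorem binomPoly_eval_natCast (r n : ℕ) : (binomPoly r).eval (n : ℚ) = n.choose r := by
  rw [binomPoly, eval_C_mul, descPochhammer_eval_eq_descFactorial,
    Nat.descFactorial_eq_factorial_mul_choose]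
  have : (r.factorial : ℚ) ≠ 0 := by exact_mod_cast r.factorial_ne_zero
  push_cast
  field_simp

theorem natDegree_binomPoly (r : ℕ) : (binomPoly r).natDegree = r := by
  rw [binomPoly, natDegree_C_mul (inv_ne_zero (by exact_mod_cast r.factorial_ne_zero)),
    descPochhammer_natDegree]

theorem isEmpty_of_exponential_moments {ι : Type*} [Fintype ι] [DecidableEq ι] (J M R : ℕ)
    (P : ι → ℚ[X]) (hP : ∀ k, P k ≠ 0) (hPJ : ∀ k, (P k).natDegree < J) (s : ι → ℕ)
    (hs : Function.Injective fun k => (P k).natDegree + s k) (γ : ι → ℚ) (hγ : ∀ k, γ k ≠ 0)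
    (θ : ℚ) (hθ : 1 < |θ|)
    (h : ∀ m < M, ∀ r < R, ∑ kj : ι × Fin J, ((P kj.1).coeff kj.2 * γ kj.1 ^ r *
      (θ ^ r) ^ (kj.2 : ℕ)) * (((kj.2 : ℕ) + s kj.1 : ℕ) : ℚ) ^ m = 0)
    (hM : Fintype.card ι ≤ M) (hR : Fintype.card ι * J ≤ R * (M - Fintype.card ι)) :
    IsEmpty ι := by
  by_contra hne
  rw [not_isEmpty_iff] at hne
  obtain ⟨k₀⟩ := hne
  set κ := Fintype.card ι with hκ
  have hκ0 : 0 < κ := Fintype.card_pos_iff.2 ⟨k₀⟩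
  let e : ι ≃ Fin κ := Fintype.equivFin ι
  let A : Matrix ι ι ℚ[X] := Matrix.of fun i k =>
    ∑ j : Fin J, monomial (j : ℕ) ((P k).coeff j * (((j : ℕ) + s k : ℕ) : ℚ) ^ (e i : ℕ))
  have hcoeff : ∀ i k l, (A i k).coeff l = (P k).coeff l * ((l + s k : ℕ) : ℚ) ^ (e i : ℕ) := by
    intro i k l
    simp only [A, Matrix.of_apply, finsetSum_coeff, coeff_monomial]
    by_cases hl : l < J
    · rw [Finset.sum_eq_single (⟨l, hl⟩ : Fin J)]
      · simp
      · intro b _ hb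
        rw [if_neg]
        exact fun h => hb (Fin.ext h)
      · simp
    · rw [coeff_eq_zero_of_natDegree_lt ((hPJ k).trans_le (not_lt.1 hl)), zero_mul]
      refine sum_eq_zero fun b _ => if_neg ?_
      have := b.2
      omega
  have hdeg : ∀ i k, (A i k).natDegree ≤ (P k).natDegree := by
    intro i k
    refine natDegree_le_iff_coeff_eq_zero.2 fun l hl => ?_
    rw [hcoeff, coeff_eq_zero_of_natDegree_lt hl, zero_mul]
  have hdet : A.det ≠ 0 := by
    intro h0
    have h1 := coeff_det_sum A _ hdeg
    rw [h0, coeff_zero] at h1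
    have h2 : (Matrix.of fun i k => (A i k).coeff (P k).natDegree) =
        Matrix.of fun i k => (P k).leadingCoeff *
          ((Matrix.vandermonde fun x : Fin κ => (((P (e.symm x)).natDegree + s (e.symm x) : ℕ) : ℚ)).transpose.submatrix e e) i k := by
      ext i k
      simp [hcoeff, Matrix.vandermonde]
    rw [h2, Matrix.det_mul_row, Matrix.det_submatrix_equiv_self, Matrix.det_transpose] at h1
    refine mul_ne_zero ?_ ?_ h1.symm
    · exact prod_ne_zero_iff.2 fun k _ => leadingCoeff_ne_zero.2 (hP k)
    · rw [Matrix.det_vandermonde_ne_zero_iff]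
      intro x y hxy
      exact e.symm.injective (hs (Nat.cast_injective (R := ℚ) hxy))
  have hθ0 : θ ≠ 0 := by
    rintro rfl
    simp at hθ
    linarith
  have hdvd : ∀ r ∈ range R, (X - C (θ ^ r)) ^ (M - κ + 1) ∣ A.det := by
    intro r hr
    set t := θ ^ r with ht
    have ht0 : t ≠ 0 := pow_ne_zero _ hθ0
    let w : ι → ℚ[X] := fun k => monomial (s k) (γ k ^ r * (t ^ s k)⁻¹)
    have hcol : ∀ i, (X - C t) ^ (M - κ + 1) ∣ ∑ k, w k * A i k := by
      intro i
      refine X_sub_C_pow_dvd_of_hasseDeriv_eval fun b hb => ?_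
      have hei := (e i).2
      have hmom := sum_mul_eval_eq_zero_of_moments _ _ M
        (fun m hm => h m hm r (mem_range.1 hr)) (X ^ (e i : ℕ) * binomPoly b) (by
          refine natDegree_mul_le.trans_lt ?_
          rw [natDegree_X_pow, natDegree_binomPoly]
          omega)
      have : (hasseDeriv b (∑ k, w k * A i k)).eval t = (t ^ b)⁻¹ * 
          ∑ kj : ι × Fin J, ((P kj.1).coeff kj.2 * γ kj.1 ^ r *
            t ^ (kj.2 : ℕ)) * (X ^ (e i : ℕ) * binomPoly b).eval (((kj.2 : ℕ) + s kj.1 : ℕ) : ℚ) := by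
        simp only [w, A, Matrix.of_apply, mul_sum, monomial_mul_monomial, map_sum,
          hasseDeriv_monomial, eval_finsetSum, eval_monomial, eval_mul, eval_pow, eval_X,
          binomPoly_eval_natCast]
        rw [Fintype.sum_prod_type]
        refine sum_congr rfl fun k _ => sum_congr rfl fun j _ => ?_
        rw [add_comm (s k)]
        by_cases hbj : b ≤ (j : ℕ) + s k
        · have h3 : t ^ ((j : ℕ) + s k - b) = t ^ (j : ℕ) * t ^ s k * (t ^ b)⁻¹ := by
            rw [← pow_add, eq_mul_inv_iff_mul_eq₀ (pow_ne_zero _ ht0), ← pow_add,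
              Nat.sub_add_cancel hbj]
          rw [h3]
          field_simp
        · rw [Nat.choose_eq_zero_of_lt (by omega)]
          simp
      rw [this, hmom, mul_zero]
    have h4 := pow_card_dvd_det (A.updateCol k₀ fun i => ∑ k, w k • A i k) {k₀}
      ((X - C t) ^ (M - κ + 1)) (by
        intro i k hk
        rw [mem_singleton] at hk
        subst hk
        simpa using hcol i)
    rw [Matrix.det_updateCol_sum, card_singleton, pow_one, smul_eq_mul] at h4
    refine IsCoprime.dvd_of_dvd_mul_left ?_ h4
    simp only [w]
    rw [← C_mul_X_pow_eq_monomial]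
    refine IsCoprime.mul_right ?_ ?_
    · exact isCoprime_one_right.of_isCoprime_of_dvd_right ((isUnit_C.2 (mul_ne_zero
        (pow_ne_zero _ (hγ _)) (inv_ne_zero (pow_ne_zero _ ht0))).isUnit).dvd)
    · refine IsCoprime.pow ?_
      have := isCoprime_X_sub_C_of_isUnit_sub (a := t) (b := 0) (by simpa using ht0.isUnit)
      simpa using this
  have hfin := sum_natDegree_lt_of_prod_dvd (range R) (fun r => θ ^ r) ?_ _ _ hdet hdvd
  · have h5 := (natDegree_det_le_sum A _ hdeg).trans
      (sum_le_sum fun k _ => Nat.le_sub_one_of_lt (hPJ k))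
    rw [sum_const, card_univ, smul_eq_mul, ← hκ] at h5
    rw [card_range] at hfin
    have hJ : 0 < J := (Nat.zero_le _).trans_lt (hPJ k₀)
    have h6 : κ * (J - 1) < κ * J := Nat.mul_lt_mul_of_pos_left (by omega) hκ0
    have h7 : R * (M - κ) ≤ R * (M - κ + 1) := Nat.mul_le_mul_left _ (by omega)
    omega
  · intro r _ r' _ hrr
    have : |θ| ^ r = |θ| ^ r' := by simpa [abs_pow] using congrArg abs hrr
    exact pow_right_injective₀ (by linarith) hθ.ne' this

theorem eq_zero_of_exponential_moments (J K M R : ℕ) (s : Fin K → ℕ)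
    (hs : Function.Injective fun y : Fin J × Fin K => (y.1 : ℕ) + s y.2)
    (γ : Fin K → ℚ) (hγ : ∀ k, γ k ≠ 0) (θ : ℚ) (hθ : 1 < |θ|) (c : Fin J × Fin K → ℚ)
    (h : ∀ m < M, ∀ r < R, ∑ y : Fin J × Fin K, c y * (((y.1 : ℕ) + s y.2 : ℕ) : ℚ) ^ m *
      (θ ^ (y.1 : ℕ) * γ y.2) ^ r = 0)
    (hM : K ≤ M) (hR : K * J ≤ R * (M - K)) : c = 0 := by
  classical
  let P₀ : Fin K → ℚ[X] := fun k => ∑ j : Fin J, monomial (j : ℕ) (c (j, k))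
  have hc : ∀ k (j : Fin J), (P₀ k).coeff j = c (j, k) := by
    intro k j
    simp only [P₀, finsetSum_coeff, coeff_monomial]
    rw [Finset.sum_eq_single j]
    · simp
    · intro b _ hb
      exact if_neg fun h => hb (Fin.ext h)
    · simp
  let ι := {k : Fin K // P₀ k ≠ 0}
  have hdeg : ∀ k : ι, (P₀ k).natDegree < J := by
    intro k
    by_contra hJ
    apply k.2
    rw [← leadingCoeff_eq_zero, leadingCoeff, finsetSum_coeff]
    refine sum_eq_zero fun b _ => ?_
    rw [coeff_monomial, if_neg]
    have := b.2
    omega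
  have hcard : Fintype.card ι ≤ K := by
    exact (Fintype.card_subtype_le _).trans_eq (Fintype.card_fin K)
  have hempty : IsEmpty ι := by
    refine isEmpty_of_exponential_moments J M R (fun k : ι => P₀ k) (fun k => k.2) hdeg
      (fun k => s k) ?_ (fun k => γ k) (fun k => hγ k) θ hθ ?_ (hcard.trans hM) ?_
    · intro k l hkl
      have := @hs (⟨_, hdeg k⟩, k.1) (⟨_, hdeg l⟩, l.1) hkl
      exact Subtype.ext (Prod.ext_iff.1 this).2
    · intro m hm r hr
      rw [← h m hm r hr, Fintype.sum_prod_type, Fintype.sum_prod_type_right]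
      refine Finset.sum_of_injOn Subtype.val Subtype.val_injective.injOn (by simp) ?_ ?_
      · intro k _ hk
        have hk : P₀ k = 0 := by
          by_contra hk'
          exact hk ⟨⟨k, hk'⟩, by simp⟩
        refine sum_eq_zero fun j _ => ?_
        rw [← hc k j, hk]
        simp
      · intro k _
        refine sum_congr rfl fun j _ => ?_
        rw [hc]
        ring
    · calc Fintype.card ι * J ≤ K * J := Nat.mul_le_mul_right _ hcard
        _ ≤ R * (M - K) := hR
        _ ≤ _ := Nat.mul_le_mul_left _ (by omega)
  funext ⟨j, k⟩
  have : P₀ k = 0 := by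
    by_contra hk
    exact hempty.false ⟨k, hk⟩
  rw [← hc k j, this]
  simp

theorem exists_rows_det_ne_zero {m ι : Type*} [Fintype m] [Fintype ι] [DecidableEq ι]
    (B : Matrix m ι ℚ) (h : ∀ c : ι → ℚ, B.mulVec c = 0 → c = 0) :
    ∃ f : ι → m, (B.submatrix f id).det ≠ 0 := by
  have hinj : Function.Injective B.mulVecLin := by
    rw [injective_iff_map_eq_zero]
    exact fun c hc => h c (by simpa using hc)
  have hrank : Module.finrank ℚ (Submodule.span ℚ (Set.range B.row)) = Fintype.card ι := by
    rw [← Matrix.rank_eq_finrank_span_row, Matrix.rank, LinearMap.finrank_range_of_inj hinj]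
    simp
  obtain ⟨g, hg, -, hli⟩ := Submodule.exists_fun_fin_finrank_span_eq ℚ (Set.range B.row)
  choose f hf using hg
  let e : ι ≃ Fin (Module.finrank ℚ (Submodule.span ℚ (Set.range B.row))) :=
    Fintype.equivFinOfCardEq hrank.symm
  refine ⟨fun i => f (e i), ?_⟩
  rw [← isUnit_iff_ne_zero, ← Matrix.isUnit_iff_isUnit_det,
    ← Matrix.linearIndependent_rows_iff_isUnit]
  have := hli.comp e e.injective
  have hrow : (B.submatrix (fun i => f (e i)) id).row = g ∘ e := funext fun i => hf (e i)
  rw [hrow]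
  exact this

theorem hasseDeriv_eval_taylor (m : ℕ) (r z : ℚ) (p : ℚ[X]) :
    (hasseDeriv m (taylor r p)).eval z = (hasseDeriv m p).eval (z + r) := by
  rw [← taylor_coeff, taylor_taylor, taylor_coeff, add_comm]

theorem eq_zero_of_exponential_polynomial_vanishing (J K L M₁ M₂ M₃ R S : ℕ) (s : Fin K → ℕ)
    (hs : Function.Injective fun y : Fin J × Fin K => (y.1 : ℕ) + s y.2)
    (γ : Fin K → ℚ) (hγ : ∀ k, γ k ≠ 0) (θ : ℚ) (hθ : 1 < |θ|)
    (F : Fin J × Fin K → ℚ[X]) (hF : ∀ y, (F y).natDegree < L)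
    (h : ∀ z < S, ∀ a < M₃, ∀ m < M₁ + M₂, ∑ y : Fin J × Fin K,
      (hasseDeriv a (F y)).eval (z : ℚ) * (((y.1 : ℕ) + s y.2 : ℕ) : ℚ) ^ m *
        (θ ^ (y.1 : ℕ) * γ y.2) ^ z = 0)
    (hM : K ≤ M₁) (hR : K * J ≤ R * (M₁ - K)) (hS : L ≤ (S - R) * M₃)
    (hS' : J * K * L ≤ (S - R) * M₂ * M₃) : F = 0 := by
  classical
  by_contra hF0
  obtain ⟨y₀, hy₀⟩ : ∃ y, F y ≠ 0 := by
    by_contra! hall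
    exact hF0 (funext hall)
  have hθ0 : θ ≠ 0 := by
    rintro rfl
    simp at hθ
    linarith
  let v : Fin J × Fin K → ℕ := fun y => (y.1 : ℕ) + s y.2
  let ω : Fin J × Fin K → ℚ := fun y => θ ^ (y.1 : ℕ) * γ y.2
  have hω : ∀ y, ω y ≠ 0 := fun y => mul_ne_zero (pow_ne_zero _ hθ0) (hγ _)
  let ι := {y // F y ≠ 0}
  let B : Matrix (Fin R × Fin M₁) ι ℚ :=
    Matrix.of fun i y => (v y : ℚ) ^ (i.2 : ℕ) * ω y ^ (i.1 : ℕ)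
  obtain ⟨f, hf⟩ := exists_rows_det_ne_zero B (by
    intro c hc
    have := eq_zero_of_exponential_moments J K M₁ R s hs γ hγ θ hθ
      (fun y => if hy : F y ≠ 0 then c ⟨y, hy⟩ else 0) (by
        intro m hm r hr
        have h1 := congrFun hc (⟨r, hr⟩, ⟨m, hm⟩)
        rw [Matrix.mulVec, dotProduct] at h1
        rw [Pi.zero_apply] at h1
        refine Eq.trans (Eq.symm ?_) h1
        refine Finset.sum_of_injOn Subtype.val Subtype.val_injective.injOn (by simp) ?_ ?_
        · intro y _ hy
          have hy : ¬ F y ≠ 0 := fun hy' => hy ⟨⟨y, hy'⟩, by simp⟩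
          simp only [dif_neg hy, zero_mul]
        · intro y _
          rw [dif_pos y.2]
          simp only [B, Matrix.of_apply, v, ω]
          ring) hM hR
    funext y
    have h2 := congrFun this y.1
    rw [Pi.zero_apply, dif_pos y.2] at h2
    exact h2)
  let A : Matrix ι ι ℚ[X] := Matrix.of fun i y =>
    C (B (f i) y) * taylor (((f i).1 : ℕ) : ℚ) (F y)
  have hdeg : ∀ i y, (A i y).natDegree ≤ (F y.1).natDegree := by
    intro i y
    exact (natDegree_C_mul_le _ _).trans (natDegree_taylor _ _).le
  have hdet : A.det ≠ 0 := by
    intro h0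
    have h1 := coeff_det_sum A _ hdeg
    rw [h0, coeff_zero] at h1
    have h2 : (Matrix.of fun i y => (A i y).coeff (F y.1).natDegree) =
        Matrix.of fun i y => (F y.1).leadingCoeff * (B.submatrix f id) i y := by
      ext i y
      simp only [A, Matrix.of_apply, coeff_C_mul, Matrix.submatrix_apply, id]
      rw [← natDegree_taylor (F y.1) (((f i).1 : ℕ) : ℚ), coeff_natDegree, leadingCoeff_taylor]
      ring
    rw [h2, Matrix.det_mul_row] at h1
    exact mul_ne_zero (prod_ne_zero_iff.2 fun y _ => leadingCoeff_ne_zero.2 y.2) hf h1.symm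
  let N := Fintype.card ι
  have hN0 : 0 < N := Fintype.card_pos_iff.2 ⟨⟨y₀, hy₀⟩⟩
  let e : ι ≃ Fin N := Fintype.equivFin ι
  have hdvd : ∀ z ∈ range (S - R), (X - C (z : ℚ)) ^ (M₃ * min M₂ N) ∣ A.det := by
    intro z hz
    rw [mem_range] at hz
    let Q : Matrix ι ι ℚ := Matrix.of fun y x => ω y ^ z *
      (((Matrix.vandermonde fun x : Fin N => (v (e.symm x) : ℚ)).submatrix e e) y x)
    have hQ : IsUnit Q.det := by
      rw [isUnit_iff_ne_zero]
      simp only [Q]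
      rw [Matrix.det_mul_column, Matrix.det_submatrix_equiv_self]
      refine mul_ne_zero (prod_ne_zero_iff.2 fun y _ => pow_ne_zero _ (hω _)) ?_
      rw [Matrix.det_vandermonde_ne_zero_iff]
      intro x y hxy
      exact e.symm.injective (Subtype.ext (hs (Nat.cast_injective (R := ℚ) hxy)))
    have h1 := pow_card_dvd_det (A * Q.map C) (univ.filter fun x => (e x : ℕ) < M₂)
      ((X - C (z : ℚ)) ^ M₃) (by
        intro i x hx
        rw [mem_filter] at hx
        refine X_sub_C_pow_dvd_of_hasseDeriv_eval fun a ha => ?_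
        have hr := (f i).1.2
        have hm := (f i).2.2
        rw [← h (z + (f i).1) (by omega) a ha ((f i).2 + e x) (by omega), Matrix.mul_apply,
          map_sum, eval_finsetSum]
        refine Finset.sum_of_injOn Subtype.val Subtype.val_injective.injOn (by simp) ?_ ?_
        · intro y _ hy
          have hy : F y = 0 := by
            by_contra hy'
            exact hy ⟨⟨y, hy'⟩, by simp⟩
          simp [hy]
        · intro y _
          simp only [A, Q, B, Matrix.of_apply, Matrix.map_apply]
          rw [show ∀ (b c : ℚ) (q : ℚ[X]), C b * q * C c = (b * c) • q from fun b c q => by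
            rw [smul_eq_C_mul, C_mul]; ring]
          rw [LinearMap.map_smul, eval_smul, hasseDeriv_eval_taylor]
          simp only [Matrix.submatrix_apply, Matrix.vandermonde_apply, Equiv.symm_apply_apply,
            smul_eq_mul, v, ω]
          push_cast
          ring)
    rw [Matrix.det_mul, ← pow_mul] at h1
    have h3 : (Q.map C).det = C Q.det := (RingHom.map_det C Q).symm
    rw [h3, (isUnit_C.2 hQ).dvd_mul_right] at h1
    have h4 : #(univ.filter fun x => (e x : ℕ) < M₂) = min M₂ N := by
      rw [← Finset.card_map e.toEmbedding]
      have : (univ.filter fun x => (e x : ℕ) < M₂).map e.toEmbedding =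
          univ.filter fun x : Fin N => (x : ℕ) < M₂ := by
        ext x
        simp only [mem_map_equiv, mem_filter, mem_univ, true_and, Equiv.apply_symm_apply]
      rw [this, Fin.card_filter_val_lt, min_comm]
    rwa [h4] at h1
  have hfin := sum_natDegree_lt_of_prod_dvd (range (S - R)) (fun z => (z : ℚ))
    Nat.cast_injective.injOn _ _ hdet hdvd
  have h5 := (natDegree_det_le_sum A _ hdeg).trans
    (sum_le_sum fun y _ => Nat.le_sub_one_of_lt (hF y.1))
  rw [sum_const, card_univ, smul_eq_mul] at h5
  rw [card_range] at hfin
  have hL : 0 < L := (Nat.zero_le _).trans_lt (hF y₀)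
  have h6 : N * (L - 1) < N * L := Nat.mul_lt_mul_of_pos_left (by omega) hN0
  have h7 : (S - R) * (M₃ * min M₂ N) < N * L := (hfin.trans h5).trans_lt h6
  rcases le_total M₂ N with hMN | hMN
  · rw [min_eq_left hMN] at h7
    have hNJ : N ≤ J * K := by
      exact (Fintype.card_subtype_le _).trans_eq (by simp [Fintype.card_prod])
    have := Nat.mul_le_mul_right L hNJ
    nlinarith
  · rw [min_eq_right hMN] at h7
    nlinarith [Nat.mul_le_mul_right N hS]

theorem taylor_one_binomPoly_succ (r : ℕ) :
    taylor 1 (binomPoly (r + 1)) = binomPoly (r + 1) + binomPoly r := by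
  refine eq_of_infinite_eval_eq _ _ (Set.Infinite.mono (s := Set.range fun n : ℕ => (n : ℚ)) ?_
    (Set.infinite_range_of_injective Nat.cast_injective))
  rintro _ ⟨n, rfl⟩
  simp only [Set.mem_setOf_eq, taylor_eval, eval_add, binomPoly_eval_natCast]
  rw [show (n : ℚ) + 1 = ((n + 1 : ℕ) : ℚ) by push_cast; rfl, binomPoly_eval_natCast,
    Nat.choose_succ_succ]
  push_cast
  ring

theorem binomPoly_zero : binomPoly 0 = 1 := by simp [binomPoly]

theorem taylor_succ_binomPoly_succ (z r : ℕ) :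
    taylor ((z + 1 : ℕ) : ℚ) (binomPoly (r + 1)) =
      taylor (z : ℚ) (binomPoly (r + 1)) + taylor (z : ℚ) (binomPoly r) := by
  rw [Nat.cast_succ, ← taylor_taylor, taylor_one_binomPoly_succ, map_add]

theorem binomPoly_succ_eq_prod (r : ℕ) : binomPoly (r + 1) =
    C (((r + 1 : ℕ) : ℚ)⁻¹) * X * ∏ i ∈ range r, (C (((i + 1 : ℕ) : ℚ)⁻¹) * X - 1) := by
  induction r with
  | zero => simp [binomPoly]
  | succ r ih =>
    have h : binomPoly (r + 1 + 1) =
        C (((r + 2 : ℕ) : ℚ)⁻¹) * (X - ((r + 1 : ℕ) : ℚ[X])) * binomPoly (r + 1) := by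
      rw [binomPoly, binomPoly, descPochhammer_succ_right, Nat.factorial_succ (r + 1), Nat.cast_mul,
        mul_inv, C_mul]
      ring
    have h2 : (C (((r + 1 : ℕ) : ℚ)⁻¹) * X - 1 : ℚ[X]) =
        C (((r + 1 : ℕ) : ℚ)⁻¹) * (X - ((r + 1 : ℕ) : ℚ[X])) := by
      rw [mul_sub, ← C_eq_natCast, ← C_mul, inv_mul_cancel₀ (by positivity), C_1]
    rw [h, ih, prod_range_succ, h2]
    ring

/-- `f(d X)` has integer coefficients. -/
def DilationIntegral (d : ℕ) (f : ℚ[X]) : Prop :=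
  f.comp (C (d : ℚ) * X) ∈ lifts (Int.castRingHom ℚ)

theorem DilationIntegral.mul {d : ℕ} {f g : ℚ[X]} (hf : DilationIntegral d f)
    (hg : DilationIntegral d g) : DilationIntegral d (f * g) := by
  unfold DilationIntegral at *
  rw [mul_comp]
  exact Subsemiring.mul_mem _ hf hg

theorem DilationIntegral.add {d : ℕ} {f g : ℚ[X]} (hf : DilationIntegral d f)
    (hg : DilationIntegral d g) : DilationIntegral d (f + g) := by
  unfold DilationIntegral at *
  rw [add_comp]
  exact Subsemiring.add_mem _ hf hg

theorem DilationIntegral.one (d : ℕ) : DilationIntegral d 1 := by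
  unfold DilationIntegral
  rw [one_comp]
  exact Subsemiring.one_mem _

theorem DilationIntegral.neg_one (d : ℕ) : DilationIntegral d (-1) := by
  unfold DilationIntegral
  rw [neg_comp, one_comp]
  exact ⟨-1, by simp⟩

theorem DilationIntegral.pow {d : ℕ} {f : ℚ[X]} (hf : DilationIntegral d f) (n : ℕ) :
    DilationIntegral d (f ^ n) := by
  induction n with
  | zero => simpa using DilationIntegral.one d
  | succ n ih => rw [pow_succ]; exact ih.mul hf

theorem DilationIntegral.inv_mul_X {d r : ℕ} (h : r ∣ d) :
    DilationIntegral d (C ((r : ℚ)⁻¹) * X) := by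
  obtain ⟨k, rfl⟩ := h
  unfold DilationIntegral
  rcases Nat.eq_zero_or_pos r with rfl | hr
  · simpa using Subsemiring.zero_mem _
  refine ⟨C (k : ℤ) * X, ?_⟩
  have : (r : ℚ) ≠ 0 := by positivity
  simp only [coe_mapRingHom, Polynomial.map_mul, map_C, map_X, mul_comp, C_comp, X_comp]
  rw [← mul_assoc, ← C_mul]
  congr 2
  push_cast
  field_simp
  simp

theorem DilationIntegral.exists_int {d : ℕ} {f : ℚ[X]} (hf : DilationIntegral d f) (m : ℕ) :
    ∃ k : ℤ, (d : ℚ) ^ m * f.coeff m = k := by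
  obtain ⟨g, hg⟩ := hf
  refine ⟨g.coeff m, ?_⟩
  have := congrArg (fun q => coeff q m) hg
  simp only [coe_mapRingHom, coeff_map, comp_C_mul_X_coeff] at this
  rw [mul_comm, ← this]
  simp

theorem dilationIntegral_binomPoly {d h : ℕ} (hd : ∀ i, 1 ≤ i → i ≤ h → i ∣ d) {r : ℕ}
    (hr : r ≤ h) : DilationIntegral d (binomPoly r) := by
  cases r with
  | zero => rw [binomPoly_zero]; exact DilationIntegral.one d
  | succ r =>
    rw [binomPoly_succ_eq_prod]
    refine (DilationIntegral.inv_mul_X (hd _ (by omega) hr)).mul ?_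
    refine Finset.prod_induction _ (DilationIntegral d) (fun _ _ => DilationIntegral.mul)
      (DilationIntegral.one d) fun i hi => ?_
    rw [sub_eq_add_neg]
    exact (DilationIntegral.inv_mul_X (hd _ (by omega) (by have := mem_range.1 hi; omega))).add
      (DilationIntegral.neg_one d)

theorem dilationIntegral_taylor_binomPoly {d h : ℕ} (hd : ∀ i, 1 ≤ i → i ≤ h → i ∣ d) (z : ℕ) :
    ∀ {r : ℕ}, r ≤ h → DilationIntegral d (taylor (z : ℚ) (binomPoly r)) := by
  induction z with
  | zero => 
    intro r hr
    simpa using dilationIntegral_binomPoly hd hr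
  | succ z ih =>
    intro r hr
    cases r with
    | zero => rw [binomPoly_zero, taylor_one]; exact DilationIntegral.one d
    | succ r =>
      rw [taylor_succ_binomPoly_succ]
      exact (ih hr).add (ih (by omega))

/-- The sum of the absolute values of the coefficients. -/
noncomputable def coeffAbsSum (f : ℚ[X]) : ℚ := f.sum fun _ a => |a|

theorem coeffAbsSum_eq_sum_range {f : ℚ[X]} {n : ℕ} (h : f.natDegree < n) :
    coeffAbsSum f = ∑ i ∈ range n, |f.coeff i| :=
  sum_over_range' _ (by simp) _ h

theorem coeffAbsSum_add_le (f g : ℚ[X]) : coeffAbsSum (f + g) ≤ coeffAbsSum f + coeffAbsSum g := by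
  let n := max f.natDegree g.natDegree + 1
  rw [coeffAbsSum_eq_sum_range (n := n) (Nat.lt_succ_of_le (natDegree_add_le f g)),
    coeffAbsSum_eq_sum_range (f := f) (n := n) (Nat.lt_succ_of_le (le_max_left _ _)),
    coeffAbsSum_eq_sum_range (f := g) (n := n) (Nat.lt_succ_of_le (le_max_right _ _)),
    ← sum_add_distrib]
  exact sum_le_sum fun i _ => by rw [coeff_add]; exact abs_add_le _ _

theorem coeffAbsSum_nonneg (f : ℚ[X]) : 0 ≤ coeffAbsSum f :=
  sum_nonneg fun _ _ => abs_nonneg _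

theorem abs_coeff_le_coeffAbsSum (f : ℚ[X]) (m : ℕ) : |f.coeff m| ≤ coeffAbsSum f := by
  rw [coeffAbsSum_eq_sum_range (n := max f.natDegree m + 1) (Nat.lt_succ_of_le (le_max_left _ _))]
  exact single_le_sum (f := fun i => |f.coeff i|) (fun i _ => abs_nonneg _)
    (mem_range.2 (Nat.lt_succ_of_le (le_max_right _ _)))

theorem coeffAbsSum_monomial_mul (n : ℕ) (a : ℚ) (g : ℚ[X]) :
    coeffAbsSum (monomial n a * g) = |a| * coeffAbsSum g := by
  rw [coeffAbsSum_eq_sum_range (f := monomial n a * g) (n := n + (g.natDegree + 1)) (by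
    refine natDegree_mul_le.trans_lt ?_
    have := natDegree_monomial_le a (m := n)
    omega), coeffAbsSum_eq_sum_range (Nat.lt_succ_self _), sum_range_add, mul_sum]
  rw [sum_eq_zero, zero_add]
  · refine sum_congr rfl fun i _ => ?_
    rw [← C_mul_X_pow_eq_monomial, mul_assoc, coeff_C_mul, add_comm, coeff_X_pow_mul, abs_mul]
  · intro i hi
    rw [← C_mul_X_pow_eq_monomial, mul_assoc, coeff_C_mul, coeff_X_pow_mul',
      if_neg (by have := mem_range.1 hi; omega)]
    simp

theorem coeffAbsSum_mul_le (f g : ℚ[X]) : coeffAbsSum (f * g) ≤ coeffAbsSum f * coeffAbsSum g := by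
  have key : ∀ s : Finset ℕ, coeffAbsSum ((∑ i ∈ s, monomial i (f.coeff i)) * g) ≤
      (∑ i ∈ s, |f.coeff i|) * coeffAbsSum g := by
    intro s
    induction s using Finset.induction_on with
    | empty => simp [coeffAbsSum]
    | insert a s ha ih =>
      rw [sum_insert ha, sum_insert ha, add_mul, add_mul]
      refine (coeffAbsSum_add_le _ _).trans ?_
      rw [coeffAbsSum_monomial_mul]
      gcongr
  have := key f.support
  rwa [← as_sum_support] at this

theorem coeffAbsSum_one : coeffAbsSum 1 = 1 := by
  rw [coeffAbsSum_eq_sum_range (n := 1) (by simp)]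
  simp

theorem coeffAbsSum_pow_le {f : ℚ[X]} {c : ℚ} (h : coeffAbsSum f ≤ c) (n : ℕ) :
    coeffAbsSum (f ^ n) ≤ c ^ n := by
  induction n with
  | zero => simp [coeffAbsSum_one]
  | succ n ih =>
    rw [pow_succ, pow_succ]
    exact (coeffAbsSum_mul_le _ _).trans (mul_le_mul ih h (coeffAbsSum_nonneg _)
      ((coeffAbsSum_nonneg _).trans ih))

theorem coeffAbsSum_binomPoly_le (r : ℕ) : coeffAbsSum (binomPoly r) ≤ 1 := by
  induction r with
  | zero => rw [binomPoly_zero, coeffAbsSum_one]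
  | succ r ih =>
    have h : binomPoly (r + 1) = (monomial 1 (((r + 1 : ℕ) : ℚ)⁻¹) +
        monomial 0 (-(r : ℚ) * ((r + 1 : ℕ) : ℚ)⁻¹)) * binomPoly r := by
      rw [binomPoly, binomPoly, descPochhammer_succ_right, Nat.factorial_succ, Nat.cast_mul,
        mul_inv, C_mul, ← C_mul_X_eq_monomial, monomial_zero_left, C_mul, C_neg, C_eq_natCast]
      ring
    rw [h]
    refine (add_mul (monomial 1 (((r + 1 : ℕ) : ℚ)⁻¹)) _ (binomPoly r) ▸ coeffAbsSum_add_le _ _).trans ?_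
    rw [coeffAbsSum_monomial_mul, coeffAbsSum_monomial_mul, ← add_mul]
    have h1 : |((r + 1 : ℕ) : ℚ)⁻¹| + |-(r : ℚ) * ((r + 1 : ℕ) : ℚ)⁻¹| = 1 := by
      rw [abs_mul, abs_neg, abs_of_nonneg (by positivity), abs_of_nonneg (by positivity)]
      push_cast
      field_simp
      ring
    rw [h1, one_mul]
    exact ih

theorem coeffAbsSum_taylor_binomPoly_le (z : ℕ) :
    ∀ r : ℕ, coeffAbsSum (taylor (z : ℚ) (binomPoly r)) ≤ (z + r).choose r := by
  induction z with
  | zero => 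
    intro r
    simpa using coeffAbsSum_binomPoly_le r
  | succ z ih =>
    intro r
    cases r with
    | zero => rw [binomPoly_zero, taylor_one, C_1, coeffAbsSum_one]; simp
    | succ r =>
      rw [taylor_succ_binomPoly_succ]
      refine (coeffAbsSum_add_le _ _).trans ((add_le_add (ih (r + 1)) (ih r)).trans ?_)
      rw [show z + 1 + (r + 1) = (z + (r + 1)) + 1 by ring, Nat.choose_succ_succ (z + (r + 1)) r]
      have := Nat.choose_le_choose r (show z + r ≤ z + (r + 1) by omega)
      rw [add_comm]
      exact_mod_cast Nat.add_le_add_right this _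

/-- A product of binomial polynomials of degrees at most `h`, of total degree `i`. -/
noncomputable def feldmanPoly (h i : ℕ) : ℚ[X] := binomPoly h ^ (i / h) * binomPoly (i % h)

theorem binomPoly_ne_zero (r : ℕ) : binomPoly r ≠ 0 := by
  cases r with
  | zero => simp [binomPoly_zero]
  | succ r => 
    intro h
    have := natDegree_binomPoly (r + 1)
    simp [h] at this

theorem natDegree_feldmanPoly (h i : ℕ) : (feldmanPoly h i).natDegree = i := by
  rw [feldmanPoly, natDegree_mul (pow_ne_zero _ (binomPoly_ne_zero _)) (binomPoly_ne_zero _),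
    natDegree_pow, natDegree_binomPoly, natDegree_binomPoly, Nat.div_add_mod']

theorem feldmanPoly_ne_zero (h i : ℕ) : feldmanPoly h i ≠ 0 :=
  mul_ne_zero (pow_ne_zero _ (binomPoly_ne_zero _)) (binomPoly_ne_zero _)

theorem dilationIntegral_taylor_feldmanPoly {d h : ℕ} (hh : 0 < h)
    (hd : ∀ i, 1 ≤ i → i ≤ h → i ∣ d) (z i : ℕ) :
    DilationIntegral d (taylor (z : ℚ) (feldmanPoly h i)) := by
  rw [feldmanPoly, taylor_mul, taylor_pow]
  exact ((dilationIntegral_taylor_binomPoly hd z le_rfl).pow _).mul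
    (dilationIntegral_taylor_binomPoly hd z (Nat.mod_lt _ hh).le)

theorem coeffAbsSum_taylor_feldmanPoly_le {h l i : ℕ} (hh : 0 < h) (hi : i < l * h) (z : ℕ) :
    coeffAbsSum (taylor (z : ℚ) (feldmanPoly h i)) ≤ ((z + h).choose h : ℚ) ^ l := by
  rw [feldmanPoly, taylor_mul, taylor_pow]
  have h1 : coeffAbsSum (taylor (z : ℚ) (binomPoly (i % h))) ≤ ((z + h).choose h : ℚ) := by
    refine (coeffAbsSum_taylor_binomPoly_le z _).trans ?_
    have := Nat.choose_le_choose z (show z + i % h ≤ z + h by have := Nat.mod_lt i hh; omega)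
    rw [Nat.choose_symm_add, Nat.choose_symm_add] at this
    exact_mod_cast this
  have h2 := coeffAbsSum_pow_le (coeffAbsSum_taylor_binomPoly_le z h) (i / h)
  have h3 : i / h + 1 ≤ l := Nat.succ_le_of_lt ((Nat.div_lt_iff_lt_mul hh).2 hi)
  have h4 : (1 : ℚ) ≤ (z + h).choose h := by
    exact_mod_cast Nat.choose_pos (by omega)
  refine (coeffAbsSum_mul_le _ _).trans ((mul_le_mul h2 h1 (coeffAbsSum_nonneg _)
    (by positivity)).trans ?_)
  rw [← pow_succ]
  exact pow_le_pow_right₀ h4 h3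

theorem exists_int_hasseDeriv_feldmanPoly {d h l i : ℕ} (hh : 0 < h)
    (hd : ∀ i, 1 ≤ i → i ≤ h → i ∣ d) (hi : i < l * h) (z m : ℕ) :
    ∃ k : ℤ, (d : ℚ) ^ m * (hasseDeriv m (feldmanPoly h i)).eval (z : ℚ) = k ∧
      |k| ≤ (d : ℤ) ^ m * ((z + h).choose h : ℤ) ^ l := by
  obtain ⟨k, hk⟩ := (dilationIntegral_taylor_feldmanPoly hh hd z i).exists_int m
  have h1 := (abs_coeff_le_coeffAbsSum _ m).trans (coeffAbsSum_taylor_feldmanPoly_le hh hi z)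
  rw [taylor_coeff] at hk h1
  refine ⟨k, hk, ?_⟩
  have h2 : |(k : ℚ)| ≤ (d : ℚ) ^ m * ((z + h).choose h : ℚ) ^ l := by
    rw [← hk, abs_mul, abs_of_nonneg (by positivity : (0 : ℚ) ≤ (d : ℚ) ^ m)]
    gcongr
  exact_mod_cast h2

theorem linearIndependent_feldmanPoly (h : ℕ) : LinearIndependent ℚ (feldmanPoly h) := by
  let S : Polynomial.Sequence ℚ :=
    ⟨feldmanPoly h, fun i => by
      rw [degree_eq_natDegree (feldmanPoly_ne_zero h i), natDegree_feldmanPoly]⟩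
  exact S.linearIndependent

/-- A radius of convergence, with room to spare, for the `p`-adic exponential. -/
noncomputable def expRadius (p : ℕ) : ℝ := if p = 2 then 1 / 8 else 1 / p

section PadicExp

variable {p : ℕ} [hp : Fact p.Prime]

theorem expRadius_pos : 0 < expRadius p := by
  have := hp.out.pos
  unfold expRadius
  split_ifs <;> positivity

theorem expRadius_le_third : expRadius p ≤ 1 / 3 := by
  have := hp.out.two_le
  unfold expRadius
  split_ifs with h
  · norm_num
  · have h3 : (3 : ℝ) ≤ p := by exact_mod_cast (by omega : 3 ≤ p)
    exact one_div_le_one_div_of_le (by norm_num) h3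

theorem norm_factorial_eq (n : ℕ) :
    ‖(n.factorial : ℚ_[p])‖ = ((p : ℝ) ^ padicValNat p n.factorial)⁻¹ := by
  have h := Padic.eq_padicNorm (p := p) (n.factorial : ℚ)
  rw [padicNorm.eq_zpow_of_nonzero (by exact_mod_cast n.factorial_ne_zero)] at h
  rw [Rat.cast_natCast] at h
  rw [h, padicValRat.of_nat, zpow_neg, zpow_natCast]
  push_cast
  rfl

theorem expRadius_mul_sqrt_three_pow_le (b : ℕ) :
    (expRadius p * √3) ^ b ≤ ‖((b + 1).factorial : ℚ_[p])‖ := by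
  have hp2 := hp.out.two_le
  have hv := sub_one_mul_padicValNat_factorial_lt_of_ne_zero p (Nat.succ_ne_zero b)
  rw [norm_factorial_eq]
  set v := padicValNat p (b + 1).factorial
  unfold expRadius
  split_ifs with h
  · subst h
    have hvb : v ≤ b := by omega
    have h1 : (1 / 8 * √3 : ℝ) ≤ 1 / 2 := by
      have : √3 ≤ 4 := by
        rw [Real.sqrt_le_left (by norm_num)]; norm_num
      linarith
    calc (1 / 8 * √3 : ℝ) ^ b ≤ (1 / 2) ^ b := by gcongr
      _ ≤ (1 / 2) ^ v := pow_le_pow_of_le_one (by norm_num) (by norm_num) hvb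
      _ = _ := by push_cast; rw [← inv_pow]; norm_num
  · have h3 : 3 ≤ p := by omega
    have h3' : (3 : ℝ) ≤ p := by exact_mod_cast h3
    have hvb : 2 * v ≤ b := by
      have : 2 * v ≤ (p - 1) * v := Nat.mul_le_mul_right _ (by omega)
      omega
    have hp0 : (0 : ℝ) < p := by linarith
    have h4 : (1 / p * √3 : ℝ) ^ 2 ≤ (p : ℝ)⁻¹ := by
      rw [mul_pow, Real.sq_sqrt (by norm_num)]
      field_simp
      exact h3'
    have h5 : (1 / p * √3 : ℝ) ≤ 1 := by
      have : (1 / p * √3 : ℝ) ^ 2 ≤ 1 := h4.trans (inv_le_one_of_one_le₀ (by linarith))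
      exact (sq_le_one_iff₀ (by positivity)).1 this
    calc (1 / p * √3 : ℝ) ^ b ≤ (1 / p * √3 : ℝ) ^ (2 * v) :=
          pow_le_pow_of_le_one (by positivity) h5 hvb
      _ = ((1 / p * √3 : ℝ) ^ 2) ^ v := pow_mul _ _ _
      _ ≤ ((p : ℝ)⁻¹) ^ v := by gcongr
      _ = _ := inv_pow _ _

theorem expRadius_mul_sqrt_three_pow_le_factorial (b : ℕ) :
    (expRadius p * √3) ^ b ≤ ‖(b.factorial : ℚ_[p])‖ := by
  refine (expRadius_mul_sqrt_three_pow_le b).trans ?_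
  rw [Nat.factorial_succ, Nat.cast_mul, norm_mul]
  refine mul_le_of_le_one_left (norm_nonneg _) ?_
  exact_mod_cast Padic.norm_int_le_one (p := p) ((b + 1 : ℕ) : ℤ)

theorem norm_factorial_pos (b : ℕ) : 0 < ‖(b.factorial : ℚ_[p])‖ :=
  norm_pos_iff.2 (by exact_mod_cast b.factorial_ne_zero)

theorem norm_pow_div_factorial_le {u : ℚ_[p]} (hu : ‖u‖ ≤ expRadius p) (b : ℕ) :
    ‖u ^ b / b.factorial‖ ≤ (√3)⁻¹ ^ b := by
  rw [norm_div, norm_pow, div_le_iff₀ (norm_factorial_pos b)]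
  calc ‖u‖ ^ b ≤ expRadius p ^ b := by gcongr
    _ = (√3)⁻¹ ^ b * (expRadius p * √3) ^ b := by
      rw [← mul_pow]; congr 1; field_simp
    _ ≤ _ := by gcongr; exact expRadius_mul_sqrt_three_pow_le_factorial b

theorem norm_pow_succ_div_factorial_le {u : ℚ_[p]} (hu : ‖u‖ ≤ expRadius p) (b : ℕ) :
    ‖u ^ (b + 1) / (b + 1).factorial‖ ≤ ‖u‖ * (√3)⁻¹ ^ b := by
  rw [norm_div, norm_pow, div_le_iff₀ (norm_factorial_pos _), pow_succ, mul_comm _ ‖u‖, mul_assoc]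
  gcongr
  calc ‖u‖ ^ b ≤ expRadius p ^ b := by gcongr
    _ = (√3)⁻¹ ^ b * (expRadius p * √3) ^ b := by
      rw [← mul_pow]; congr 1; field_simp
    _ ≤ _ := by gcongr; exact expRadius_mul_sqrt_three_pow_le b

theorem mem_eball_of_norm_le {u : ℚ_[p]} (hu : ‖u‖ ≤ expRadius p) :
    u ∈ Metric.eball (0 : ℚ_[p]) (NormedSpace.expSeries ℚ_[p] ℚ_[p]).radius := by
  have hpos : 0 < expRadius p * √3 := mul_pos expRadius_pos (by positivity)
  have h1 : ((Real.toNNReal (expRadius p * √3) : NNReal) : ENNReal) ≤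
      (NormedSpace.expSeries ℚ_[p] ℚ_[p]).radius := by
    refine FormalMultilinearSeries.le_radius_of_bound _ 1 fun n => ?_
    have hn : ‖NormedSpace.expSeries ℚ_[p] ℚ_[p] n‖ ≤ ‖(n.factorial : ℚ_[p])‖⁻¹ := by
      rw [NormedSpace.expSeries, norm_smul, norm_inv]
      exact mul_le_of_le_one_right (by positivity)
        (ContinuousMultilinearMap.norm_mkPiAlgebraFin (𝕜 := ℚ_[p]) (A := ℚ_[p])).le
    rw [Real.coe_toNNReal _ hpos.le]
    calc _ ≤ ‖(n.factorial : ℚ_[p])‖⁻¹ * (expRadius p * √3) ^ n := by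
          exact mul_le_mul_of_nonneg_right hn (by positivity)
      _ ≤ ‖(n.factorial : ℚ_[p])‖⁻¹ * ‖(n.factorial : ℚ_[p])‖ := by
          gcongr; exact expRadius_mul_sqrt_three_pow_le_factorial n
      _ ≤ 1 := inv_mul_le_one
  rw [mem_eball_zero_iff]
  refine lt_of_lt_of_le ?_ h1
  rw [← ofReal_norm, ENNReal.ofReal_lt_coe_iff (norm_nonneg _), Real.coe_toNNReal _ hpos.le]
  refine hu.trans_lt ?_
  have : 1 < √3 := by rw [Real.lt_sqrt (by norm_num)]; norm_num
  nlinarith [expRadius_pos (p := p)]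

theorem hasSum_exp {u : ℚ_[p]} (hu : ‖u‖ ≤ expRadius p) :
    HasSum (fun n => u ^ n / n.factorial) (NormedSpace.exp u) := by
  have := NormedSpace.expSeries_hasSum_exp_of_mem_ball' (𝕂 := ℚ_[p]) u (mem_eball_of_norm_le hu)
  simpa [div_eq_inv_mul] using this

theorem norm_exp_sub_sum_le {u : ℚ_[p]} (hu : ‖u‖ ≤ expRadius p) (I : ℕ) {c : ℝ}
    (hc : ∀ b, ‖u ^ (b + I) / (b + I).factorial‖ ≤ c) :
    ‖NormedSpace.exp u - ∑ b ∈ range I, u ^ b / b.factorial‖ ≤ c := by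
  have h := hasSum_exp hu
  rw [← h.tsum_eq, ← h.summable.sum_add_tsum_nat_add I, add_sub_cancel_left]
  exact IsUltrametricDist.norm_tsum_le_of_forall_le hc

theorem inv_sqrt_three_lt_one : (√3 : ℝ)⁻¹ < 1 :=
  inv_lt_one_of_one_lt₀ (by rw [Real.lt_sqrt (by norm_num)]; norm_num)

theorem norm_exp_sub_truncation_le {u : ℚ_[p]} (hu : ‖u‖ ≤ expRadius p) (I : ℕ) :
    ‖NormedSpace.exp u - ∑ b ∈ range I, u ^ b / b.factorial‖ ≤ (√3)⁻¹ ^ I :=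
  norm_exp_sub_sum_le hu I fun b => (norm_pow_div_factorial_le hu _).trans
    (pow_le_pow_of_le_one (by positivity) inv_sqrt_three_lt_one.le (by omega))

theorem norm_exp_sub_one_le {u : ℚ_[p]} (hu : ‖u‖ ≤ expRadius p) :
    ‖NormedSpace.exp u - 1‖ ≤ ‖u‖ := by
  have := norm_exp_sub_sum_le hu 1 (c := ‖u‖) fun b =>
    (norm_pow_succ_div_factorial_le hu b).trans
      (mul_le_of_le_one_right (norm_nonneg _) (pow_le_one₀ (by positivity) inv_sqrt_three_lt_one.le))
  simpa using this

theorem norm_exp_sub_one_sub_le {u : ℚ_[p]} (hu : ‖u‖ ≤ expRadius p) :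
    ‖NormedSpace.exp u - (1 + u)‖ ≤ ‖u‖ * (√3)⁻¹ := by
  have := norm_exp_sub_sum_le hu 2 (c := ‖u‖ * (√3)⁻¹) fun b =>
    (norm_pow_succ_div_factorial_le hu (b + 1)).trans (by
      gcongr
      exact pow_le_of_le_one (by positivity) inv_sqrt_three_lt_one.le (by omega))
  simpa [sum_range_succ] using this

theorem exp_add_of_norm_le {u v : ℚ_[p]} (hu : ‖u‖ ≤ expRadius p) (hv : ‖v‖ ≤ expRadius p) :
    NormedSpace.exp (u + v) = NormedSpace.exp u * NormedSpace.exp v :=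
  NormedSpace.exp_add_of_mem_ball (𝕂 := ℚ_[p]) (mem_eball_of_norm_le hu) (mem_eball_of_norm_le hv)

theorem norm_mul_natCast_le {u : ℚ_[p]} {c : ℝ} (hu : ‖u‖ ≤ c) (n : ℕ) : ‖u * n‖ ≤ c := by
  rw [norm_mul]
  refine (mul_le_of_le_one_right (norm_nonneg _) ?_).trans hu
  exact_mod_cast Padic.norm_int_le_one (p := p) (n : ℤ)

theorem exp_mul_natCast {u : ℚ_[p]} (hu : ‖u‖ ≤ expRadius p) (n : ℕ) :
    NormedSpace.exp (u * n) = NormedSpace.exp u ^ n := by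
  induction n with
  | zero => simp
  | succ n ih =>
    rw [Nat.cast_succ, mul_add, mul_one, exp_add_of_norm_le (norm_mul_natCast_le hu n) hu, ih,
      pow_succ]

theorem padic_norm_add_le {a b : ℚ_[p]} {c : ℝ} (ha : ‖a‖ ≤ c) (hb : ‖b‖ ≤ c) : ‖a + b‖ ≤ c :=
  (IsUltrametricDist.norm_add_le_max a b).trans (max_le ha hb)

theorem exists_exp_eq {θ : ℚ_[p]} (hθ : ‖θ - 1‖ ≤ expRadius p) :
    ∃ u : ℚ_[p], ‖u‖ ≤ expRadius p ∧ NormedSpace.exp u = θ := by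
  have hcont : ContinuousOn (fun u : ℚ_[p] => ‖θ * NormedSpace.exp (-u) - 1‖)
      (Metric.closedBall 0 (expRadius p)) := by
    refine ((continuousOn_const.mul ?_).sub continuousOn_const).norm
    refine (NormedSpace.continuousOn_exp (𝕂 := ℚ_[p])).comp continuousOn_neg fun u hu => ?_
    exact mem_eball_of_norm_le (by simpa using hu)
  obtain ⟨u, hu, hmin⟩ := (isCompact_closedBall (0 : ℚ_[p]) (expRadius p)).exists_isMinOn
    ⟨0, by simpa using expRadius_pos.le⟩ hcont
  rw [mem_closedBall_zero_iff] at hu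
  have hu' : ‖-u‖ ≤ expRadius p := by rwa [norm_neg]
  refine ⟨u, hu, ?_⟩
  set w := θ * NormedSpace.exp (-u) - 1 with hw
  have hθ1 : ‖θ‖ ≤ 1 := by
    have := padic_norm_add_le (c := 1) (hθ.trans (expRadius_le_third.trans (by norm_num)))
      (norm_one (α := ℚ_[p])).le
    simpa using this
  have hwle : ‖w‖ ≤ expRadius p := by
    have : w = θ * (NormedSpace.exp (-u) - 1) + (θ - 1) := by rw [hw]; ring
    rw [this]
    refine padic_norm_add_le ?_ hθ
    rw [norm_mul]
    exact (mul_le_of_le_one_left (norm_nonneg _) hθ1).trans ((norm_exp_sub_one_le hu').trans hu')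
  have hw' : ‖-w‖ ≤ expRadius p := by rwa [norm_neg]
  have hexp : NormedSpace.exp u * NormedSpace.exp (-u) = 1 := by
    rw [← exp_add_of_norm_le hu hu', add_neg_cancel, NormedSpace.exp_zero]
  by_cases hw0 : w = 0
  · rw [hw, sub_eq_zero] at hw0
    calc NormedSpace.exp u = NormedSpace.exp u * (θ * NormedSpace.exp (-u)) := by rw [hw0, mul_one]
      _ = θ * (NormedSpace.exp u * NormedSpace.exp (-u)) := by ring
      _ = θ := by rw [hexp, mul_one]
  · exfalso
    have hle := hmin (show u + w ∈ Metric.closedBall 0 (expRadius p) by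
      rw [mem_closedBall_zero_iff]; exact padic_norm_add_le hu hwle)
    have hpos : 0 < ‖w‖ := norm_pos_iff.2 hw0
    set R := NormedSpace.exp (-w) - (1 + -w) with hR
    have hRle : ‖R‖ ≤ ‖w‖ * (√3)⁻¹ := by simpa using norm_exp_sub_one_sub_le hw'
    have heq : θ * NormedSpace.exp (-(u + w)) - 1 = -(w * w) + (R + w * R) := by
      rw [neg_add, exp_add_of_norm_le hu' hw', ← mul_assoc,
        show θ * NormedSpace.exp (-u) = 1 + w by rw [hw]; ring,
        show NormedSpace.exp (-w) = 1 + -w + R by rw [hR]; ring]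
      ring
    have hsq : (1 : ℝ) / 3 ≤ (√3)⁻¹ := by
      rw [one_div]
      gcongr
      rw [Real.sqrt_le_left (by norm_num)]
      norm_num
    have hlt : ‖θ * NormedSpace.exp (-(u + w)) - 1‖ ≤ ‖w‖ * (√3)⁻¹ := by
      rw [heq]
      refine padic_norm_add_le ?_ (padic_norm_add_le hRle ?_)
      · rw [norm_neg, norm_mul]
        gcongr
        linarith [expRadius_le_third (p := p)]
      · rw [norm_mul]
        refine (mul_le_of_le_one_left (norm_nonneg _) ?_).trans hRle
        linarith [expRadius_le_third (p := p)]
    have h2 : ‖w‖ * (√3)⁻¹ < ‖w‖ := mul_lt_of_lt_one_right hpos inv_sqrt_three_lt_one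
    exact absurd (hle.trans hlt) (not_le.2 h2)

end PadicExp

section Schwarz

variable {p : ℕ} [hp : Fact p.Prime]

theorem inv_norm_factorial_le (n : ℕ) : ‖(n.factorial : ℚ_[p])‖⁻¹ ≤ 2 ^ n := by
  rw [norm_factorial_eq, inv_inv]
  have hv : (p - 1) * padicValNat p n.factorial ≤ n := by
    rcases Nat.eq_zero_or_pos n with rfl | hn
    · simp
    · exact (sub_one_mul_padicValNat_factorial_lt_of_ne_zero p hn.ne').le
  have h2 : p ≤ 2 ^ (p - 1) := by
    have := (p - 1).lt_two_pow_self
    have := hp.out.two_le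
    omega
  calc (p : ℝ) ^ padicValNat p n.factorial ≤ ((2 : ℝ) ^ (p - 1)) ^ padicValNat p n.factorial := by
        gcongr
        exact_mod_cast h2
    _ = 2 ^ ((p - 1) * padicValNat p n.factorial) := (pow_mul _ _ _).symm
    _ ≤ 2 ^ n := by gcongr; norm_num

/-- The coefficients of `f` are bounded by those of a geometric series: the Gauss norm of `f` on
the disc of radius `r` is at most `c`. -/
def GaussBound (r c : ℝ) (f : ℚ_[p][X]) : Prop := ∀ b, ‖f.coeff b‖ * r ^ b ≤ c

theorem padic_norm_natCast_le_one (n : ℕ) : ‖(n : ℚ_[p])‖ ≤ 1 := by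
  exact_mod_cast Padic.norm_int_le_one (p := p) (n : ℤ)

theorem GaussBound.nonneg {r c : ℝ} (hr : 0 ≤ r) {f : ℚ_[p][X]} (h : GaussBound r c f) : 0 ≤ c :=
  (mul_nonneg (norm_nonneg _) (pow_nonneg hr 0)).trans (h 0)

theorem GaussBound.norm_eval_le {r c : ℝ} (hr : 1 ≤ r) {f : ℚ_[p][X]} (h : GaussBound r c f)
    {z : ℚ_[p]} (hz : ‖z‖ ≤ 1) : ‖f.eval z‖ ≤ c := by
  rw [eval_eq_sum_range]
  refine IsUltrametricDist.norm_sum_le_of_forall_le_of_nonneg (h.nonneg (by linarith)) fun b _ => ?_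
  rw [norm_mul, norm_pow]
  refine le_trans ?_ (h b)
  gcongr
  exact hz.trans hr

theorem GaussBound.divByMonic {r c : ℝ} (hr : 1 ≤ r) {f : ℚ_[p][X]} (h : GaussBound r c f)
    {x : ℚ_[p]} (hx : ‖x‖ ≤ 1) : GaussBound r (c / r) (f /ₘ (X - C x)) := by
  intro b
  have hc := h.nonneg (by linarith)
  have hr0 : 0 < r := by linarith
  rw [coeff_divByMonic_X_sub_C, le_div_iff₀ hr0, mul_assoc, ← pow_succ, ← le_div_iff₀ (by positivity)]
  refine IsUltrametricDist.norm_sum_le_of_forall_le_of_nonneg (by positivity) fun i hi => ?_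
  rw [norm_mul, norm_pow, le_div_iff₀ (by positivity)]
  refine le_trans ?_ (h i)
  have h1 := (mem_Icc.1 hi).1
  calc ‖x‖ ^ (i - (b + 1)) * ‖f.coeff i‖ * r ^ (b + 1) ≤ 1 * ‖f.coeff i‖ * r ^ i := by
        gcongr
        exact pow_le_one₀ (norm_nonneg _) hx
    _ = _ := by rw [one_mul]

theorem taylor_eq_add_mul_taylor_divByMonic (f : ℚ_[p][X]) (x s : ℚ_[p]) :
    taylor s f = C (f.eval x) + (X + C (s - x)) * taylor s (f /ₘ (X - C x)) := by
  have h := modByMonic_add_div f (X - C x)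
  rw [modByMonic_X_sub_C_eq_C_eval] at h
  conv_lhs => rw [← h]
  rw [map_add, taylor_C, taylor_mul, map_sub, taylor_X, taylor_C, C_sub]
  congr 2
  ring

theorem eval_eq_add_mul_eval_divByMonic (f : ℚ_[p][X]) (x z : ℚ_[p]) :
    f.eval z = f.eval x + (z - x) * (f /ₘ (X - C x)).eval z := by
  have h := modByMonic_add_div f (X - C x)
  rw [modByMonic_X_sub_C_eq_C_eval] at h
  conv_lhs => rw [← h]
  simp

theorem exists_quotient_block {r c : ℝ} (hr : 1 ≤ r) {f : ℚ_[p][X]} (hf : GaussBound r c f)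
    (x M : ℕ) {δ : ℝ} (hδ : 0 ≤ δ) (hx : ∀ m < M, ‖(taylor (x : ℚ_[p]) f).coeff m‖ ≤ δ) :
    ∀ l ≤ M, ∃ g : ℚ_[p][X], (∀ z : ℕ, ‖f.eval (z : ℚ_[p])‖ ≤ max δ ‖g.eval (z : ℚ_[p])‖) ∧
      GaussBound r (c / r ^ l) g ∧ (∀ m < M - l, ‖(taylor (x : ℚ_[p]) g).coeff m‖ ≤ δ) ∧
      ∀ s : ℕ, s ≠ x → ∀ e, δ ≤ e → (∀ m < M, ‖(taylor (s : ℚ_[p]) f).coeff m‖ ≤ e) →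
        ∀ m < M, ‖(taylor (s : ℚ_[p]) g).coeff m‖ ≤ e * (‖(s : ℚ_[p]) - x‖⁻¹) ^ (m + l) := by
  have hsub : ∀ s : ℕ, ‖(s : ℚ_[p]) - x‖ ≤ 1 := fun s => by
    exact_mod_cast Padic.norm_int_le_one (p := p) ((s : ℤ) - x)
  intro l
  induction l with
  | zero =>
    intro _
    refine ⟨f, fun z => le_max_right _ _, by simpa using hf, by simpa using hx, ?_⟩
    intro s hs e hδe he m hm
    have hu : 0 < ‖(s : ℚ_[p]) - x‖ := norm_pos_iff.2 (sub_ne_zero.2 (by exact_mod_cast hs))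
    refine (he m hm).trans (le_mul_of_one_le_right (hδ.trans hδe) ?_)
    exact one_le_pow₀ ((one_le_inv₀ hu).2 (hsub s))
  | succ l ih =>
    intro hl
    obtain ⟨g, hg1, hg2, hg3, hg4⟩ := ih (by omega)
    have hgx : ‖g.eval (x : ℚ_[p])‖ ≤ δ := by
      have := hg3 0 (by omega)
      rwa [taylor_coeff_zero] at this
    refine ⟨g /ₘ (X - C (x : ℚ_[p])), ?_, ?_, ?_, ?_⟩
    · intro z
      refine (hg1 z).trans (max_le (le_max_left _ _) ?_)
      rw [eval_eq_add_mul_eval_divByMonic g x z]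
      refine (IsUltrametricDist.norm_add_le_max _ _).trans (max_le_max hgx ?_)
      rw [norm_mul]
      exact mul_le_of_le_one_left (norm_nonneg _) (hsub z)
    · have := hg2.divByMonic hr (padic_norm_natCast_le_one x)
      rwa [div_div, ← pow_succ] at this
    · intro m hm
      have h1 := hg3 (m + 1) (by omega)
      rw [taylor_eq_add_mul_taylor_divByMonic g x x] at h1
      simpa [coeff_C] using h1
    · intro s hs e hδe he
      have hu : 0 < ‖(s : ℚ_[p]) - x‖ := norm_pos_iff.2 (sub_ne_zero.2 (by exact_mod_cast hs))
      have he0 := hδ.trans hδe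
      have hone : ∀ k, 1 ≤ (‖(s : ℚ_[p]) - x‖⁻¹) ^ k := fun k =>
        one_le_pow₀ ((one_le_inv₀ hu).2 (hsub s))
      have hdata := hg4 s hs e hδe he
      set G := taylor (s : ℚ_[p]) (g /ₘ (X - C (x : ℚ_[p])))
      have hT := taylor_eq_add_mul_taylor_divByMonic g x s
      have hstep : ∀ (a : ℚ_[p]) (k : ℕ), ‖((s : ℚ_[p]) - x) * a‖ ≤
          e * (‖(s : ℚ_[p]) - x‖⁻¹) ^ k → ‖a‖ ≤ e * (‖(s : ℚ_[p]) - x‖⁻¹) ^ (k + 1) := by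
        intro a k h
        rw [norm_mul, mul_comm, ← le_div_iff₀ hu] at h
        rwa [pow_succ, ← mul_assoc, ← div_eq_mul_inv]
      intro m
      induction m with
      | zero =>
        intro hm
        have h1 := hdata 0 hm
        rw [hT] at h1
        have h2 : ((s : ℚ_[p]) - x) * G.coeff 0 =
            (C (g.eval (x : ℚ_[p])) + (X + C ((s : ℚ_[p]) - x)) * G).coeff 0 + -g.eval (x : ℚ_[p]) := by
          simp [coeff_zero_eq_eval_zero]
        rw [← add_assoc]
        refine hstep _ _ ?_
        rw [h2]
        refine padic_norm_add_le h1 ?_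
        rw [norm_neg]
        exact (hgx.trans hδe).trans (le_mul_of_one_le_right he0 (hone _))
      | succ m ihm =>
        intro hm
        have h1 := hdata (m + 1) hm
        rw [hT] at h1
        have h2 : ((s : ℚ_[p]) - x) * G.coeff (m + 1) =
            (C (g.eval (x : ℚ_[p])) + (X + C ((s : ℚ_[p]) - x)) * G).coeff (m + 1) +
              -G.coeff m := by
          rw [coeff_add, coeff_C_succ, add_mul, coeff_add, coeff_X_mul, coeff_C_mul]
          ring
        rw [show m + 1 + (l + 1) = (m + 1 + l) + 1 by ring]
        refine hstep _ _ ?_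
        rw [h2]
        refine padic_norm_add_le h1 ?_
        rw [norm_neg]
        have := ihm (by omega)
        rwa [show m + (l + 1) = m + 1 + l by ring] at this

theorem padic_schwarz {r c ε : ℝ} (hr : 1 ≤ r) (hε : 0 ≤ ε) {f : ℚ_[p][X]}
    (hf : GaussBound r c f) (S M : ℕ)
    (h : ∀ s < S, ∀ m < M, ‖(hasseDeriv m f).eval (s : ℚ_[p])‖ ≤ ε) (z : ℕ) :
    ‖f.eval (z : ℚ_[p])‖ ≤ max (c / r ^ (S * M)) (ε * 4 ^ (S * M)) := by
  set B := ε * (‖(S.factorial : ℚ_[p])‖⁻¹) ^ (2 * M) with hB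
  have key : ∀ k ≤ S, ∃ g : ℚ_[p][X],
      (∀ z : ℕ, ‖f.eval (z : ℚ_[p])‖ ≤ max B ‖g.eval (z : ℚ_[p])‖) ∧
      GaussBound r (c / r ^ (k * M)) g ∧ ∀ s, k ≤ s → s < S → ∀ m < M,
        ‖(taylor (s : ℚ_[p]) g).coeff m‖ ≤
          ε * (‖(s.descFactorial k : ℚ_[p])‖⁻¹) ^ (2 * M) := by
    intro k
    induction k with
    | zero =>
      intro _
      refine ⟨f, fun z => le_max_right _ _, by simpa using hf, ?_⟩
      intro s _ hs m hm
      rw [taylor_coeff]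
      simpa using h s hs m hm
    | succ k ih =>
      intro hk
      obtain ⟨g, hg1, hg2, hg3⟩ := ih (by omega)
      set δ := ε * (‖(k.factorial : ℚ_[p])‖⁻¹) ^ (2 * M) with hδ
      have hδ0 : 0 ≤ δ := by positivity
      obtain ⟨G, hG1, hG2, -, hG4⟩ := exists_quotient_block hr hg2 k M hδ0 (by
        intro m hm
        have := hg3 k le_rfl (by omega) m hm
        rwa [Nat.descFactorial_self] at this) M le_rfl
      refine ⟨G, ?_, ?_, ?_⟩
      · intro z
        have hδB : δ ≤ B := by
          rw [hδ, hB]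
          gcongr
          · exact norm_factorial_pos S
          · obtain ⟨w, hw⟩ := Nat.factorial_dvd_factorial (show k ≤ S by omega)
            rw [hw, Nat.cast_mul, norm_mul]
            exact mul_le_of_le_one_right (norm_nonneg _) (padic_norm_natCast_le_one w)
        exact (hg1 z).trans (max_le (le_max_left _ _) ((hG1 z).trans (max_le_max_right _ hδB)))
      · rwa [div_div, ← pow_add, ← Nat.succ_mul] at hG2
      · intro s hks hs m hm
        have hfac : 0 < ‖(s.descFactorial k : ℚ_[p])‖ := by
          rw [norm_pos_iff]
          exact_mod_cast (Nat.descFactorial_pos (n := s) (k := k)).2 (by omega) |>.ne'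
        have hle : δ ≤ ε * (‖(s.descFactorial k : ℚ_[p])‖⁻¹) ^ (2 * M) := by
          rw [hδ]
          gcongr
          rw [Nat.descFactorial_eq_factorial_mul_choose, Nat.cast_mul, norm_mul]
          exact mul_le_of_le_one_right (norm_nonneg _) (padic_norm_natCast_le_one _)
        refine (hG4 s (by omega) _ hle (hg3 s (by omega) hs) m hm).trans ?_
        rw [Nat.descFactorial_succ, Nat.cast_mul, norm_mul, mul_inv, mul_pow,
          Nat.cast_sub (by omega), mul_comm ((_ : ℝ) ^ _) ((_ : ℝ) ^ _), ← mul_assoc]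
        have hu : 0 < ‖(s : ℚ_[p]) - k‖ :=
          norm_pos_iff.2 (sub_ne_zero.2 (by exact_mod_cast (by omega : s ≠ k)))
        have hu1 : ‖(s : ℚ_[p]) - k‖ ≤ 1 := by
          exact_mod_cast Padic.norm_int_le_one (p := p) ((s : ℤ) - k)
        gcongr
        · exact (one_le_inv₀ hu).2 hu1
        · omega
  obtain ⟨g, hg1, hg2, -⟩ := key S le_rfl
  refine (hg1 z).trans (max_le ?_ ?_)
  · refine le_trans ?_ (le_max_right _ _)
    rw [hB, show (4 : ℝ) = 2 ^ 2 by norm_num, ← pow_mul,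
      show 2 * (S * M) = S * (2 * M) by ring, pow_mul 2 S]
    gcongr
    exact inv_norm_factorial_le (p := p) S
  · exact (hg2.norm_eval_le hr (padic_norm_natCast_le_one z)).trans (le_max_left _ _)

end Schwarz

section Extrapolation

variable {p : ℕ} [hp : Fact p.Prime]

theorem GaussBound.mul {r c c' : ℝ} (hr : 0 < r) {f g : ℚ_[p][X]} (hf : GaussBound r c f)
    (hg : GaussBound r c' g) : GaussBound r (c * c') (f * g) := by
  intro b
  have hc := hf.nonneg hr.le
  have hc' := hg.nonneg hr.le
  rw [coeff_mul]
  rw [← le_div_iff₀ (by positivity)]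
  refine IsUltrametricDist.norm_sum_le_of_forall_le_of_nonneg (by positivity) fun i hi => ?_
  rw [le_div_iff₀ (by positivity), ← mem_antidiagonal.1 hi, norm_mul, pow_add]
  calc _ = (‖f.coeff i.1‖ * r ^ i.1) * (‖g.coeff i.2‖ * r ^ i.2) := by ring
    _ ≤ _ := mul_le_mul (hf _) (hg _) (by positivity) hc

theorem GaussBound.sum {ι : Type*} {s : Finset ι} {r c : ℝ} (hr : 0 < r) (hc : 0 ≤ c)
    {f : ι → ℚ_[p][X]} (hf : ∀ i ∈ s, GaussBound r c (f i)) : GaussBound r c (∑ i ∈ s, f i) := by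
  intro b
  rw [finsetSum_coeff, ← le_div_iff₀ (by positivity)]
  refine IsUltrametricDist.norm_sum_le_of_forall_le_of_nonneg (by positivity) fun i hi => ?_
  rw [le_div_iff₀ (by positivity)]
  exact hf i hi b

theorem GaussBound.const {r c : ℝ} {a : ℚ_[p]} (h : ‖a‖ ≤ c) : GaussBound r c (C a) := by
  have hc := (norm_nonneg _).trans h
  intro b
  rw [coeff_C]
  split_ifs with hb
  · simpa [hb] using h
  · simpa using hc

theorem GaussBound.hasseDeriv {r c : ℝ} (hr : 1 ≤ r) {f : ℚ_[p][X]} (hf : GaussBound r c f)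
    (m : ℕ) : GaussBound r c (hasseDeriv m f) := by
  intro b
  rw [hasseDeriv_coeff, norm_mul]
  refine le_trans ?_ (hf (b + m))
  have hr0 : 0 ≤ r := by linarith
  calc _ ≤ 1 * ‖f.coeff (b + m)‖ * r ^ (b + m) := by
        gcongr
        · exact padic_norm_natCast_le_one _
        · omega
    _ = _ := by rw [one_mul]

/-- Truncation of the power series `exp (u X)`. -/
noncomputable def expTrunc (u : ℚ_[p]) (I : ℕ) : ℚ_[p][X] :=
  ∑ b ∈ range I, monomial b (u ^ b / b.factorial)

theorem expTrunc_eval (u : ℚ_[p]) (I : ℕ) (z : ℚ_[p]) :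
    (expTrunc u I).eval z = ∑ b ∈ range I, (u * z) ^ b / b.factorial := by
  simp only [expTrunc, eval_finsetSum, eval_monomial]
  refine sum_congr rfl fun b _ => ?_
  rw [mul_pow]
  ring

theorem hasseDeriv_expTrunc_eval (u : ℚ_[p]) (b I : ℕ) (z : ℚ_[p]) :
    (hasseDeriv b (expTrunc u (b + I))).eval z = u ^ b / b.factorial * (expTrunc u I).eval z := by
  simp only [expTrunc_eval]
  rw [expTrunc, map_sum, eval_finsetSum, sum_range_add, sum_eq_zero, zero_add, mul_sum]
  · refine sum_congr rfl fun i _ => ?_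
    rw [hasseDeriv_monomial, eval_monomial, Nat.add_sub_cancel_left]
    have h1 : (((b + i).choose b : ℕ) : ℚ_[p]) * b.factorial * i.factorial = (b + i).factorial := by
      rw [Nat.choose_symm_add]
      exact_mod_cast Nat.add_choose_mul_factorial_mul_factorial b i
    have hb : (b.factorial : ℚ_[p]) ≠ 0 := by exact_mod_cast b.factorial_ne_zero
    have hi : (i.factorial : ℚ_[p]) ≠ 0 := by exact_mod_cast i.factorial_ne_zero
    have hbi : ((b + i).factorial : ℚ_[p]) ≠ 0 := by exact_mod_cast (b + i).factorial_ne_zero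
    rw [mul_pow, pow_add]
    field_simp
    rw [← h1]
    ring
  · intro i hi
    rw [hasseDeriv_monomial, Nat.choose_eq_zero_of_lt (mem_range.1 hi)]
    simp

theorem gaussBound_expTrunc {u : ℚ_[p]} (hu : ‖u‖ ≤ expRadius p) (I : ℕ) :
    GaussBound (√3) 1 (expTrunc u I) := by
  refine GaussBound.sum (by positivity) zero_le_one fun i _ b => ?_
  rw [coeff_monomial]
  split_ifs with h
  · subst h
    calc _ ≤ (√3)⁻¹ ^ i * √3 ^ i := by gcongr; exact norm_pow_div_factorial_le hu i
      _ = 1 := by rw [← mul_pow, inv_mul_cancel₀ (by positivity), one_pow]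
  · simp

theorem one_le_sqrt_three : (1 : ℝ) ≤ √3 := by
  rw [Real.one_le_sqrt]; norm_num

theorem padic_extrapolation {ι : Type*} [Fintype ι] (P : ι → ℚ_[p][X]) (v : ι → ℕ) {θ : ℚ_[p]}
    (hθ : ‖θ - 1‖ ≤ expRadius p) {c ε : ℝ} (hε : 0 < ε) (hP : ∀ y, GaussBound (√3) c (P y))
    (hc : 0 ≤ c) (S M T m₀ m₁ : ℕ) (hm₀ : m₀ + M ≤ T) (hm₁ : m₁ + M ≤ T)
    (h : ∀ s < S, ∀ a < T, ∀ b < T,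
      ‖∑ y, (hasseDeriv a (P y)).eval (s : ℚ_[p]) * (v y : ℚ_[p]) ^ b * θ ^ (v y * s)‖ ≤ ε)
    (z : ℕ) :
    ‖∑ y, (hasseDeriv m₀ (P y)).eval (z : ℚ_[p]) * (v y : ℚ_[p]) ^ m₁ * θ ^ (v y * z)‖ ≤
      max (c / √3 ^ (S * M)) (ε * 4 ^ (S * M)) := by
  obtain ⟨u, hu, rfl⟩ := exists_exp_eq hθ
  obtain ⟨I₀, hI₀⟩ : ∃ I₀ : ℕ, c * (√3)⁻¹ ^ I₀ ≤ ε := by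
    obtain ⟨I₀, hI₀⟩ := exists_pow_lt_of_lt_one (show 0 < ε / (c + 1) by positivity)
      inv_sqrt_three_lt_one
    refine ⟨I₀, ?_⟩
    rw [lt_div_iff₀ (by positivity)] at hI₀
    have : 0 ≤ (√3 : ℝ)⁻¹ ^ I₀ := by positivity
    nlinarith
  have hI : ∀ I, I₀ ≤ I → c * (√3)⁻¹ ^ I ≤ ε := fun I hI => le_trans (by
    gcongr c * ?_
    exact pow_le_pow_of_le_one (by positivity) inv_sqrt_three_lt_one.le hI) hI₀
  set I := M + I₀ with hIdef
  have huv : ∀ y, ‖u * v y‖ ≤ expRadius p := fun y => norm_mul_natCast_le hu _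
  let E : ι → ℕ → ℚ_[p][X] := fun y I => expTrunc (u * v y) I
  have hE : ∀ y I (s : ℕ), ‖NormedSpace.exp u ^ (v y * s) - (E y I).eval (s : ℚ_[p])‖ ≤
      (√3)⁻¹ ^ I := by
    intro y I s
    rw [expTrunc_eval, ← exp_mul_natCast hu, Nat.cast_mul, ← mul_assoc]
    exact norm_exp_sub_truncation_le (norm_mul_natCast_le (huv y) s) I
  have hPe : ∀ a y (s : ℕ), ‖(hasseDeriv a (P y)).eval (s : ℚ_[p])‖ ≤ c := fun a y s =>
    ((hP y).hasseDeriv one_le_sqrt_three a).norm_eval_le one_le_sqrt_three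
      (padic_norm_natCast_le_one s)
  have hvn : ∀ y b, ‖(v y : ℚ_[p]) ^ b‖ ≤ 1 := fun y b => by
    rw [norm_pow]
    exact pow_le_one₀ (norm_nonneg _) (padic_norm_natCast_le_one _)
  let f : ℚ_[p][X] := ∑ y, C ((v y : ℚ_[p]) ^ m₁) * (hasseDeriv m₀ (P y) * E y I)
  have hf : GaussBound (√3) c f := by
    refine GaussBound.sum (by positivity) hc fun y _ => ?_
    have := (GaussBound.const (r := √3) (hvn y m₁)).mul (by positivity)
      (((hP y).hasseDeriv one_le_sqrt_three m₀).mul (by positivity)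
        (gaussBound_expTrunc (huv y) I))
    simpa using this
  have hdata : ∀ s < S, ∀ m < M, ‖(hasseDeriv m f).eval (s : ℚ_[p])‖ ≤ ε := by
    intro s hs m hm
    have h1 : (hasseDeriv m f).eval (s : ℚ_[p]) = ∑ y, ∑ i ∈ antidiagonal m,
        (v y : ℚ_[p]) ^ m₁ * (((m₀ + i.1).choose i.1 : ℚ_[p]) *
          (hasseDeriv (m₀ + i.1) (P y)).eval (s : ℚ_[p]) *
          ((u * v y) ^ i.2 / i.2.factorial * (E y (I - i.2)).eval (s : ℚ_[p]))) := by
      simp only [f]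
      rw [map_sum, eval_finsetSum]
      refine sum_congr rfl fun y _ => ?_
      rw [← smul_eq_C_mul, LinearMap.map_smul, eval_smul, hasseDeriv_mul, eval_finsetSum,
        smul_eq_mul, mul_sum]
      refine sum_congr rfl fun i hi => ?_
      have him := mem_antidiagonal.1 hi
      have h2 : hasseDeriv i.1 (hasseDeriv m₀ (P y)) =
          (m₀ + i.1).choose i.1 • hasseDeriv (m₀ + i.1) (P y) := by
        have := LinearMap.congr_fun (hasseDeriv_comp (R := ℚ_[p]) i.1 m₀) (P y)
        rw [LinearMap.comp_apply, LinearMap.smul_apply] at this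
        rw [this, add_comm m₀]
      have h3 : I = i.2 + (I - i.2) := by omega
      rw [eval_mul, h2]
      conv_lhs => rw [h3]
      simp only [E]
      rw [hasseDeriv_expTrunc_eval, eval_smul, nsmul_eq_mul]
    have h2 : (hasseDeriv m f).eval (s : ℚ_[p]) = ∑ i ∈ antidiagonal m,
        (((m₀ + i.1).choose i.1 : ℚ_[p]) * (u ^ i.2 / i.2.factorial) *
          ∑ y, (hasseDeriv (m₀ + i.1) (P y)).eval (s : ℚ_[p]) * (v y : ℚ_[p]) ^ (m₁ + i.2) *
            NormedSpace.exp u ^ (v y * s) -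
        ∑ y, (v y : ℚ_[p]) ^ m₁ * (((m₀ + i.1).choose i.1 : ℚ_[p]) *
          (hasseDeriv (m₀ + i.1) (P y)).eval (s : ℚ_[p]) *
          ((u * v y) ^ i.2 / i.2.factorial * (NormedSpace.exp u ^ (v y * s) -
            (E y (I - i.2)).eval (s : ℚ_[p]))))) := by
      rw [h1, sum_comm]
      refine sum_congr rfl fun i _ => ?_
      rw [mul_sum, ← sum_sub_distrib]
      refine sum_congr rfl fun y _ => ?_
      rw [mul_pow, pow_add]
      ring
    rw [h2]
    refine IsUltrametricDist.norm_sum_le_of_forall_le_of_nonneg hε.le fun i hi => ?_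
    have him := mem_antidiagonal.1 hi
    rw [sub_eq_add_neg]
    have hfac : ∀ w : ℚ_[p], ‖w‖ ≤ expRadius p → ‖w ^ i.2 / i.2.factorial‖ ≤ (√3)⁻¹ ^ i.2 :=
      fun w hw => norm_pow_div_factorial_le hw _
    refine padic_norm_add_le ?_ ?_
    · rw [norm_mul, norm_mul]
      have h4 := h s hs (m₀ + i.1) (by omega) (m₁ + i.2) (by omega)
      have h5 : ‖((m₀ + i.1).choose i.1 : ℚ_[p])‖ * ‖u ^ i.2 / i.2.factorial‖ ≤ 1 :=
        mul_le_one₀ (padic_norm_natCast_le_one _) (norm_nonneg _) ((hfac u hu).trans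
          (pow_le_one₀ (by positivity) inv_sqrt_three_lt_one.le))
      exact (mul_le_of_le_one_left (norm_nonneg _) h5).trans h4
    · rw [norm_neg]
      refine IsUltrametricDist.norm_sum_le_of_forall_le_of_nonneg hε.le fun y _ => ?_
      refine le_trans ?_ (hI I (by omega))
      rw [norm_mul, norm_mul, norm_mul, norm_mul]
      have h6 : (√3 : ℝ)⁻¹ ^ I = (√3)⁻¹ ^ i.2 * (√3)⁻¹ ^ (I - i.2) := by
        rw [← pow_add]; congr 1; omega
      rw [h6]
      calc _ ≤ 1 * (1 * c * ((√3)⁻¹ ^ i.2 * (√3)⁻¹ ^ (I - i.2))) := by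
            gcongr
            · exact hvn y m₁
            · exact padic_norm_natCast_le_one _
            · exact hPe _ y s
            · exact hfac _ (huv y)
            · exact hE y _ s
        _ = _ := by ring
  have hmain := padic_schwarz one_le_sqrt_three hε.le hf S M hdata z
  have herr : ‖(∑ y, (hasseDeriv m₀ (P y)).eval (z : ℚ_[p]) * (v y : ℚ_[p]) ^ m₁ *
      NormedSpace.exp u ^ (v y * z)) - f.eval (z : ℚ_[p])‖ ≤ ε := by
    simp only [f]
    rw [eval_finsetSum, ← sum_sub_distrib]
    refine IsUltrametricDist.norm_sum_le_of_forall_le_of_nonneg hε.le fun y _ => ?_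
    refine le_trans ?_ (hI I (by omega))
    rw [eval_mul, eval_C, eval_mul]
    calc _ = ‖(v y : ℚ_[p]) ^ m₁ * ((hasseDeriv m₀ (P y)).eval (z : ℚ_[p]) *
          (NormedSpace.exp u ^ (v y * z) - (E y I).eval (z : ℚ_[p])))‖ := by congr 1; ring
      _ ≤ 1 * (c * (√3)⁻¹ ^ I) := by
        rw [norm_mul, norm_mul]
        gcongr
        · exact hvn y m₁
        · exact hPe _ y z
        · exact hE y I z
      _ = _ := one_mul _
  have hfin := padic_norm_add_le (c := max (c / √3 ^ (S * M)) (ε * 4 ^ (S * M)))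
    (herr.trans (le_trans (le_mul_of_one_le_right hε.le (one_le_pow₀ (by norm_num)))
      (le_max_right _ _))) hmain
  simpa using hfin

theorem gaussBound_X_sub_natCast {r : ℝ} (hr : 1 ≤ r) (n : ℕ) :
    GaussBound r r (X - (n : ℚ_[p][X])) := by
  rw [← C_eq_natCast]
  rintro (_ | _ | b)
  · simpa using (padic_norm_natCast_le_one n).trans hr
  · simp
  · simp only [coeff_sub, coeff_X_of_ne_one (show b + 1 + 1 ≠ 1 by omega), coeff_C_succ]
    simp
    linarith

theorem gaussBound_descPochhammer {r : ℝ} (hr : 1 ≤ r) (n : ℕ) :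
    GaussBound r (r ^ n) (descPochhammer ℚ_[p] n) := by
  induction n with
  | zero => 
    rw [descPochhammer_zero, pow_zero, ← C_1]
    exact GaussBound.const (by simp)
  | succ n ih =>
    rw [descPochhammer_succ_right, pow_succ]
    exact ih.mul (by linarith) (gaussBound_X_sub_natCast hr n)

theorem gaussBound_binomPoly {r : ℝ} (hr : 1 ≤ r) (n : ℕ) :
    GaussBound r ((2 * r) ^ n) ((binomPoly n).map (algebraMap ℚ ℚ_[p])) := by
  rw [binomPoly, Polynomial.map_mul, map_C, descPochhammer_map, mul_pow]
  refine (GaussBound.const ?_).mul (by linarith) (gaussBound_descPochhammer hr n)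
  simpa using inv_norm_factorial_le (p := p) n

theorem GaussBound.pow {r c : ℝ} (hr : 0 < r) {f : ℚ_[p][X]} (hf : GaussBound r c f) (n : ℕ) :
    GaussBound r (c ^ n) (f ^ n) := by
  induction n with
  | zero =>
    rw [pow_zero, pow_zero, ← C_1]
    exact GaussBound.const (by simp)
  | succ n ih =>
    rw [pow_succ, pow_succ]
    exact ih.mul hr hf

theorem gaussBound_feldmanPoly {r : ℝ} (hr : 1 ≤ r) (h i : ℕ) :
    GaussBound r ((2 * r) ^ i) ((feldmanPoly h i).map (algebraMap ℚ ℚ_[p])) := by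
  have := ((gaussBound_binomPoly (p := p) hr h).pow (by linarith) (i / h)).mul (by linarith)
    (gaussBound_binomPoly (p := p) hr (i % h))
  rwa [← pow_mul, ← pow_add, Nat.div_add_mod, ← Polynomial.map_pow, ← Polynomial.map_mul] at this

end Extrapolation

attribute [local instance] Matrix.seminormedAddCommGroup in
theorem exists_ne_zero_int_vec_abs_le {ι κ : Type*} [Fintype ι] [Fintype κ] (A : ι → κ → ℤ)
    {C : ℕ} (hC : 1 ≤ C) (hA : ∀ i k, |A i k| ≤ C) (hι : 0 < Fintype.card ι)
    (hκ : 2 * Fintype.card ι ≤ Fintype.card κ) :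
    ∃ t : κ → ℤ, t ≠ 0 ∧ (∀ i, ∑ k, A i k * t k = 0) ∧ ∀ k, |t k| ≤ Fintype.card κ * C := by
  classical
  obtain ⟨t, ht, h0, hle⟩ := Int.Matrix.exists_ne_zero_int_vec_norm_le (Matrix.of A)
    (by omega) hι
  refine ⟨t, ht, fun i => ?_, fun k => ?_⟩
  · simpa [Matrix.mulVec, dotProduct] using congrFun h0 i
  have hnorm : ‖Matrix.of A‖ ≤ C := by
    rw [Matrix.norm_le_iff (by positivity)]
    intro i k
    rw [Matrix.of_apply, Int.norm_eq_abs]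
    exact_mod_cast hA i k
  have hκ1 : (1 : ℝ) ≤ Fintype.card κ := by exact_mod_cast (by omega : 1 ≤ Fintype.card κ)
  have hC1 : (1 : ℝ) ≤ C := by exact_mod_cast hC
  have hκ2 : (2 : ℝ) * Fintype.card ι ≤ Fintype.card κ := by exact_mod_cast hκ
  have hι1 : (0 : ℝ) < Fintype.card ι := by exact_mod_cast hι
  have : ‖t‖ ≤ Fintype.card κ * C := by
    refine hle.trans ?_
    calc _ ≤ ((Fintype.card κ : ℝ) * max 1 ‖Matrix.of A‖) ^ (1 : ℝ) := by
          refine Real.rpow_le_rpow_of_exponent_le ?_ ?_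
          · exact one_le_mul_of_one_le_of_one_le hκ1 (le_max_left _ _)
          · rw [div_le_one (by linarith)]
            linarith
      _ ≤ _ := by
          rw [Real.rpow_one]
          gcongr
          exact max_le hC1 hnorm
  have hk := (norm_le_pi_norm t k).trans this
  rw [Int.norm_eq_abs] at hk
  exact_mod_cast hk

theorem one_le_abs_mul_padic_norm (p : ℕ) [hp : Fact p.Prime] {a : ℤ} (ha : a ≠ 0) :
    1 ≤ (|a| : ℝ) * ‖(a : ℚ_[p])‖ := by
  rw [Padic.norm_eq_zpow_neg_valuation (by exact_mod_cast ha), Padic.valuation_intCast,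
    zpow_neg, zpow_natCast, ← div_eq_mul_inv, one_le_div (by have := hp.1.pos; positivity)]
  have h : ((p ^ padicValInt p a : ℕ) : ℤ) ∣ |a| := by
    rw [dvd_abs]
    push_cast
    exact padicValInt_dvd a
  have := Int.le_of_dvd (abs_pos.2 ha) h
  exact_mod_cast this

theorem abs_auxiliary_entry_le {d h l V B Z T z m₀ m₁ y : ℕ} {g b : ℤ} (hd : 1 ≤ d) (hV : 1 ≤ V)
    (hB : 1 ≤ B) (hg : |g| ≤ (d : ℤ) ^ m₀ * ((z + h).choose h : ℤ) ^ l) (hy : y ≤ V)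
    (hb : |b| ≤ B) (hz : z ≤ Z) (hm₀ : m₀ ≤ T) (hm₁ : m₁ ≤ T) :
    |g * (y : ℤ) ^ m₁ * b ^ z| ≤ ((d ^ T * (Z + h).choose h ^ l * V ^ T * B ^ Z : ℕ) : ℤ) := by
  have hd' : (1 : ℤ) ≤ d := by exact_mod_cast hd
  have hV' : (1 : ℤ) ≤ V := by exact_mod_cast hV
  have hB' : (1 : ℤ) ≤ B := by exact_mod_cast hB
  have hy' : (y : ℤ) ≤ V := by exact_mod_cast hy
  rw [abs_mul, abs_mul, abs_pow, abs_pow, abs_of_nonneg (by positivity : (0 : ℤ) ≤ y)]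
  push_cast
  have hchoose : ((z + h).choose h : ℤ) ≤ (Z + h).choose h := by
    exact_mod_cast Nat.choose_le_choose h (by omega)
  have h1 : (d : ℤ) ^ m₀ ≤ d ^ T := pow_le_pow_right₀ hd' hm₀
  have h2 : (y : ℤ) ^ m₁ ≤ V ^ T :=
    (pow_le_pow_left₀ (by positivity) hy' _).trans (pow_le_pow_right₀ hV' hm₁)
  have h3 : |b| ^ z ≤ (B : ℤ) ^ Z :=
    (pow_le_pow_left₀ (abs_nonneg _) hb _).trans (pow_le_pow_right₀ hB' hz)
  have h4 : |g| ≤ (d : ℤ) ^ T * ((Z + h).choose h : ℤ) ^ l := hg.trans (by gcongr)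
  gcongr

theorem padic_norm_le_of_pow_dvd {p ν : ℕ} [hp : Fact p.Prime] {a : ℤ} (h : (p : ℤ) ^ ν ∣ a) :
    ‖(a : ℚ_[p])‖ ≤ ((p : ℝ) ^ ν)⁻¹ := by
  have := (Padic.norm_int_le_pow_iff_dvd (p := p) a ν).2 (by exact_mod_cast h)
  rwa [zpow_neg, zpow_natCast] at this

theorem not_pow_dvd_of_auxiliary_inequalities {p : ℕ} [hp : Fact p.Prime]
    {J K h l d S S' M M₁ M₂ R V B ν : ℕ} {θ x : ℤ} {γ : Fin K → ℤ} {s : Fin K → ℕ}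
    (hh : 0 < h) (hd : 1 ≤ d) (hdvd : ∀ i, 1 ≤ i → i ≤ h → i ∣ d)
    (hθ : ‖(θ : ℚ_[p]) - 1‖ ≤ expRadius p) (hθ1 : 1 < |θ|) (hx : ¬ (p : ℤ) ∣ x)
    (hγ0 : ∀ k, γ k ≠ 0)
    (hs : Function.Injective fun y : Fin J × Fin K => (y.1 : ℕ) + s y.2)
    (hV1 : 1 ≤ V) (hV : ∀ (j : Fin J) k, (j : ℕ) + s k ≤ V)
    (hB1 : 1 ≤ B) (hB : ∀ (j : Fin J) k, |θ ^ (j : ℕ) * γ k| ≤ B)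
    (hS0 : 0 < S) (hM0 : 0 < M) (hSiegel : 2 * (S * (2 * M) ^ 2) ≤ l * h * (J * K))
    (hM : M₁ + M₂ ≤ M) (hM₁ : K ≤ M₁) (hR : K * J ≤ R * (M₁ - K))
    (hS : l * h ≤ (S' - R) * M) (hS' : J * K * (l * h) ≤ (S' - R) * M₂ * M)
    {W : ℕ} (hW : W = (l * h * (J * K)) ^ 2 * (d ^ (2 * M) * (S + h).choose h ^ l * V ^ (2 * M) * B ^ S)
      * (d ^ M * (S' + h).choose h ^ l * V ^ M * B ^ S'))
    (h₁ : (W : ℝ) * (2 * √3) ^ (l * h) < √3 ^ (S * M))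
    (h₂ : (W : ℝ) * d ^ (2 * M) * 4 ^ (S * M) < p ^ ν) :
    ¬ ∀ k, (p : ℤ) ^ ν ∣ γ k - x * θ ^ s k := by
  intro hγ
  have hp0 : (0 : ℝ) < p := by exact_mod_cast hp.1.pos
  choose g hg hgle using fun (i : Fin (l * h)) z m =>
    exists_int_hasseDeriv_feldmanPoly (m := m) (z := z) hh hdvd i.2
  set v : Fin J × Fin K → ℕ := fun y => (y.1 : ℕ) + s y.2 with hv
  set b : Fin J × Fin K → ℤ := fun y => θ ^ (y.1 : ℕ) * γ y.2 with hb
  let E : ℕ → ℕ → ℕ → Fin (l * h) × (Fin J × Fin K) → ℤ :=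
    fun z m₀ m₁ w => g w.1 z m₀ * (v w.2 : ℤ) ^ m₁ * b w.2 ^ z
  have hE : ∀ {z m₀ m₁ Z T : ℕ} w, z ≤ Z → m₀ ≤ T → m₁ ≤ T → |E z m₀ m₁ w| ≤
      ((d ^ T * (Z + h).choose h ^ l * V ^ T * B ^ Z : ℕ) : ℤ) := fun {z m₀ m₁ Z T} w hz h0 h1 =>
    abs_auxiliary_entry_le hd hV1 hB1 (hgle w.1 z m₀) (hV _ _) (hB _ _) hz h0 h1
  obtain ⟨c, hc0, hcE, hcle⟩ := exists_ne_zero_int_vec_abs_le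
    (ι := Fin S × Fin (2 * M) × Fin (2 * M)) (fun q => E q.1 q.2.1 q.2.2)
    (C := d ^ (2 * M) * (S + h).choose h ^ l * V ^ (2 * M) * B ^ S)
    (by
      have : 1 ≤ (S + h).choose h := Nat.choose_pos (by omega)
      exact Nat.one_le_iff_ne_zero.2 (by positivity))
    (fun q w => hE w q.1.2.le q.2.1.2.le q.2.2.2.le) (by simp [hS0, hM0])
    (by simp only [Fintype.card_prod, Fintype.card_fin]; nlinarith)
  simp only [Fintype.card_prod, Fintype.card_fin] at hcle
  let A : ℕ → ℕ → ℕ → ℤ := fun z m₀ m₁ => ∑ w, E z m₀ m₁ w * c w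
  have hA0 : ∀ z < S, ∀ m₀ < 2 * M, ∀ m₁ < 2 * M, A z m₀ m₁ = 0 := fun z hz m₀ h0 m₁ h1 =>
    hcE (⟨z, hz⟩, ⟨m₀, h0⟩, ⟨m₁, h1⟩)
  have hAle : ∀ z < S', ∀ m₀ < M, ∀ m₁ < M, |A z m₀ m₁| ≤ W := by
    intro z hz m₀ h0 m₁ h1
    calc |A z m₀ m₁| ≤ ∑ w, |E z m₀ m₁ w * c w| := abs_sum_le_sum_abs _ _
      _ ≤ ∑ w : Fin (l * h) × (Fin J × Fin K),
          ((d ^ M * (S' + h).choose h ^ l * V ^ M * B ^ S' : ℕ) : ℤ) * (((l * h * (J * K) : ℕ) : ℤ) *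
            ((d ^ (2 * M) * (S + h).choose h ^ l * V ^ (2 * M) * B ^ S : ℕ) : ℤ)) := by
          refine sum_le_sum fun w _ => ?_
          rw [abs_mul]
          exact mul_le_mul (hE w hz.le h0.le h1.le) (hcle w) (abs_nonneg _) (by positivity)
      _ = W := by
          rw [sum_const, card_univ, hW]
          simp only [Fintype.card_prod, Fintype.card_fin, nsmul_eq_mul]
          push_cast
          ring
  let F : Fin J × Fin K → ℚ[X] := fun y => ∑ i : Fin (l * h), C (c (i, y) : ℚ) * feldmanPoly h i
  have hAF : ∀ z m₀ m₁, (A z m₀ m₁ : ℚ) =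
      d ^ m₀ * ∑ y, (hasseDeriv m₀ (F y)).eval (z : ℚ) * (v y : ℚ) ^ m₁ * (b y : ℚ) ^ z := by
    intro z m₀ m₁
    simp only [A, E]
    push_cast
    rw [Fintype.sum_prod_type_right, mul_sum]
    refine sum_congr rfl fun y _ => ?_
    simp only [F, map_sum, eval_finsetSum, sum_mul, mul_sum]
    refine sum_congr rfl fun i _ => ?_
    rw [← hg, ← smul_eq_C_mul, map_smul, eval_smul, smul_eq_mul]
    ring
  let P : Fin J × Fin K → ℚ_[p][X] := fun y => (F y).map (algebraMap ℚ ℚ_[p])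
  have hPF : ∀ m y (z : ℕ), (hasseDeriv m (P y)).eval (z : ℚ_[p]) =
      (((hasseDeriv m (F y)).eval (z : ℚ) : ℚ) : ℚ_[p]) := by
    intro m y z
    have hmap : hasseDeriv m (P y) = (hasseDeriv m (F y)).map (algebraMap ℚ ℚ_[p]) := by
      ext k
      simp [P, hasseDeriv_coeff]
    rw [hmap, ← map_natCast (algebraMap ℚ ℚ_[p]) z, eval_map_algebraMap, aeval_algebraMap_apply]
    simp
  have hP : ∀ y, GaussBound (√3) ((2 * √3) ^ (l * h)) (P y) := by
    intro y
    simp only [P, F, Polynomial.map_sum, Polynomial.map_mul, map_C]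
    refine GaussBound.sum (by positivity) (by positivity) fun i _ => ?_
    have h1 : GaussBound (√3) 1 (C (algebraMap ℚ ℚ_[p] (c (i, y) : ℚ))) := by
      refine GaussBound.const ?_
      rw [map_intCast]
      exact Padic.norm_int_le_one _
    have h2 := h1.mul (by positivity) (gaussBound_feldmanPoly (p := p) one_le_sqrt_three h i)
    intro k
    refine (h2 k).trans ?_
    rw [one_mul]
    exact pow_le_pow_right₀ (by linarith [one_le_sqrt_three]) i.2.le
  -- the congruence between the two families of values
  have hcong : ∀ z m₀ m₁, ‖(A z m₀ m₁ : ℚ_[p]) - (x : ℚ_[p]) ^ z * (d : ℚ_[p]) ^ m₀ *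
      ∑ y, (hasseDeriv m₀ (P y)).eval (z : ℚ_[p]) * (v y : ℚ_[p]) ^ m₁ *
        (θ : ℚ_[p]) ^ (v y * z)‖ ≤ ((p : ℝ) ^ ν)⁻¹ := by
    intro z m₀ m₁
    have : (A z m₀ m₁ : ℚ_[p]) - (x : ℚ_[p]) ^ z * (d : ℚ_[p]) ^ m₀ *
      ∑ y, (hasseDeriv m₀ (P y)).eval (z : ℚ_[p]) * (v y : ℚ_[p]) ^ m₁ *
        (θ : ℚ_[p]) ^ (v y * z) =
        ((∑ w : Fin (l * h) × (Fin J × Fin K), g w.1 z m₀ * (v w.2 : ℤ) ^ m₁ * c w *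
          (b w.2 ^ z - (x * θ ^ v w.2) ^ z) : ℤ) : ℚ_[p]) := by
      have hsum : ((d : ℚ_[p]) ^ m₀ * ∑ y, (hasseDeriv m₀ (P y)).eval (z : ℚ_[p]) *
          (v y : ℚ_[p]) ^ m₁ * (θ : ℚ_[p]) ^ (v y * z)) =
          ∑ w : Fin (l * h) × (Fin J × Fin K), (g w.1 z m₀ : ℚ_[p]) * (v w.2 : ℚ_[p]) ^ m₁ *
            c w * ((θ : ℚ_[p]) ^ v w.2) ^ z := by
        rw [mul_sum, Fintype.sum_prod_type_right (fun w : Fin (l * h) × (Fin J × Fin K) =>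
          (g w.1 z m₀ : ℚ_[p]) * (v w.2 : ℚ_[p]) ^ m₁ * c w * ((θ : ℚ_[p]) ^ v w.2) ^ z)]
        refine sum_congr rfl fun y _ => ?_
        have hy : (d : ℚ_[p]) ^ m₀ * (hasseDeriv m₀ (P y)).eval (z : ℚ_[p]) =
            ∑ i : Fin (l * h), (g i z m₀ : ℚ_[p]) * c (i, y) := by
          have hq : (d : ℚ) ^ m₀ * (hasseDeriv m₀ (F y)).eval (z : ℚ) =
              ∑ i : Fin (l * h), (g i z m₀ : ℚ) * c (i, y) := by
            simp only [F, map_sum, eval_finsetSum, mul_sum]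
            refine sum_congr rfl fun i _ => ?_
            rw [← hg, ← smul_eq_C_mul, map_smul, eval_smul, smul_eq_mul]
            ring
          rw [hPF]
          exact_mod_cast congrArg (fun q : ℚ => (q : ℚ_[p])) hq
        rw [← mul_assoc, ← mul_assoc, hy, pow_mul, sum_mul, sum_mul]
        refine sum_congr rfl fun i _ => ?_
        ring
      rw [mul_assoc, hsum, mul_sum]
      simp only [A, E]
      push_cast
      rw [← sum_sub_distrib]
      refine sum_congr rfl fun w _ => ?_
      rw [mul_pow]
      ring
    rw [this]
    refine padic_norm_le_of_pow_dvd (dvd_sum fun w _ => Dvd.dvd.mul_left ?_ _)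
    refine dvd_trans ?_ (sub_dvd_pow_sub_pow _ _ z)
    convert (hγ w.2.2).mul_left (θ ^ (w.2.1 : ℕ)) using 1
    simp only [hb, hv]
    ring
  have hxn : ‖(x : ℚ_[p])‖ = 1 := by
    refine le_antisymm (Padic.norm_int_le_one _) (not_lt.1 fun hlt => hx ?_)
    exact Padic.norm_intCast_lt_one_iff.1 hlt
  have hdn : ∀ m, ((d : ℝ) ^ m)⁻¹ ≤ ‖(d : ℚ_[p])‖ ^ m := by
    intro m
    have hd0 : (0 : ℝ) < d := by exact_mod_cast hd
    rw [← inv_pow]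
    refine pow_le_pow_left₀ (by positivity) ?_ m
    have := one_le_abs_mul_padic_norm p (a := (d : ℤ)) (by omega)
    push_cast at this
    rw [abs_of_pos hd0] at this
    rwa [inv_le_iff_one_le_mul₀' hd0]
  have hmain : ∀ z < S', ∀ m₀ < M, ∀ m₁ < M, A z m₀ m₁ = 0 := by
    intro z hz m₀ h0 m₁ h1
    by_contra hA
    have hext := padic_extrapolation P v hθ (c := (2 * √3) ^ (l * h))
      (ε := ((p : ℝ) ^ ν)⁻¹ * d ^ (2 * M)) (by positivity) hP (by positivity) S M (2 * M) m₀ m₁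
      (by omega) (by omega) (by
        intro z' hz' a ha b' hb'
        have := hcong z' a b'
        rw [hA0 z' hz' a ha b' hb', Int.cast_zero, zero_sub, norm_neg, norm_mul, norm_mul,
          norm_pow, hxn, one_pow, one_mul, norm_pow] at this
        have hd0 : (1 : ℝ) ≤ d := by exact_mod_cast hd
        have hle : ((d : ℝ) ^ (2 * M))⁻¹ ≤ ‖(d : ℚ_[p])‖ ^ a :=
          le_trans (inv_anti₀ (by positivity) (pow_le_pow_right₀ hd0 ha.le)) (hdn a)
        have := (mul_le_mul_of_nonneg_right hle (norm_nonneg _)).trans this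
        rwa [inv_mul_le_iff₀ (by positivity), mul_comm] at this) z
    have h1A := one_le_abs_mul_padic_norm p hA
    have hWA : (|A z m₀ m₁| : ℝ) ≤ W := by exact_mod_cast hAle z hz m₀ h0 m₁ h1
    have hnA : ‖(A z m₀ m₁ : ℚ_[p])‖ ≤
        max ((2 * √3) ^ (l * h) / √3 ^ (S * M)) (((p : ℝ) ^ ν)⁻¹ * d ^ (2 * M) * 4 ^ (S * M)) := by
      have hd1 : (1 : ℝ) ≤ (d : ℝ) ^ (2 * M) * 4 ^ (S * M) :=
        one_le_mul_of_one_le_of_one_le (one_le_pow₀ (by exact_mod_cast hd))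
          (one_le_pow₀ (by norm_num))
      rw [← sub_add_cancel (A z m₀ m₁ : ℚ_[p]) ((x : ℚ_[p]) ^ z * (d : ℚ_[p]) ^ m₀ *
        ∑ y, (hasseDeriv m₀ (P y)).eval (z : ℚ_[p]) * (v y : ℚ_[p]) ^ m₁ *
        (θ : ℚ_[p]) ^ (v y * z))]
      refine padic_norm_add_le ((hcong z m₀ m₁).trans (le_max_of_le_right ?_)) ?_
      · rw [mul_assoc]
        exact le_mul_of_one_le_right (by positivity) hd1
      · rw [norm_mul, norm_mul, norm_pow, norm_pow, hxn, one_pow, one_mul]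
        refine le_trans (mul_le_of_le_one_left (norm_nonneg _) ?_) hext
        exact pow_le_one₀ (norm_nonneg _) (padic_norm_natCast_le_one _)
    have h1W := h1A.trans (mul_le_mul hWA hnA (norm_nonneg _) (by positivity))
    rw [mul_max_of_nonneg _ _ (by positivity)] at h1W
    rcases le_max_iff.1 h1W with h3 | h3
    · rw [mul_div_assoc', one_le_div (by positivity)] at h3
      linarith
    · rw [mul_assoc, mul_left_comm, le_inv_mul_iff₀ (by positivity), mul_one, ← mul_assoc] at h3
      linarith
  have hF0 : F = 0 := by
    refine eq_zero_of_exponential_polynomial_vanishing J K (l * h) M₁ M₂ M R S' s hs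
      (fun k => (γ k : ℚ)) (fun k => by exact_mod_cast hγ0 k) (θ : ℚ) (by exact_mod_cast hθ1) F
      ?_ ?_ hM₁ hR hS hS'
    · intro y
      have hlh : 0 < l * h := by
        by_contra h0
        have : l * h = 0 := by omega
        rw [this, zero_mul] at hSiegel
        have : 0 < 2 * (S * (2 * M) ^ 2) := by positivity
        omega
      refine (natDegree_sum_le_of_forall_le (n := l * h - 1) _ _ fun i _ => ?_).trans_lt (by omega)
      refine (natDegree_C_mul_le _ _).trans ?_
      rw [natDegree_feldmanPoly]
      omega
    · intro z hz a ha m hm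
      have := hAF z a m
      rw [hmain z hz a ha m (by omega), Int.cast_zero, eq_comm, mul_eq_zero] at this
      have hd0 : (d : ℚ) ≠ 0 := by exact_mod_cast (by omega : d ≠ 0)
      rcases this with h0 | h0
      · exact absurd h0 (pow_ne_zero _ hd0)
      · simpa only [hb, hv, Int.cast_mul, Int.cast_pow] using h0
  refine hc0 (funext fun w => ?_)
  have := congrFun hF0 w.2
  have hli := (linearIndependent_feldmanPoly h).comp (fun i : Fin (l * h) => (i : ℕ))
    Fin.val_injective
  rw [Fintype.linearIndependent_iff] at hli
  have h0 := hli (fun i => (c (i, w.2) : ℚ)) (by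
    simpa only [F, ← smul_eq_C_mul, Pi.zero_apply, Function.comp_apply] using this) w.1
  exact_mod_cast h0

theorem lcmUpto_le_exp (h : ℕ) : (Nat.lcmUpto h : ℝ) ≤ Real.exp (5.39 * h) := by
  have h1 := Chebyshev.psi_le_const_mul_self (x := (h : ℝ)) (by positivity)
  rw [Chebyshev.psi_eq_log_lcmUpto] at h1
  rw [← Real.log_le_iff_le_exp (by exact_mod_cast Nat.lcmUpto_pos _)]
  refine h1.trans ?_
  gcongr
  rw [show (4 : ℝ) = 2 ^ 2 by norm_num, Real.log_pow]
  have := Real.log_two_lt_d9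
  push_cast
  linarith

theorem choose_mul_le_exp {m h : ℕ} (hm : 0 < m) :
    ((m * h).choose h : ℝ) ≤ Real.exp ((Real.log m + 1) * h) := by
  have h1 : ((m * h).choose h : ℝ) ≤ ((m * h : ℕ) : ℝ) ^ h / h.factorial :=
    Nat.choose_le_pow_div h (m * h)
  refine h1.trans ?_
  have h2 := Real.pow_div_factorial_le_exp (x := (h : ℝ)) (by positivity) h
  have hm' : (0 : ℝ) < m := by exact_mod_cast hm
  push_cast
  rw [mul_pow, mul_div_assoc, add_mul, one_mul, Real.exp_add, mul_comm (Real.log m),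
    Real.exp_nat_mul, Real.exp_log hm']
  gcongr

theorem pow_six_le_exp {X : ℝ} (hX : 5040 ≤ X) : X ^ 6 ≤ Real.exp X := by
  have h := Real.pow_div_factorial_le_exp (x := X) (by linarith) 7
  refine le_trans ?_ h
  rw [le_div_iff₀ (by positivity), pow_succ X 6]
  gcongr
  norm_num [Nat.factorial]
  exact hX

theorem exists_exponent_norm_pow_sub_one_le {p : ℕ} [hp : Fact p.Prime] {α : ℤ}
    (hα : ¬ (p : ℤ) ∣ α) :
    ∃ q : ℕ, 1 ≤ q ∧ q ≤ p ∧ ‖((α ^ q : ℤ) : ℚ_[p]) - 1‖ ≤ expRadius p := by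
  by_cases h2 : p = 2
  · subst h2
    refine ⟨2, by norm_num, le_rfl, ?_⟩
    have hodd : Odd α := by
      rw [← Int.not_even_iff_odd, even_iff_two_dvd]
      exact hα
    have h8 : (2 : ℤ) ^ 3 ∣ α ^ 2 - 1 := by
      exact Int.eight_dvd_sq_sub_one_of_odd hodd
    have := padic_norm_le_of_pow_dvd (p := 2) h8
    push_cast at this ⊢
    rw [expRadius, if_pos rfl]
    norm_num at this ⊢
    exact this
  · have hp2 := hp.1.two_le
    refine ⟨p - 1, by omega, by omega, ?_⟩
    have h1 : (p : ℤ) ^ 1 ∣ α ^ (p - 1) - 1 := by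
      rw [pow_one]
      have hc : IsCoprime α (p : ℤ) :=
        ((Nat.prime_iff_prime_int.1 hp.1).coprime_iff_not_dvd.2 hα).symm
      exact (Int.ModEq.pow_card_sub_one_eq_one hp.1 hc).symm.dvd
    have := padic_norm_le_of_pow_dvd (p := p) h1
    push_cast at this ⊢
    rw [expRadius, if_neg h2]
    rwa [pow_one, ← one_div] at this

theorem exp_pow_mul (a : ℝ) (n : ℕ) : Real.exp a ^ n = Real.exp (n * a) := (Real.exp_nat_mul a n).symm

/-- Size of the auxiliary constants for the chosen parameters. -/
theorem auxiliary_product_le {U d c₁ c₂ V B h l : ℕ}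
    (hU : (U : ℝ) ^ 2 ≤ Real.exp (l * h)) (hd : (d : ℝ) ≤ Real.exp (5.39 * h))
    (hc₁ : (c₁ : ℝ) ≤ Real.exp (5.9 * h)) (hc₂ : (c₂ : ℝ) ≤ Real.exp (8.7 * h))
    (hV : (V : ℝ) ≤ Real.exp (2 * h)) (hB : (B : ℝ) ≤ Real.exp (0.017 * l)) :
    ((U ^ 2 * (d ^ (2 * (5 * l)) * c₁ ^ l * V ^ (2 * (5 * l)) * B ^ (80 * h)) *
      (d ^ (5 * l) * c₂ ^ l * V ^ (5 * l) * B ^ (2000 * h)) : ℕ) : ℝ) ≤ Real.exp (165 * (l * h)) := by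
  push_cast
  calc _ ≤ Real.exp (l * h) * (Real.exp (5.39 * h) ^ (2 * (5 * l)) * Real.exp (5.9 * h) ^ l *
          Real.exp (2 * h) ^ (2 * (5 * l)) * Real.exp (0.017 * l) ^ (80 * h)) *
        (Real.exp (5.39 * h) ^ (5 * l) * Real.exp (8.7 * h) ^ l *
          Real.exp (2 * h) ^ (5 * l) * Real.exp (0.017 * l) ^ (2000 * h)) := by
        gcongr
    _ ≤ _ := by
        simp only [exp_pow_mul, ← Real.exp_add]
        rw [Real.exp_le_exp]
        push_cast
        have : (0 : ℝ) ≤ l * h := by positivity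
        nlinarith

theorem auxiliary_inequalities {W d h l : ℕ} (hlh : 0 < l * h)
    (hW : (W : ℝ) ≤ Real.exp (165 * (l * h))) (hd : (d : ℝ) ≤ Real.exp (5.39 * h)) :
    (W : ℝ) * (2 * √3) ^ (l * h) < √3 ^ (80 * h * (5 * l)) ∧
    ∀ p ν : ℕ, 2 ≤ p → 1200 * (l * h) ≤ ν →
      (W : ℝ) * d ^ (2 * (5 * l)) * 4 ^ (80 * h * (5 * l)) < p ^ ν := by
  have hX : (0 : ℝ) < l * h := by exact_mod_cast hlh
  have h4 : (4 : ℝ) ≤ Real.exp 1.387 := by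
    rw [← Real.log_le_iff_le_exp (by norm_num), show (4 : ℝ) = 2 ^ 2 by norm_num, Real.log_pow]
    have := Real.log_two_lt_d9
    push_cast
    linarith
  have h2 : Real.exp 0.693 ≤ 2 := by
    rw [← Real.le_log_iff_exp_le (by norm_num)]
    have := Real.log_two_gt_d9
    linarith
  constructor
  · have hs : 2 * √3 ≤ 4 := by
      have : √3 ≤ 2 := Real.sqrt_le_iff.2 (by norm_num)
      linarith
    have h3 : √3 ^ (80 * h * (5 * l)) = 3 ^ (200 * (l * h)) := by
      rw [show 80 * h * (5 * l) = 2 * (200 * (l * h)) by ring, pow_mul, Real.sq_sqrt (by norm_num)]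
    have he : Real.exp 1 ≤ 3 := by
      have := Real.exp_one_lt_d9
      linarith
    calc _ ≤ Real.exp (165 * (l * h)) * Real.exp 1.387 ^ (l * h) := by
          gcongr
          exact hs.trans h4
      _ < Real.exp 1 ^ (200 * (l * h)) := by
          rw [exp_pow_mul, exp_pow_mul, ← Real.exp_add, Real.exp_lt_exp]
          push_cast
          linarith
      _ ≤ _ := by
          rw [h3]
          gcongr
  · intro p ν hp hν
    calc _ ≤ Real.exp (165 * (l * h)) * Real.exp (5.39 * h) ^ (2 * (5 * l)) *
            Real.exp 1.387 ^ (80 * h * (5 * l)) := by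
          gcongr
      _ < Real.exp 0.693 ^ (1200 * (l * h)) := by
          simp only [exp_pow_mul, ← Real.exp_add]
          rw [Real.exp_lt_exp]
          push_cast
          nlinarith
      _ ≤ 2 ^ (1200 * (l * h)) := by gcongr
      _ ≤ (2 : ℝ) ^ ν := by gcongr; norm_num
      _ ≤ _ := by
          gcongr
          exact_mod_cast hp

/-- Rounded parameters for the auxiliary construction and the estimates they satisfy. -/
theorem exists_auxiliary_parameters {a η N : ℝ} {q : ℕ} (ha : 0.69 ≤ a) (hη : 1 ≤ η)
    (hN : 18 ≤ N) (hq : 1 ≤ q) :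
    ∃ J K l h : ℕ, N ≤ h ∧ 18 ≤ h ∧ 5040 ≤ l ∧ (J : ℝ) ≤ 2000001 * η ∧ (K : ℝ) ≤ 2000002 * (q * a) ∧
      (q * J * a + K * η ≤ 0.017 * l) ∧ 16000 * l ≤ J * K ∧ J * K ≤ 16000 * (l + 1) ∧
      100 * K ≤ l ∧ 0 < J ∧ 0 < K ∧ 1200 * ((l : ℝ) * h) ≤ 3.2e11 * (q * a * η * N) := by
  have hq1 : (1 : ℝ) ≤ q := by exact_mod_cast hq
  have hqa : 0.69 ≤ q * a := by nlinarith
  have hE : 0.69 ≤ q * a * η := by nlinarith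
  obtain ⟨J, hJ1, hJ2⟩ : ∃ J : ℕ, 2e6 * η ≤ J ∧ (J : ℝ) ≤ 2e6 * η + 1 :=
    ⟨⌈2e6 * η⌉₊, Nat.le_ceil _, (Nat.ceil_lt_add_one (by positivity)).le⟩
  obtain ⟨K, hK1, hK2⟩ : ∃ K : ℕ, 2e6 * (q * a) ≤ K ∧ (K : ℝ) ≤ 2e6 * (q * a) + 1 :=
    ⟨⌈2e6 * (q * a)⌉₊, Nat.le_ceil _, (Nat.ceil_lt_add_one (by positivity)).le⟩
  obtain ⟨h, hh1, hh2⟩ : ∃ h : ℕ, N ≤ h ∧ (h : ℝ) ≤ N + 1 :=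
    ⟨⌈N⌉₊, Nat.le_ceil _, (Nat.ceil_lt_add_one (by linarith)).le⟩
  set l := J * K / 16000 with hl
  have hl1 : 16000 * l ≤ J * K := by omega
  have hl2 : J * K ≤ 16000 * (l + 1) := by omega
  have hl1' : 16000 * (l : ℝ) ≤ J * K := by exact_mod_cast hl1
  have hl2' : (J : ℝ) * K ≤ 16000 * (l + 1) := by exact_mod_cast hl2
  have hJK : 4e12 * (q * a * η) ≤ J * K := by
    calc _ = (2e6 * η) * (2e6 * (q * a)) := by ring
      _ ≤ _ := by gcongr
  have hJ3 : (J : ℝ) ≤ 2000001 * η := by linarith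
  have hK3 : (K : ℝ) ≤ 2000002 * (q * a) := by linarith
  have hJK2 : (J : ℝ) * K ≤ 4.00001e12 * (q * a * η) := by
    calc _ ≤ (2000001 * η) * (2000002 * (q * a)) := by gcongr
      _ = (2000001 * 2000002) * (q * a * η) := by ring
      _ ≤ _ := by gcongr; norm_num
  have hll : 2.49e8 * (q * a * η) ≤ l := by linarith
  have hKl : 100 * (K : ℝ) ≤ l := by nlinarith
  refine ⟨J, K, l, h, hh1, ?_, ?_, hJ3, hK3, ?_, hl1, hl2, ?_, ?_, ?_, ?_⟩
  · exact_mod_cast hN.trans hh1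
  · have : (5040 : ℝ) ≤ l := by linarith
    exact_mod_cast this
  · have h1 : q * J * a ≤ q * (2e6 * η + 1) * a := by gcongr
    have h2 : K * η ≤ (2e6 * (q * a) + 1) * η := by gcongr
    have h3 : q * a ≤ q * a * η := le_mul_of_one_le_right (by linarith) hη
    have h4 : 0.69 * η ≤ q * a * η := by gcongr
    nlinarith
  · exact_mod_cast hKl
  · have : (0 : ℝ) < J := by linarith
    exact_mod_cast this
  · have : (0 : ℝ) < K := by linarith
    exact_mod_cast this
  · have h1 : (h : ℝ) ≤ 19 / 18 * N := by linarith
    calc 1200 * ((l : ℝ) * h) = 0.075 * (16000 * l) * h := by ring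
      _ ≤ 0.075 * (4.00001e12 * (q * a * η)) * (19 / 18 * N) := by
          have := hl1'.trans hJK2
          gcongr ?_ * ?_
          linarith
      _ = (0.075 * 4.00001e12 * (19 / 18)) * (q * a * η * N) := by ring
      _ ≤ _ := by
          gcongr
          norm_num

theorem log_natAbs_le_exp {x : ℤ} {η : ℝ} (hx : x ≠ 0) (h : Real.log |(x : ℝ)| ≤ η) :
    (x.natAbs : ℝ) ≤ Real.exp η := by
  rw [Nat.cast_natAbs, Int.cast_abs]
  exact (Real.log_le_iff_le_exp (by positivity)).1 h

set_option maxHeartbeats 1000000 in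
theorem valuation_le_of_not_dvd {p : ℕ} [hp : Fact p.Prime] {α x y : ℤ} {n ν : ℕ} {η : ℝ}
    (hα : 2 ≤ |α|) (hpα : ¬ (p : ℤ) ∣ α) (hpx : ¬ (p : ℤ) ∣ x) (hy : y ≠ 0)
    (hη : 1 ≤ η) (hαη : Real.log |(α : ℝ)| ≤ η) (hxη : Real.log |(x : ℝ)| ≤ η)
    (hyη : Real.log |(y : ℝ)| ≤ η) (hN : 18 ≤ Real.log n) (hn : 3e6 * (p * η) ≤ n)
    (hν : (p : ℤ) ^ ν ∣ α ^ n * x - y) :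
    (ν : ℝ) ≤ 3.2e11 * (p * Real.log |(α : ℝ)| * η * Real.log n) := by
  set a := Real.log |(α : ℝ)| with ha
  have hx0 : x ≠ 0 := fun h => hpx (h ▸ dvd_zero _)
  have hα0 : α ≠ 0 := fun h => hpα (h ▸ dvd_zero _)
  have ha1 : 0.69 ≤ a := by
    have h2 : (2 : ℝ) ≤ |(α : ℝ)| := by exact_mod_cast hα
    have := Real.log_le_log (by norm_num) h2
    have := Real.log_two_gt_d9
    linarith
  obtain ⟨q, hq1, hqp, hθ⟩ := exists_exponent_norm_pow_sub_one_le hpα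
  obtain ⟨J, K, l, h, hNh, hh18, hl, hJ, hK, hB, hl1, hl2, hKl, hJ0, hK0, hfin⟩ :=
    exists_auxiliary_parameters ha1 hη hN hq1
  have hq1' : (1 : ℝ) ≤ q := by exact_mod_cast hq1
  have hqp' : (q : ℝ) ≤ p := by exact_mod_cast hqp
  have hp2 : (2 : ℝ) ≤ p := by exact_mod_cast hp.1.two_le
  by_contra! hlt
  have hν' : 1200 * (l * h) ≤ ν := by
    have : 3.2e11 * (q * a * η * Real.log n) ≤ 3.2e11 * (p * a * η * Real.log n) := by gcongr
    have : 1200 * ((l : ℝ) * h) ≤ ν := by linarith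
    exact_mod_cast this
  have hn0 : 0 < n := by
    rcases Nat.eq_zero_or_pos n with h0 | h0
    · subst h0; norm_num at hN
    · exact h0
  have hqJ : q * J ≤ n := by
    have : (q : ℝ) * J ≤ n := by
      calc (q : ℝ) * J ≤ p * (2000001 * η) := by gcongr
        _ ≤ 3e6 * (p * η) := by nlinarith
        _ ≤ n := hn
    exact_mod_cast this
  -- `s k` is the rounded-up quotient of `k * n` by `q`
  obtain ⟨s, r, hr, hsr⟩ : ∃ s r : ℕ → ℕ, (∀ k, r k < q) ∧ ∀ k, q * s k = r k + k * n := by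
    have hex : ∀ k : ℕ, ∃ s r : ℕ, r < q ∧ q * s = r + k * n := by
      intro k
      refine ⟨(k * n + (q - 1)) / q, q - 1 - (k * n + (q - 1)) % q, by omega, ?_⟩
      have h1 := Nat.div_add_mod (k * n + (q - 1)) q
      have h2 := Nat.mod_lt (k * n + (q - 1)) (by omega : q > 0)
      omega
    choose s r hr hsr using hex
    exact ⟨s, r, hr, hsr⟩
  set H := max x.natAbs y.natAbs with hH
  have hα1 : 1 ≤ α.natAbs := by omega
  have hHexp : (H : ℝ) ≤ Real.exp η := by
    rw [hH, Nat.cast_max]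
    exact max_le (log_natAbs_le_exp hx0 hxη) (log_natAbs_le_exp hy hyη)
  have hH1 : 1 ≤ H := le_max_of_le_left (by omega)
  have hd := lcmUpto_le_exp h
  have hW := auxiliary_product_le (U := l * h * (J * K)) (d := Nat.lcmUpto h)
    (c₁ := (80 * h + h).choose h) (c₂ := (2000 * h + h).choose h) (V := n ^ 2)
    (B := α.natAbs ^ (q * J) * H ^ K) (h := h) (l := l) ?_ hd ?_ ?_ ?_ ?_
  · obtain ⟨h1, h2⟩ := auxiliary_inequalities (by positivity) hW hd
    refine not_pow_dvd_of_auxiliary_inequalities (p := p) (J := J) (K := K) (h := h) (l := l)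
      (d := Nat.lcmUpto h) (S := 80 * h) (S' := 2000 * h) (M := 5 * l) (M₁ := 2 * l) (M₂ := 3 * l)
      (R := 800 * h) (V := n ^ 2) (B := α.natAbs ^ (q * J) * H ^ K) (ν := ν) (θ := α ^ q)
      (x := x ^ K) (γ := fun k => α ^ r k * x ^ (K - k) * y ^ (k : ℕ)) (s := fun k => s k)
      (by omega) (Nat.lcmUpto_pos h) ?_ hθ ?_ ?_ ?_ ?_ ?_ ?_ ?_ ?_ (by positivity) (by omega)
      ?_ (by omega) (by omega) ?_ ?_ ?_ rfl h1 (h2 p ν hp.1.two_le hν') ?_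
    · intro i hi1 hi2
      exact Finset.dvd_lcm (f := id) (Finset.mem_Icc.2 ⟨hi1, hi2⟩)
    · rw [abs_pow]
      exact one_lt_pow₀ (by omega) (by omega)
    · exact fun hdvd => hpx ((Nat.prime_iff_prime_int.1 hp.1).dvd_of_dvd_pow hdvd)
    · intro k
      positivity
    · rintro ⟨j, k⟩ ⟨j', k'⟩ heq
      simp only at heq
      have h1 : q * (j + s k) = q * (j' + s k') := by rw [heq]
      rw [mul_add, mul_add, hsr, hsr] at h1
      have hlt : ∀ (i : Fin J) (k : ℕ), q * i + r k < n := by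
        intro i k
        have h3 : q * (i + 1) ≤ q * J := Nat.mul_le_mul_left q i.2
        have h4 := hr k
        rw [mul_add, mul_one] at h3
        omega
      have hkk : (k : ℕ) = k' := by
        have h2 : (q * j + r k + n * k) / n = (q * j' + r k' + n * k') / n := by
          congr 1
          linarith
        rwa [Nat.add_mul_div_left _ _ hn0, Nat.add_mul_div_left _ _ hn0,
          Nat.div_eq_of_lt (hlt _ _), Nat.div_eq_of_lt (hlt _ _), zero_add, zero_add] at h2
      have hk2 : k = k' := Fin.ext hkk
      subst hk2
      have hj2 : j = j' := Fin.ext (by omega)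
      rw [hj2]
    · exact Nat.one_le_pow _ _ hn0
    · intro j k
      have h1 : q * (j + s k) ≤ q * n ^ 2 := by
        have h3 : q * (j + 1) ≤ q * J := Nat.mul_le_mul_left q j.2
        have h4 := hr k
        have h5 : (k : ℕ) * n + n ≤ K * n := by
          have := Nat.mul_le_mul_right n k.2
          linarith
        have h6 : K * n ≤ q * n ^ 2 := by
          have h7 : K ≤ q * n := by
            have : (K : ℝ) ≤ q * n := by
              calc (K : ℝ) ≤ 2000002 * (q * a) := hK
                _ ≤ 2000002 * (q * η) := by gcongr
                _ ≤ q * (3e6 * (p * η)) := by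
                    have : 0 ≤ (q : ℝ) * η := by positivity
                    nlinarith
                _ ≤ q * n := by gcongr
            exact_mod_cast this
          calc K * n ≤ q * n * n := Nat.mul_le_mul_right n h7
            _ = _ := by ring
        rw [mul_add, hsr]
        rw [mul_add, mul_one] at h3
        omega
      exact Nat.le_of_mul_le_mul_left h1 (by omega)
    · have := pow_pos (by omega : 0 < α.natAbs) (q * J)
      have := pow_pos (by omega : 0 < H) K
      exact Nat.one_le_iff_ne_zero.2 (by positivity)
    · intro j k
      have hsize : (α.natAbs ^ (q * j + r k) * x.natAbs ^ (K - k) * y.natAbs ^ (k : ℕ)) ≤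
          α.natAbs ^ (q * J) * H ^ K := by
        have h3 : q * (j + 1) ≤ q * J := Nat.mul_le_mul_left q j.2
        have h4 := hr k
        rw [mul_add, mul_one] at h3
        calc _ ≤ α.natAbs ^ (q * J) * H ^ (K - k) * H ^ (k : ℕ) := by
              gcongr
              · omega
              · exact le_max_left _ _
              · exact le_max_right _ _
          _ = _ := by rw [mul_assoc, ← pow_add, Nat.sub_add_cancel k.2.le]
      calc _ = ((α.natAbs ^ (q * j + r k) * x.natAbs ^ (K - k) * y.natAbs ^ (k : ℕ) : ℕ) : ℤ) := by
            push_cast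
            simp only [abs_mul, abs_pow, pow_add, pow_mul]
            ring
        _ ≤ _ := by exact_mod_cast hsize
    · calc 2 * (80 * h * (2 * (5 * l)) ^ 2) = l * h * (16000 * l) := by ring
        _ ≤ _ := Nat.mul_le_mul_left _ hl1
    · have : J * K ≤ 800 * 18 * (2 * l - K) := by omega
      calc K * J = J * K := mul_comm _ _
        _ ≤ 800 * 18 * (2 * l - K) := this
        _ ≤ _ := by gcongr
    · rw [show 2000 * h - 800 * h = 1200 * h by omega]
      calc l * h ≤ 6000 * (l * h) := Nat.le_mul_of_pos_left _ (by norm_num)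
        _ = _ := by ring
    · rw [show 2000 * h - 800 * h = 1200 * h by omega]
      calc J * K * (l * h) ≤ (18000 * l) * (l * h) :=
            Nat.mul_le_mul_right _ (by omega)
        _ = _ := by ring
    · intro k
      have h1 : α ^ r k * x ^ (K - k) * y ^ (k : ℕ) - x ^ K * (α ^ q) ^ s k =
          α ^ r k * x ^ (K - k) * -((α ^ n * x) ^ (k : ℕ) - y ^ (k : ℕ)) := by
        rw [← pow_mul, hsr, mul_pow, ← pow_mul, pow_add, mul_comm n]
        have : x ^ K = x ^ (K - k) * x ^ (k : ℕ) := by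
          rw [← pow_add, Nat.sub_add_cancel k.2.le]
        rw [this]
        ring
      rw [h1]
      exact ((hν.trans (sub_dvd_pow_sub_pow _ _ _)).neg_right).mul_left _
  · have hX : (5040 : ℝ) ≤ l * h := by
      have : 5040 ≤ l * h := by nlinarith
      exact_mod_cast this
    refine le_trans ?_ (pow_six_le_exp hX)
    have h1 : l * h * (J * K) ≤ (l * h) ^ 3 := by
      have h2 : J * K ≤ (l * h) ^ 2 := by
        calc J * K ≤ 18000 * l := by omega
          _ ≤ (l * (18 * 18)) * l := by nlinarith
          _ ≤ (l * (h * h)) * l := by gcongr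
          _ = _ := by ring
      calc _ ≤ l * h * (l * h) ^ 2 := by gcongr
        _ = _ := by ring
    have h2 : ((l * h * (J * K) : ℕ) : ℝ) ≤ ((l : ℝ) * h) ^ 3 := by exact_mod_cast h1
    calc _ ≤ (((l : ℝ) * h) ^ 3) ^ 2 := by gcongr
      _ = _ := by ring
  · rw [show 80 * h + h = 81 * h by ring]
    refine (choose_mul_le_exp (by norm_num)).trans ?_
    gcongr
    have h1 : Real.log ((81 : ℕ) : ℝ) ≤ Real.log (2 ^ 7) :=
      Real.log_le_log (by norm_num) (by norm_num)
    rw [Real.log_pow] at h1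
    have := Real.log_two_lt_d9
    push_cast at h1 ⊢
    linarith
  · rw [show 2000 * h + h = 2001 * h by ring]
    refine (choose_mul_le_exp (by norm_num)).trans ?_
    gcongr
    have h1 : Real.log ((2001 : ℕ) : ℝ) ≤ Real.log (2 ^ 11) :=
      Real.log_le_log (by norm_num) (by norm_num)
    rw [Real.log_pow] at h1
    have := Real.log_two_lt_d9
    push_cast at h1 ⊢
    linarith
  · have h1 : (n : ℝ) ≤ Real.exp h := (Real.log_le_iff_le_exp (by positivity)).1 hNh
    push_cast
    calc (n : ℝ) ^ 2 ≤ Real.exp h ^ 2 := by gcongr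
      _ = _ := by rw [exp_pow_mul]; norm_num
  · have h1 : (α.natAbs : ℝ) ≤ Real.exp a := log_natAbs_le_exp hα0 le_rfl
    push_cast [Nat.cast_natAbs] at h1 ⊢
    calc _ ≤ Real.exp a ^ (q * J) * Real.exp η ^ K := by gcongr
      _ ≤ _ := by
          rw [exp_pow_mul, exp_pow_mul, ← Real.exp_add, Real.exp_le_exp]
          push_cast
          exact hB

theorem mul_le_log_of_pow_dvd {p e : ℕ} (hp : p.Prime) {x : ℤ} (hx : x ≠ 0)
    (h : (p : ℤ) ^ e ∣ x) : 0.69 * (e : ℝ) ≤ Real.log |(x : ℝ)| := by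
  have h1 : (p : ℤ) ^ e ≤ |x| := Int.le_of_dvd (abs_pos.2 hx) ((dvd_abs _ _).2 h)
  have h2 : ((p : ℝ)) ^ e ≤ |(x : ℝ)| := by exact_mod_cast h1
  have hp2 : (2 : ℝ) ≤ p := by exact_mod_cast hp.two_le
  have h3 : (2 : ℝ) ^ e ≤ |(x : ℝ)| := le_trans (by gcongr) h2
  have h4 := Real.log_le_log (by positivity) h3
  rw [Real.log_pow] at h4
  have h5 := Real.log_two_gt_d9
  have : (0 : ℝ) ≤ e := by positivity
  nlinarith

theorem valuation_le_of_small_exponent {p : ℕ} (hp : p.Prime) {α x y : ℤ} {n ν : ℕ} {η : ℝ}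
    (hα : 2 ≤ |α|) (hx : x ≠ 0) (hy : y ≠ 0) (hη : 1 ≤ η) (hxη : Real.log |(x : ℝ)| ≤ η)
    (hyη : Real.log |(y : ℝ)| ≤ η) (hn : (n : ℝ) ≤ 3e6 * (p * η)) (hne : α ^ n * x ≠ y)
    (hν : (p : ℤ) ^ ν ∣ α ^ n * x - y) :
    (ν : ℝ) ≤ 1e7 * (p * Real.log |(α : ℝ)| * η) := by
  have h1 := mul_le_log_of_pow_dvd hp (sub_ne_zero.2 hne) hν
  set a := Real.log |(α : ℝ)| with ha
  have hα2 : (2 : ℝ) ≤ |(α : ℝ)| := by exact_mod_cast hα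
  have ha1 : 0.69 ≤ a := by
    have := Real.log_le_log (by norm_num) hα2
    have := Real.log_two_gt_d9
    linarith
  have hx' : |(x : ℝ)| ≤ Real.exp η := (Real.log_le_iff_le_exp (by positivity)).1 hxη
  have hy' : |(y : ℝ)| ≤ Real.exp η := (Real.log_le_iff_le_exp (by positivity)).1 hyη
  have hα' : |(α : ℝ)| = Real.exp a := (Real.exp_log (by linarith)).symm
  have hlog : Real.log |((α ^ n * x - y : ℤ) : ℝ)| ≤ n * a + η + 1 := by
    have hpos : 0 < |((α ^ n * x - y : ℤ) : ℝ)| := by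
      rw [abs_pos]
      exact_mod_cast sub_ne_zero.2 hne
    rw [Real.log_le_iff_le_exp hpos]
    have h2 : (2 : ℝ) ≤ Real.exp 1 := by
      have := Real.exp_one_gt_d9
      linarith
    have h3 : (1 : ℝ) ≤ Real.exp (n * a) := Real.one_le_exp (by positivity)
    calc |((α ^ n * x - y : ℤ) : ℝ)| ≤ |(α : ℝ)| ^ n * |(x : ℝ)| + |(y : ℝ)| := by
          push_cast
          refine (abs_sub _ _).trans ?_
          rw [abs_mul, abs_pow]
      _ ≤ Real.exp (n * a) * Real.exp η + 1 * Real.exp η := by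
          rw [hα', exp_pow_mul, one_mul]
          gcongr
      _ ≤ Real.exp (n * a) * Real.exp η + Real.exp (n * a) * Real.exp η := by gcongr
      _ = Real.exp (n * a) * Real.exp η * 2 := by ring
      _ ≤ Real.exp (n * a) * Real.exp η * Real.exp 1 := by gcongr
      _ = _ := by rw [← Real.exp_add, ← Real.exp_add]
  have hp2 : (2 : ℝ) ≤ p := by exact_mod_cast hp.two_le
  have h5 : n * a ≤ 3e6 * (p * η) * a := by gcongr
  have h6 : 1.38 * η ≤ p * a * η := by
    gcongr
    nlinarith
  nlinarith

theorem valuation_le {p : ℕ} [hp : Fact p.Prime] {α x y : ℤ} {n ν : ℕ} {η : ℝ}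
    (hα : 2 ≤ |α|) (hx : x ≠ 0) (hy : y ≠ 0)
    (hη : 1 ≤ η) (hαη : Real.log |(α : ℝ)| ≤ η) (hxη : Real.log |(x : ℝ)| ≤ η)
    (hyη : Real.log |(y : ℝ)| ≤ η) (hN : 18 ≤ Real.log n) (hne : α ^ n * x ≠ y)
    (hν : (p : ℤ) ^ ν ∣ α ^ n * x - y) :
    (ν : ℝ) ≤ 3.3e11 * (p * Real.log |(α : ℝ)| * η * Real.log n) := by
  have hα2 : (2 : ℝ) ≤ |(α : ℝ)| := by exact_mod_cast hα
  have hp2 : (2 : ℝ) ≤ p := by exact_mod_cast hp.1.two_le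
  have ha1 : 0.69 ≤ Real.log |(α : ℝ)| := by
    have := Real.log_le_log (by norm_num) hα2
    have := Real.log_two_gt_d9
    linarith
  set a := Real.log |(α : ℝ)| with ha
  have hE : 1.38 * η ≤ p * a * η := by
    gcongr
    nlinarith
  have hEN : p * a * η * 18 ≤ p * a * η * Real.log n := by gcongr
  rcases le_total (n : ℝ) (3e6 * (p * η)) with hn | hn
  · have := valuation_le_of_small_exponent hp.1 hα hx hy hη hxη hyη hn hne hν
    linarith
  have hpη : 2 * η ≤ p * η := by gcongr
  by_cases hpα : (p : ℤ) ∣ α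
  · have hνn : ¬ n ≤ ν := by
      intro hle
      have h1 : (p : ℤ) ^ n ∣ y := by
        have h2 : (p : ℤ) ^ n ∣ α ^ n * x := (pow_dvd_pow_of_dvd hpα n).mul_right x
        exact (dvd_sub_right h2).1 ((pow_dvd_pow _ hle).trans hν)
      have := mul_le_log_of_pow_dvd hp.1 hy h1
      linarith
    have h1 : (p : ℤ) ^ ν ∣ y := by
      have h2 : (p : ℤ) ^ ν ∣ α ^ n * x :=
        (((pow_dvd_pow _ (by omega)).trans (pow_dvd_pow_of_dvd hpα n)).mul_right x)
      exact (dvd_sub_right h2).1 hν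
    have := mul_le_log_of_pow_dvd hp.1 hy h1
    linarith
  obtain ⟨e, x', hpx', hxe⟩ : ∃ (e : ℕ) (x' : ℤ), ¬ (p : ℤ) ∣ x' ∧ x = p ^ e * x' := by
    have hf : FiniteMultiplicity (p : ℤ) x :=
      Int.finiteMultiplicity_iff.2 ⟨by simpa using hp.1.ne_one, hx⟩
    obtain ⟨c, h1, h2⟩ := hf.exists_eq_pow_mul_and_not_dvd
    exact ⟨_, c, h2, h1⟩
  have he := mul_le_log_of_pow_dvd hp.1 hx (Dvd.intro _ hxe.symm)
  have habs : ∀ {z z' : ℤ}, z ≠ 0 → z = p ^ e * z' → Real.log |(z' : ℝ)| ≤ Real.log |(z : ℝ)| := by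
    intro z z' hz hzz
    have hz' : z' ≠ 0 := by
      rintro rfl
      exact hz (by simpa using hzz)
    refine Real.log_le_log (by positivity) ?_
    have : |z'| ≤ |z| := Int.le_of_dvd (abs_pos.2 hz) (abs_dvd_abs _ _ |>.2 (Dvd.intro_left _ hzz.symm))
    exact_mod_cast this
  by_cases hey : (p : ℤ) ^ e ∣ y
  · obtain ⟨y', hy'⟩ := hey
    rcases le_total ν e with hle | hle
    · have : (ν : ℝ) ≤ e := by exact_mod_cast hle
      linarith
    obtain ⟨μ, rfl⟩ := Nat.exists_eq_add_of_le hle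
    have hμ : (p : ℤ) ^ μ ∣ α ^ n * x' - y' := by
      have h1 : α ^ n * x - y = p ^ e * (α ^ n * x' - y') := by
        rw [hxe, hy']
        ring
      rw [h1, pow_add] at hν
      exact Int.dvd_of_mul_dvd_mul_left (pow_ne_zero _ (by exact_mod_cast hp.1.ne_zero)) hν
    have hy0 : y' ≠ 0 := by
      rintro rfl
      exact hy (by simpa using hy')
    have := valuation_le_of_not_dvd hα hpα hpx' hy0 hη hαη ((habs hx hxe).trans hxη)
      ((habs hy hy').trans hyη) hN hn hμ
    push_cast
    linarith
  · have hlt : ¬ e ≤ ν := by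
      intro hle
      have h2 : (p : ℤ) ^ e ∣ α ^ n * x := (Dvd.intro _ hxe.symm).mul_left _
      exact hey ((dvd_sub_right h2).1 ((pow_dvd_pow _ hle).trans hν))
    have : (ν : ℝ) ≤ e := by exact_mod_cast (not_le.1 hlt).le
    linarith

theorem abs_add_le_of_le {a b A B : ℤ} (ha : |a| ≤ A) (hb : |b| ≤ B) : |a + b| ≤ A + B :=
  (abs_add_le a b).trans (add_le_add ha hb)

theorem abs_sub_le_of_le {a b A B : ℤ} (ha : |a| ≤ A) (hb : |b| ≤ B) : |a - b| ≤ A + B :=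
  (abs_sub a b).trans (add_le_add ha hb)

theorem abs_mul_le_of_le {a b A B : ℤ} (ha : |a| ≤ A) (hb : |b| ≤ B) : |a * b| ≤ A * B := by
  rw [abs_mul]
  exact mul_le_mul ha hb (abs_nonneg b) ((abs_nonneg a).trans ha)

theorem add_pow_le_pow_succ {Y : ℤ} (hY : 11 ≤ Y) {i j k : ℕ} (hi : i ≤ k) (hj : j ≤ k) :
    Y ^ i + Y ^ j ≤ Y ^ (k + 1) := by
  have h1 : Y ^ i ≤ Y ^ k := pow_le_pow_right₀ (by linarith) hi
  have h2 : Y ^ j ≤ Y ^ k := pow_le_pow_right₀ (by linarith) hj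
  have h3 : 0 ≤ Y ^ k := by positivity
  rw [pow_succ]
  nlinarith

/-- Integral coefficients of the closed form after clearing denominators. -/
theorem exists_integral_closed_form {α β u₀ u₁ u₂ Y : ℤ} {a b c : ℚ} (hα : α ≠ 0) (hαβ : α ≠ β)
    (hY : 11 ≤ Y) (hαY : |α| ≤ Y) (hβY : |β| ≤ Y) (h₀Y : |u₀| ≤ Y) (h₁Y : |u₁| ≤ Y) (h₂Y : |u₂| ≤ Y)
    (h₀ : (u₀ : ℚ) = c + b) (h₁ : (u₁ : ℚ) = (a + c) * α + b * β)
    (h₂ : (u₂ : ℚ) = (a * 2 + c) * α ^ 2 + b * β ^ 2) :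
    ∃ D A B C : ℤ, D ≠ 0 ∧ |D| ≤ Y ^ 10 ∧ |A| ≤ Y ^ 10 ∧ |B| ≤ Y ^ 10 ∧ |C| ≤ Y ^ 10 ∧
      (A : ℚ) = D * a ∧ (B : ℚ) = D * b ∧ (C : ℚ) = D * c := by
  set δ := α - β with hδ
  set E := u₂ - 2 * α * u₁ + α ^ 2 * u₀ with hE
  have hδ0 : δ ≠ 0 := sub_ne_zero.2 hαβ
  have hY1 : 1 ≤ Y := by linarith
  have hpow : ∀ {i j : ℕ}, i ≤ j → Y ^ i ≤ Y ^ j := fun h => pow_le_pow_right₀ hY1 h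
  have hδY : |δ| ≤ Y ^ 2 := (abs_sub_le_of_le hαY hβY).trans (by nlinarith)
  have hδ2 : |δ ^ 2| ≤ Y ^ 4 := by
    rw [abs_pow]
    calc |δ| ^ 2 ≤ (Y ^ 2) ^ 2 := by gcongr
      _ = _ := by ring
  have hα2 : |α ^ 2| ≤ Y ^ 2 := by
    rw [abs_pow]
    gcongr
  have hEY : |E| ≤ Y ^ 4 := by
    have h2 : |(2 : ℤ)| ≤ 2 := by norm_num
    refine (abs_add_le_of_le (abs_sub_le_of_le h₂Y (abs_mul_le_of_le (abs_mul_le_of_le h2 hαY) h₁Y))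
      (abs_mul_le_of_le hα2 h₀Y)).trans ?_
    have := hpow (show 1 ≤ 3 by norm_num)
    have := hpow (show 2 ≤ 3 by norm_num)
    have : 0 ≤ Y ^ 3 := by positivity
    rw [pow_succ Y 3]
    nlinarith
  have hF : |δ ^ 2 * u₀ - E| ≤ Y ^ 6 := by
    refine (abs_sub_le_of_le (abs_mul_le_of_le hδ2 h₀Y) hEY).trans ?_
    rw [← pow_succ]
    exact add_pow_le_pow_succ hY (by norm_num) (by norm_num)
  refine ⟨α * δ ^ 2, δ ^ 2 * (u₁ - β * u₀) - δ * (δ ^ 2 * u₀ - E), α * E, α * (δ ^ 2 * u₀ - E),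
    mul_ne_zero hα (pow_ne_zero _ hδ0), ?_, ?_, ?_, ?_, ?_, ?_, ?_⟩
  · refine (abs_mul_le_of_le hαY hδ2).trans ?_
    rw [← pow_succ']
    exact hpow (by norm_num)
  · have h1 : |u₁ - β * u₀| ≤ Y ^ 3 := by
      refine (abs_sub_le_of_le h₁Y (abs_mul_le_of_le hβY h₀Y)).trans ?_
      have := add_pow_le_pow_succ hY (i := 1) (j := 2) (k := 2) (by norm_num) le_rfl
      rwa [pow_one, pow_two] at this
    refine (abs_sub_le_of_le (abs_mul_le_of_le hδ2 h1) (abs_mul_le_of_le hδY hF)).trans ?_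
    rw [← pow_add, ← pow_add]
    exact add_pow_le_pow_succ hY (by norm_num) (by norm_num)
  · refine (abs_mul_le_of_le hαY hEY).trans ?_
    rw [← pow_succ']
    exact hpow (by norm_num)
  · refine (abs_mul_le_of_le hαY hF).trans ?_
    rw [← pow_succ']
    exact hpow (by norm_num)
  all_goals
    simp only [hδ, hE]
    push_cast
    rw [h₀, h₁, h₂]
    ring

theorem abs_linear_le {A C Y : ℤ} {n k : ℕ} (hY : 11 ≤ Y) (hn : 1 ≤ n) (hA : |A| ≤ Y ^ k)
    (hC : |C| ≤ Y ^ k) : |A * n + C| ≤ n * Y ^ (k + 1) := by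
  have hn' : (1 : ℤ) ≤ n := by exact_mod_cast hn
  have h1 : |A * n| ≤ Y ^ k * n := abs_mul_le_of_le hA (by simp)
  refine (abs_add_le_of_le h1 hC).trans ?_
  have h3 : 0 ≤ Y ^ k := by positivity
  rw [pow_succ]
  nlinarith [mul_nonneg h3 (by linarith : (0 : ℤ) ≤ n), mul_le_mul_of_nonneg_left hn' h3,
    mul_le_mul_of_nonneg_left hY (mul_nonneg h3 (by linarith : (0 : ℤ) ≤ n))]

theorem valuation_lt_of_bounds {p : ℕ} [hp : Fact p.Prime] {α x y D : ℤ} {n ν : ℕ} {G N L : ℝ}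
    (hα : 2 ≤ |α|) (hy : y ≠ 0) (hαG : Real.log |(α : ℝ)| ≤ G) (hG : 2 ≤ G) (hN : N = Real.log n)
    (hGN : 8 * G ≤ N) (hN18 : 18 ≤ N) (hL : 1 ≤ L)
    (hx : x ≠ 0 → Real.log |(x : ℝ)| ≤ N + 12 * G + L) (hyη : Real.log |(y : ℝ)| ≤ N + 12 * G + L)
    (hD : D ≠ 0) (hDxy : D = α ^ n * x - y) (hν : (p : ℤ) ^ ν ∣ D) :
    (ν : ℝ) < 2.02e12 * G ^ 2 * p * N ^ 2 * L := by
  have hp2 : (2 : ℝ) ≤ p := by exact_mod_cast hp.1.two_le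
  set η := N + 12 * G + L with hη
  have hNL : N ≤ N * L := le_mul_of_one_le_right (by linarith) hL
  have hNL' : 18 * L ≤ N * L := by gcongr
  have hηNL : η ≤ 2.6 * (N * L) := by linarith
  have hbig : (p : ℝ) * G * (2.6 * (N * L)) * N * 3.3e11 < 2.02e12 * G ^ 2 * p * N ^ 2 * L := by
    have hpos : 0 < (p : ℝ) * G * (N * L) * N := by positivity
    nlinarith
  by_cases hx0 : x = 0
  · have h1 : (p : ℤ) ^ ν ∣ y := by
      rw [hDxy, hx0, mul_zero, zero_sub, dvd_neg] at hν
      exact hν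
    have h2 := mul_le_log_of_pow_dvd hp.1 hy h1
    refine lt_of_le_of_lt ?_ hbig
    have h3 : 1 ≤ (p : ℝ) * G * N := by
      have : 4 ≤ (p : ℝ) * G := by nlinarith
      nlinarith
    have h4 : 2.6 * (N * L) * 1 ≤ 2.6 * (N * L) * (p * G * N) := by gcongr
    have h5 : 0 ≤ N * L := by positivity
    linarith
  · have h1 := valuation_le hα hx0 hy (by linarith) (by linarith : Real.log |(α : ℝ)| ≤ η) (hx hx0)
      hyη (hN ▸ hN18) (fun h => hD (by rw [hDxy, h, sub_self])) (hDxy ▸ hν)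
    rw [← hN] at h1
    refine h1.trans_lt (lt_of_le_of_lt ?_ hbig)
    have : p * Real.log |(α : ℝ)| * η * N ≤ p * G * (2.6 * (N * L)) * N := by gcongr
    linarith

/-- Lemma (valuation bound): with notation as in the context, `c₂ = 2.02·10¹² (log Y)²`,
`n > Y⁸`, and `t` an integer with `t ≠ u_n` (and `t ≠ b` if `β = 1`, `t ≠ a n + c` if
`α = 1`), for every prime `p` we have `ν_p(u_n - t) < c₂ p (log n)²` when `t = 0`, and
`ν_p(u_n - t) < c₂ p (log n)² log⁺ t` when `t ≠ 0`, where `log⁺ t = max{1, log |t|}`. -/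
theorem valuation_upper_bound
    (r₁ r₂ r₃ : ℤ) (hr₁ : r₁ ≠ 0) (hr₂ : r₂ ≠ 0) (hr₃ : r₃ ≠ 0)
    (α β : ℤ)
    (hpoly : ∀ X : ℤ, X ^ 3 - r₁ * X ^ 2 - r₂ * X - r₃ = (X - α) ^ 2 * (X - β))
    (hone : α = 1 ∨ β = 1) (hαβ : α ≠ β) (hαβ' : α ≠ -β)
    (u : ℕ → ℤ)
    (hrec : ∀ n, 3 ≤ n → u n = r₁ * u (n - 1) + r₂ * u (n - 2) + r₃ * u (n - 3))
    (a b c : ℚ) (ha : a ≠ 0)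
    (hu : ∀ n : ℕ, (u n : ℚ) = (a * n + c) * (α : ℚ) ^ n + b * (β : ℚ) ^ n)
    (Y : ℤ)
    (hY : Y = max (max (max |r₁| |r₂|) (max |r₃| |u 0|)) (max (max |u 1| |u 2|) 11))
    (c₂ : ℝ) (hc₂ : c₂ = 2.02e12 * (Real.log (Y : ℝ)) ^ 2)
    (n : ℕ) (hn : (n : ℤ) > Y ^ 8)
    (t : ℤ) (ht : t ≠ u n)
    (htβ : β = 1 → (t : ℚ) ≠ b) (htα : α = 1 → (t : ℚ) ≠ a * n + c)
    (p : ℕ) (hp : p.Prime) :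
    (t = 0 → (padicValInt p (u n - t) : ℝ) < c₂ * p * (Real.log n) ^ 2) ∧
    (t ≠ 0 → (padicValInt p (u n - t) : ℝ) <
        c₂ * p * (Real.log n) ^ 2 * max 1 (Real.log |(t : ℝ)|)) := by
  have : Fact p.Prime := ⟨hp⟩
  suffices h : (padicValInt p (u n - t) : ℝ) <
      c₂ * p * (Real.log n) ^ 2 * max 1 (Real.log |(t : ℝ)|) by
    refine ⟨fun h0 => ?_, fun _ => h⟩
    subst h0
    simpa using h
  have hY11 : 11 ≤ Y := by rw [hY]; simp
  have hr₃Y : |r₃| ≤ Y := by rw [hY]; simp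
  have h₀Y : |u 0| ≤ Y := by rw [hY]; simp
  have h₁Y : |u 1| ≤ Y := by rw [hY]; simp
  have h₂Y : |u 2| ≤ Y := by rw [hY]; simp
  have hr₃eq : r₃ = α ^ 2 * β := by
    have := hpoly 0
    linarith
  have hα0 : α ≠ 0 := by
    rintro rfl
    exact hr₃ (by simp [hr₃eq])
  have hβ0 : β ≠ 0 := by
    rintro rfl
    exact hr₃ (by simp [hr₃eq])
  have hαY : |α| ≤ Y :=
    (Int.le_of_dvd (abs_pos.2 hr₃) ((abs_dvd_abs _ _).2 ⟨α * β, by rw [hr₃eq]; ring⟩)).trans hr₃Y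
  have hβY : |β| ≤ Y :=
    (Int.le_of_dvd (abs_pos.2 hr₃) ((abs_dvd_abs _ _).2 ⟨α ^ 2, by rw [hr₃eq]; ring⟩)).trans hr₃Y
  obtain ⟨D, A, B, C, hD0, hD, hA, hB, hC, hAa, hBb, hCc⟩ :=
    exists_integral_closed_form (a := a) (b := b) (c := c) hα0 hαβ hY11 hαY hβY h₀Y h₁Y h₂Y
      (by simpa using hu 0) (by simpa using hu 1) (by simpa using hu 2)
  have hform : D * (u n - t) = (A * n + C) * α ^ n + B * β ^ n - D * t := by
    have : (D : ℚ) * (u n - t) = (A * n + C) * α ^ n + B * β ^ n - D * t := by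
      rw [hu n, hAa, hBb, hCc]
      ring
    exact_mod_cast this
  have hDut : D * (u n - t) ≠ 0 := mul_ne_zero hD0 (sub_ne_zero.2 ht.symm)
  set L := max 1 (Real.log |(t : ℝ)|) with hL
  have hn1 : 1 ≤ n := by
    have : (0 : ℤ) < n := lt_of_le_of_lt (by positivity) hn
    omega
  have hYpos : (0 : ℝ) < Y := by exact_mod_cast (by linarith : (0 : ℤ) < Y)
  have hnpos : (0 : ℝ) < n := by exact_mod_cast hn1
  have hG : 2.3 ≤ Real.log (Y : ℝ) := by
    have h1 : (11 : ℝ) ≤ Y := by exact_mod_cast hY11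
    have h2 : (2 : ℝ) ^ 10 ≤ (Y : ℝ) ^ 3 :=
      le_trans (by norm_num) (pow_le_pow_left₀ (by norm_num) h1 3)
    have h3 := Real.log_le_log (by positivity) h2
    rw [Real.log_pow, Real.log_pow] at h3
    have := Real.log_two_gt_d9
    push_cast at h3
    linarith
  have hGN : 8 * Real.log (Y : ℝ) ≤ Real.log n := by
    have h1 : (Y : ℝ) ^ 8 ≤ n := by exact_mod_cast hn.le
    have := Real.log_le_log (by positivity) h1
    rw [Real.log_pow] at this
    exact_mod_cast this
  have hL1 : 1 ≤ L := le_max_left _ _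
  have htL : |(t : ℝ)| ≤ Real.exp L := by
    rcases eq_or_ne t 0 with rfl | h0
    · simpa using (Real.exp_pos L).le
    · exact (Real.log_le_iff_le_exp (by positivity)).1 (le_max_right _ _)
  have hlog : ∀ z : ℤ, z ≠ 0 → |(z : ℝ)| ≤ n * (Y : ℝ) ^ 12 * Real.exp L →
      Real.log |(z : ℝ)| ≤ Real.log n + 12 * Real.log (Y : ℝ) + L := by
    intro z hz hle
    have h1 := Real.log_le_log (by positivity) hle
    rw [Real.log_mul (by positivity) (by positivity), Real.log_mul (by positivity) (by positivity),
      Real.log_pow, Real.log_exp] at h1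
    exact_mod_cast h1
  have hlogY : ∀ z : ℤ, z ≠ 0 → |z| ≤ Y → Real.log |(z : ℝ)| ≤ Real.log (Y : ℝ) := by
    intro z hz hle
    refine Real.log_le_log (by positivity) ?_
    exact_mod_cast hle
  have hlin : |((A * n + C : ℤ) : ℝ)| ≤ n * (Y : ℝ) ^ 11 := by
    exact_mod_cast abs_linear_le hY11 hn1 hA hC
  have hD' : |(D : ℝ)| ≤ (Y : ℝ) ^ 10 := by exact_mod_cast hD
  have hB' : |(B : ℝ)| ≤ (Y : ℝ) ^ 10 := by exact_mod_cast hB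
  have hY1 : (1 : ℝ) ≤ Y := by exact_mod_cast (by linarith : (1 : ℤ) ≤ Y)
  have hY2 : (2 : ℝ) ≤ Y := by exact_mod_cast (by linarith : (2 : ℤ) ≤ Y)
  have hn1' : (1 : ℝ) ≤ n := by exact_mod_cast hn1
  have he1 : (1 : ℝ) ≤ Real.exp L := Real.one_le_exp (by linarith)
  have hmono : ∀ {w : ℝ}, w ≤ n * (Y : ℝ) ^ 11 → w ≤ n * (Y : ℝ) ^ 12 * Real.exp L := by
    intro w hw
    calc w ≤ n * (Y : ℝ) ^ 11 * 1 := by linarith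
      _ ≤ n * (Y : ℝ) ^ 12 * Real.exp L := by gcongr; norm_num
  have hY1011 : (Y : ℝ) ^ 10 ≤ n * (Y : ℝ) ^ 11 := by
    calc (Y : ℝ) ^ 10 = 1 * (Y : ℝ) ^ 10 := by ring
      _ ≤ n * (Y : ℝ) ^ 11 := by gcongr; norm_num
  have hDt : ∀ w : ℝ, |w| ≤ n * (Y : ℝ) ^ 11 →
      |(D : ℝ) * t - w| ≤ n * (Y : ℝ) ^ 12 * Real.exp L := by
    intro w hw
    calc |(D : ℝ) * t - w| ≤ |(D : ℝ)| * |(t : ℝ)| + |w| := by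
          rw [← abs_mul]
          exact abs_sub _ _
      _ ≤ (Y : ℝ) ^ 10 * Real.exp L + n * (Y : ℝ) ^ 11 := by gcongr
      _ ≤ n * (Y : ℝ) ^ 11 * Real.exp L + n * (Y : ℝ) ^ 11 * Real.exp L := by
          exact add_le_add (by gcongr) (le_mul_of_one_le_right (by positivity) he1)
      _ = n * (Y : ℝ) ^ 11 * 2 * Real.exp L := by ring
      _ ≤ n * (Y : ℝ) ^ 11 * Y * Real.exp L := by gcongr
      _ = _ := by ring
  have hdvd : (p : ℤ) ^ padicValInt p (u n - t) ∣ D * (u n - t) :=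
    (padicValInt_dvd _).mul_left D
  have hbase : ∀ z : ℤ, z ≠ 0 → z ≠ 1 → z ≠ -1 → 2 ≤ |z| := by
    intro z h0 h1 h2
    rcases abs_cases z with h | h <;> omega
  rw [hc₂]
  rcases hone with rfl | rfl
  · have hy : D * t - (A * n + C) ≠ 0 := by
      intro h0
      have h1 : (D : ℚ) * t - (A * n + C) = 0 := by exact_mod_cast h0
      rw [hAa, hCc] at h1
      have h2 : (D : ℚ) * (t - (a * n + c)) = 0 := by linear_combination h1
      have hD0' : (D : ℚ) ≠ 0 := by exact_mod_cast hD0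
      exact htα rfl (sub_eq_zero.1 ((mul_eq_zero.1 h2).resolve_left hD0'))
    refine valuation_lt_of_bounds (x := B) (y := D * t - (A * n + C))
      (hbase β hβ0 hαβ.symm (fun h => hαβ' (by rw [h]; norm_num))) hy (hlogY β hβ0 hβY)
      (by linarith) rfl hGN (by linarith) hL1 (fun hB0 => hlog B hB0 (hmono (hB'.trans hY1011)))
      (hlog _ hy ?_) hDut (by rw [hform]; ring) hdvd
    have := hDt _ hlin
    push_cast at this ⊢
    exact this
  · have hy : D * t - B ≠ 0 := by
      intro h0
      have h1 : (D : ℚ) * t - B = 0 := by exact_mod_cast h0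
      rw [hBb] at h1
      have h2 : (D : ℚ) * (t - b) = 0 := by linear_combination h1
      have hD0' : (D : ℚ) ≠ 0 := by exact_mod_cast hD0
      exact htβ rfl (sub_eq_zero.1 ((mul_eq_zero.1 h2).resolve_left hD0'))
    refine valuation_lt_of_bounds (x := A * n + C) (y := D * t - B)
      (hbase α hα0 hαβ hαβ') hy (hlogY α hα0 hαY)
      (by linarith) rfl hGN (by linarith) hL1 (fun h0 => hlog _ h0 (hmono hlin))
      (hlog _ hy ?_) hDut (by rw [hform]; ring) hdvd
    have := hDt _ (hB'.trans hY1011)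
    push_cast at this ⊢
    exact this
end
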